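/- arXiv:2104.05141 — 2 statements merged into one kernel-verified Lean document; each statement's English description precedes it below -/
import Mathlib

section
/- For every n ≥ 5, the automorphism group Aut(F_n) and the outer automorphism group Out(F_n) of the free group F_n of rank n are finitely generated and self-simulable, where Out(F_n) is the quotient of Aut(F_n) by the normal subgroup of inner automorphisms. -/
open scoped Pointwise

namespace SelfSim

/-- The left shift action of a group `G` on the full shift `G → A`:
`(g · x)(h) = x (g⁻¹ h)`. -/
def shift {G A : Type*} [Group G] (g : G) (x : G → A) : G → A := fun h => x (g⁻¹ * h)

/-- A `G`-subshift: a closed, shift-invariant subset of the full shift `G → A`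
(`A` carrying its topology, `G → A` the product topology). -/
def IsSubshift {G A : Type*} [Group G] [TopologicalSpace A] (X : Set (G → A)) : Prop :=
  IsClosed X ∧ ∀ (g : G) (x : G → A), x ∈ X → shift g x ∈ X

/-- A subshift of finite type: there are a finite set `F ⊆ G` and a set `𝓛` of patterns
on `F` such that `x ∈ X` iff every translate of `x` restricted to `F` lies in `𝓛`. -/
def IsSFT {G A : Type*} [Group G] (X : Set (G → A)) : Prop :=
  ∃ (F : Finset G) (L : Set (↥F → A)),
    ∀ x : G → A, x ∈ X ↔ ∀ g : G, (fun h : ↥F => x (g * (h : G))) ∈ L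

/-- `φ` is a topological factor map from the shift action on `Z ⊆ G → A` onto the
action `act` of `G` on `Y ⊆ β`: continuous on `Z`, mapping `Z` into and onto `Y`,
and equivariant. -/
def IsFactorMapOnto {G A β : Type*} [Group G] [TopologicalSpace A] [TopologicalSpace β]
    (Z : Set (G → A)) (φ : (G → A) → β) (act : G → β → β) (Y : Set β) : Prop :=
  ContinuousOn φ Z ∧ Set.MapsTo φ Z Y ∧ Set.SurjOn φ Z Y ∧
    ∀ (g : G) (x : G → A), x ∈ Z → φ (shift g x) = act g (φ x)

/-- A sofic subshift: a topological factor of some subshift of finite type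
(over some finite alphabet, which we may take to be `Fin k`). -/
def IsSofic {G A : Type*} [Group G] [TopologicalSpace A] (Y : Set (G → A)) : Prop :=
  ∃ (k : ℕ) (Z : Set (G → Fin k)) (φ : (G → Fin k) → (G → A)),
    IsSFT Z ∧ IsFactorMapOnto Z φ shift Y

/-- Recursively enumerable predicate. -/
def RE {α : Type*} [Primcodable α] (p : α → Prop) : Prop :=
  Partrec fun a => Part.assert (p a) fun _ => Part.some ()

/-- `x : ℕ → A` begins with the finite word `w`. -/
def ExtendsWord {A : Type*} (x : ℕ → A) (w : List A) : Prop :=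
  ∀ i : Fin w.length, x i = w.get i

/-- A closed subset `Z ⊆ A^ℕ` is effectively closed if the set of words whose
cylinder is disjoint from `Z` is recursively enumerable. -/
def EffectivelyClosedSet {A : Type*} [Primcodable A] [TopologicalSpace A]
    (Z : Set (ℕ → A)) : Prop :=
  IsClosed Z ∧ RE fun w : List A => ∀ x : ℕ → A, ExtendsWord x w → x ∉ Z

/-- `act` defines an action of `G` on the set `X ⊆ β`. -/
def IsActionOn {G β : Type*} [Group G] (act : G → β → β) (X : Set β) : Prop :=
  (∀ g : G, Set.MapsTo (act g) X X) ∧ (∀ x ∈ X, act 1 x = x) ∧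
    ∀ (g h : G) (x : β), x ∈ X → act (g * h) x = act g (act h x)

/-- The set representation of the action `act` of `G` on `X ⊆ A^ℕ` with respect to the
finite generating tuple `s : Fin m → G` (playing the role of the generating set `S`):
the set of `y ∈ (A^S)^ℕ` of the form `y(n)(s) = (s · x)(n)` for some `x ∈ X`. -/
def SetRep {G A : Type*} [Group G] {m : ℕ} (s : Fin m → G)
    (act : G → (ℕ → A) → ℕ → A) (X : Set (ℕ → A)) : Set (ℕ → (Fin m → A)) :=
  {y | ∃ x ∈ X, ∀ i : Fin m, (fun n => y n i) = act (s i) x}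

/-- The action `act` of `G` on the closed set `X ⊆ A^ℕ` is effectively closed with respect
to the finite generating tuple `s` (which contains `1` and generates `G` as a monoid):
its set representation is an effectively closed subset of `(A^S)^ℕ`. -/
def IsEffClosedActionWith {G A : Type*} [Group G] [Primcodable A] [TopologicalSpace A]
    {m : ℕ} (s : Fin m → G) (act : G → (ℕ → A) → ℕ → A) (X : Set (ℕ → A)) : Prop :=
  IsClosed X ∧ IsActionOn act X ∧ (∃ i, s i = 1) ∧
    Submonoid.closure (Set.range s) = ⊤ ∧
    EffectivelyClosedSet (SetRep s act X)

/-- The action `act` of `G` on `X ⊆ A^ℕ` is effectively closed (with respect to some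
finite generating set containing `1`). -/
def IsEffClosedAction {G A : Type*} [Group G] [Primcodable A] [TopologicalSpace A]
    (act : G → (ℕ → A) → ℕ → A) (X : Set (ℕ → A)) : Prop :=
  ∃ (m : ℕ) (s : Fin m → G), IsEffClosedActionWith s act X

/-- The action `act` of `G` on `X ⊆ A^ℕ` is a topological factor of some `G`-subshift
of finite type. -/
def IsFactorOfSFT {G A : Type*} [Group G] [TopologicalSpace A]
    (act : G → (ℕ → A) → ℕ → A) (X : Set (ℕ → A)) : Prop :=
  ∃ (k : ℕ) (Z : Set (G → Fin k)) (φ : (G → Fin k) → (ℕ → A)),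
    IsSFT Z ∧ IsFactorMapOnto Z φ act X

/-- A group `G` is (dynamically) self-simulable if every effectively closed action of `G`
on a closed subset of `{0,1}^ℕ` is a topological factor of a `G`-subshift of finite type. -/
def SelfSimulable (G : Type*) [Group G] : Prop :=
  ∀ (X : Set (ℕ → Bool)) (act : G → (ℕ → Bool) → ℕ → Bool),
    IsEffClosedAction act X → IsFactorOfSFT act X

/-- Amenability via the Følner condition: for every finite `K` and `δ > 0` there is a
nonempty finite `F` with `|KF △ F| ≤ δ |F|`. -/
def Amenable (G : Type*) [Group G] : Prop :=
  ∀ K : Set G, K.Finite → ∀ δ : ℝ, 0 < δ →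
    ∃ F : Set G, F.Finite ∧ F.Nonempty ∧
      ((symmDiff (K * F) F).ncard : ℝ) ≤ δ * F.ncard

/-- A finitely generated group is recursively presented: for some finite tuple generating
`G` as a monoid, the set of words evaluating to the identity is recursively enumerable. -/
def RecursivelyPresented (G : Type*) [Group G] : Prop :=
  ∃ (m : ℕ) (s : Fin m → G), Submonoid.closure (Set.range s) = ⊤ ∧
    RE fun w : List (Fin m) => (w.map s).prod = 1

/-- A finitely generated group has decidable word problem: for some finite tuple generating
`G` as a monoid, the set of words evaluating to the identity is decidable. -/
def DecidableWordProblem (G : Type*) [Group G] : Prop :=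
  ∃ (m : ℕ) (s : Fin m → G), Submonoid.closure (Set.range s) = ⊤ ∧
    ComputablePred fun w : List (Fin m) => (w.map s).prod = 1

/-- A pattern coding `c` (a finite list of pairs (word over the generators, letter))
holds in the configuration `x` at position `g`: `x (g ⬝ w̲) = a` for every pair `(w, a)`
of `c`. This says exactly that `x ∈ g·[c]`. -/
def PCHolds {G A : Type*} [Group G] {m : ℕ} (s : Fin m → G) (x : G → A) (g : G)
    (c : List (List (Fin m) × A)) : Prop :=
  ∀ p ∈ c, x (g * (p.1.map s).prod) = p.2

/-- A `G`-subshift `X ⊆ A^G` is effectively closed by patterns: for some finite generating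
tuple `s`, there is a recursively enumerable set `𝒞` of pattern codings such that `X` is the
set of configurations avoiding every translate of every cylinder `[c]`, `c ∈ 𝒞`. -/
def EffClosedByPatterns {G A : Type*} [Group G] [Primcodable A] (X : Set (G → A)) : Prop :=
  ∃ (m : ℕ) (s : Fin m → G), Submonoid.closure (Set.range s) = ⊤ ∧
    ∃ 𝒞 : Set (List (List (Fin m) × A)), RE (· ∈ 𝒞) ∧
      X = {x : G → A | ∀ (g : G) (c : List (List (Fin m) × A)), c ∈ 𝒞 → ¬ PCHolds s x g c}

/-- Word metric distance associated to a finite tuple `s` generating `G` as a monoid. -/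
noncomputable def wordDist {G : Type*} [Group G] {m : ℕ} (s : Fin m → G) (g h : G) : ℕ :=
  sInf {n : ℕ | ∃ w : List (Fin m), w.length = n ∧ (w.map s).prod = g⁻¹ * h}

/-- Two finitely generated groups are quasi-isometric (with respect to word metrics given
by some finite generating sets). -/
def QuasiIsometric (G₁ G₂ : Type*) [Group G₁] [Group G₂] : Prop :=
  ∃ (m₁ : ℕ) (s₁ : Fin m₁ → G₁) (m₂ : ℕ) (s₂ : Fin m₂ → G₂),
    Submonoid.closure (Set.range s₁) = ⊤ ∧ Submonoid.closure (Set.range s₂) = ⊤ ∧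
    ∃ (f : G₂ → G₁) (A B C : ℝ), 1 ≤ A ∧ 0 ≤ B ∧ 0 ≤ C ∧
      (∀ x y : G₂,
        (1 / A) * (wordDist s₂ x y : ℝ) - B ≤ (wordDist s₁ (f x) (f y) : ℝ) ∧
        (wordDist s₁ (f x) (f y) : ℝ) ≤ A * (wordDist s₂ x y : ℝ) + B) ∧
      ∀ z : G₁, ∃ x : G₂, (wordDist s₁ z (f x) : ℝ) ≤ C

/-- A finitely presented group: a quotient of a finitely generated free group by the
normal closure of finitely many relators. -/
def FinitelyPresentedGroup (G : Type*) [Group G] : Prop :=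
  ∃ (m : ℕ) (f : FreeGroup (Fin m) →* G) (R : Finset (FreeGroup (Fin m))),
    Function.Surjective f ∧ f.ker = Subgroup.normalClosure (R : Set (FreeGroup (Fin m)))

/-- A subgroup `Δ ≤ G` is mediated: there is a finite generating set `T` of `G` such that
`Δ ∩ tΔt⁻¹` is non-amenable for every `t ∈ T`. -/
def Mediated {G : Type*} [Group G] (Δ : Subgroup G) : Prop :=
  ∃ T : Finset G, Subgroup.closure (T : Set G) = ⊤ ∧
    ∀ t ∈ T, ¬ Amenable ↥(Δ ⊓ Subgroup.map (MulAut.conj t).toMonoidHom Δ)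

end SelfSim

namespace SelfSim

/-- The inner automorphisms form a normal subgroup of `MulAut G`. -/
instance conj_range_normal (G : Type*) [Group G] :
    (MulAut.conj : G →* MulAut G).range.Normal := by
  constructor
  intro x hx φ
  obtain ⟨g, rfl⟩ := hx
  refine ⟨φ g, ?_⟩
  ext y
  simp [MulAut.conj_apply, MulAut.mul_apply, map_mul, map_inv]

/-!
Let a group be endowed with finitely many kinds of *rays*: each index `i` attaches to every `g` an
infinite path starting next to `g` and moving by right multiplications, the paths of index `i`
being pairwise disjoint. A configuration can then store an infinite sequence for every `g` along
each index, and finitely many local rules synchronize the sequences of different indices and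
transport them along every generator that fixes some index. For two commuting indices the rays fit
together into quadrants based at `g`, in which tilings run a machine that searches for a proof that
the stored words leave a given effectively closed set; a tiling exists exactly when the machine
never halts. Reading off the sequence at `1` is then a factor map onto the given action.

For `Aut(F_n)` the indices are the ordered pairs of basis elements, and the rays move by squares
of the two transvections of the pair. Their disjointness is a ping-pong argument on slopes of
vectors in `ℤ²`, played in the abelianization of `F_n`, so it passes to the quotients of `Aut(F_n)`
by subgroups of the kernel of the action on the abelianization. A Nielsen generator involves at
most two basis elements, and transvections of disjoint pairs commute; five basis elements leave
room for a pair avoiding a given generator and for linking any two pairs through disjoint ones.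
-/

/-! ### Tilings of the quadrant -/

section Tilings

variable {Λ Λ' : Type}

/-- A finite set of tiles for the quadrant `ℕ × ℕ` (time × column), with a constraint on `2 × 2`
squares, one on vertical pairs in column `0`, and one tying row `0` to an input in `Λ`. -/
structure QuadrantTileSet (Λ : Type) where
  Tile : Type
  finite_tile : Finite Tile
  square : Tile → Tile → Tile → Tile → Prop
  column : Tile → Tile → Prop
  input : Λ → Tile → Prop

namespace QuadrantTileSet

/-- `θ t k` is the tile at time `t` in column `k` of a valid tiling whose row `0` carries `inp`. -/
structure IsTiling (𝒯 : QuadrantTileSet Λ) (inp : ℕ → Λ) (θ : ℕ → ℕ → 𝒯.Tile) : Prop where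
  square : ∀ t k, 𝒯.square (θ t k) (θ t (k + 1)) (θ (t + 1) k) (θ (t + 1) (k + 1))
  column : ∀ t, 𝒯.column (θ t 0) (θ (t + 1) 0)
  input : ∀ k, 𝒯.input (inp k) (θ 0 k)

/-- The quadrant has a valid tiling with input `inp`. -/
def Tileable (𝒯 : QuadrantTileSet Λ) (inp : ℕ → Λ) : Prop :=
  ∃ θ, 𝒯.IsTiling inp θ

end QuadrantTileSet

variable {Θ : Type} {r : ℕ}

/-- The sequence spelled out by a sequence of blocks of length `r`. -/
def unblock [NeZero r] (f : ℕ → Fin r → Θ) (n : ℕ) : Θ :=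
  f (n / r) (Fin.ofNat r n)

/-- The entry following position `i` of the block `a`, when `b` is the next block. -/
def blockNext (a b : Fin r → Θ) (i : Fin r) : Θ :=
  if h : i.val + 1 < r then a ⟨i + 1, h⟩ else b ⟨0, i.pos⟩

theorem unblock_mul_add [NeZero r] (f : ℕ → Fin r → Θ) (k : ℕ) (i : Fin r) :
    unblock f (r * k + i) = f k i := by
  have hdiv : (r * k + i) / r = k := by
    rw [Nat.mul_add_div (NeZero.pos r), Nat.div_eq_of_lt i.2, add_zero]
  have hmod : Fin.ofNat r (r * k + i) = i := by
    ext
    rw [Fin.val_ofNat, Nat.mul_add_mod, Nat.mod_eq_of_lt i.2]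
  rw [unblock, hdiv, hmod]

theorem unblock_mul [NeZero r] (f : ℕ → Fin r → Θ) (k : ℕ) : unblock f (r * k) = f k 0 := by
  simpa only [Fin.val_zero, add_zero] using unblock_mul_add f k 0

theorem unblock_mul_add_succ [NeZero r] (f : ℕ → Fin r → Θ) (k : ℕ) (i : Fin r) :
    unblock f (r * k + i + 1) = blockNext (f k) (f (k + 1)) i := by
  unfold blockNext
  split_ifs with h
  · exact unblock_mul_add f k ⟨i + 1, h⟩
  · rw [add_assoc, show i.val + 1 = r by omega, ← mul_add_one, unblock_mul]
    rfl

theorem forall_iff_forall_mul_add [NeZero r] {p : ℕ → Prop} :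
    (∀ n, p n) ↔ ∀ (k : ℕ) (i : Fin r), p (r * k + i) := by
  refine ⟨fun h k i => h _, fun h n => ?_⟩
  simpa only [Fin.val_ofNat, Nat.div_add_mod] using h (n / r) (Fin.ofNat r n)

theorem unblock_eq_ite [NeZero r] (f : ℕ → Fin r → Θ) (n : ℕ) :
    unblock f n = if h : n < r then f 0 ⟨n, h⟩ else unblock (fun k => f (k + 1)) (n - r) := by
  split_ifs with h
  · simpa only [mul_zero, zero_add] using unblock_mul_add f 0 ⟨n, h⟩
  · obtain ⟨n, rfl⟩ := Nat.exists_eq_add_of_le' (not_lt.1 h)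
    simp only [unblock, Nat.add_sub_cancel, Nat.add_div_right n (NeZero.pos r)]
    congr 1
    ext
    simp only [Fin.val_ofNat, Nat.add_mod_right]

/-- The tile set whose tiles are horizontal blocks of `r` tiles of `𝒯`, each input letter being
expanded by `code` into `r` input letters of `𝒯`. -/
def QuadrantTileSet.blocks [NeZero r] (𝒯 : QuadrantTileSet Λ) (code : Λ' → Fin r → Λ) :
    QuadrantTileSet Λ' where
  Tile := Fin r → 𝒯.Tile
  finite_tile := have := 𝒯.finite_tile; inferInstance
  square a b c d := ∀ i, 𝒯.square (a i) (blockNext a b i) (c i) (blockNext c d i)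
  column a c := 𝒯.column (a 0) (c 0)
  input l a := ∀ i, 𝒯.input (code l i) (a i)

theorem QuadrantTileSet.isTiling_blocks_iff [NeZero r] (𝒯 : QuadrantTileSet Λ)
    (code : Λ' → Fin r → Λ) (inp : ℕ → Λ') (θ : ℕ → ℕ → Fin r → 𝒯.Tile) :
    (𝒯.blocks code).IsTiling inp θ ↔
      𝒯.IsTiling (unblock fun k => code (inp k)) fun t => unblock (θ t) := by
  have hzero (t : ℕ) : unblock (θ t) 0 = θ t 0 0 := by simpa using unblock_mul (θ t) 0
  refine ⟨fun h => ⟨fun t => ?_, fun t => ?_, ?_⟩, fun h => ⟨fun t k i => ?_, fun t => ?_,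
    fun k i => ?_⟩⟩
  · rw [forall_iff_forall_mul_add (r := r)]
    simp only [unblock_mul_add, unblock_mul_add_succ]
    exact h.square t
  · rw [hzero, hzero]
    exact h.column t
  · rw [forall_iff_forall_mul_add (r := r)]
    simp only [unblock_mul_add]
    exact h.input
  · simpa only [unblock_mul_add, unblock_mul_add_succ] using h.square t (r * k + i)
  · have hcol := h.column t
    rwa [hzero, hzero] at hcol
  · simpa only [unblock_mul_add] using h.input (r * k + i)

theorem QuadrantTileSet.tileable_blocks_iff [NeZero r] (𝒯 : QuadrantTileSet Λ)
    (code : Λ' → Fin r → Λ) (inp : ℕ → Λ') :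
    (𝒯.blocks code).Tileable inp ↔ 𝒯.Tileable (unblock fun k => code (inp k)) := by
  refine ⟨fun ⟨θ, hθ⟩ => ⟨_, (𝒯.isTiling_blocks_iff code inp θ).1 hθ⟩, fun ⟨θ, hθ⟩ =>
    ⟨fun t k i => θ t (r * k + i), (𝒯.isTiling_blocks_iff code inp _).2 ?_⟩⟩
  convert hθ using 2 with t
  funext n
  simp only [unblock, Fin.val_ofNat, Nat.div_add_mod]

end Tilings

/-! ### Stack machines as tile sets -/

section StackMachines

open StateTransition

theorem not_dom_eval_iff_exists_orbit {τ : Type*} (f : τ → Option τ) (a : τ) :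
    ¬ (eval f a).Dom ↔ ∃ c : ℕ → τ, c 0 = a ∧ ∀ t, f (c t) = some (c (t + 1)) := by
  constructor
  · intro hdom
    have hstep : ∀ b : {b // Reaches f a b}, ∃ b' : {b // Reaches f a b},
        f b.1 = some b'.1 := by
      rintro ⟨b, hb⟩
      obtain ⟨b', hb'⟩ := Option.ne_none_iff_exists'.1 fun hnone : f b = none =>
        hdom (Part.dom_iff_mem.2 ⟨b, mem_eval.2 ⟨hb, hnone⟩⟩)
      exact ⟨⟨b', hb.tail hb'⟩, hb'⟩
    choose next hnext using hstep
    let start : {b // Reaches f a b} := ⟨a, Relation.ReflTransGen.refl⟩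
    refine ⟨fun t => (next^[t] start).1, rfl, fun t => ?_⟩
    simp only [Function.iterate_succ_apply']
    exact hnext _
  · rintro ⟨c, rfl, hc⟩ hdom
    obtain ⟨b, hb⟩ := Part.dom_iff_mem.1 hdom
    obtain ⟨hreach, hnone⟩ := mem_eval.1 hb
    have horbit : ∃ t, b = c t := by
      clear hb hnone
      induction hreach with
      | refl => exact ⟨0, rfl⟩
      | tail _ h ih =>
        obtain ⟨t, rfl⟩ := ih
        exact ⟨t + 1, Option.some.inj (h.symm.trans (hc t))⟩
    obtain ⟨t, rfl⟩ := horbit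
    exact Option.some_ne_none _ ((hc t).symm.trans hnone)

/-- An operation on a stack with symbols in `Γ`. -/
inductive StackOp (Γ : Type)
  | keep
  | pop
  | push (γ : Γ)

namespace StackOp

variable {Γ : Type}

/-- The effect of an operation on a stack, given as a stream of symbols with top at `0`. -/
def apply : StackOp Γ → (ℕ → Option Γ) → ℕ → Option Γ
  | keep, S => S
  | pop, S => fun n => S (n + 1)
  | push γ, S => fun n => n.casesOn (some γ) S

/-- The constraint put by an operation on two consecutive cells `x, x'` of a stack and the same
cells `y, y'` of the resulting stack. -/
def Square : StackOp Γ → Option Γ → Option Γ → Option Γ → Option Γ → Prop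
  | keep, x, _, y, _ => y = x
  | pop, _, x', y, _ => y = x'
  | push _, x, _, _, y' => y' = x

/-- The constraint put by an operation on the top `y` of the resulting stack. -/
def Top : StackOp Γ → Option Γ → Prop
  | push γ, y => y = some γ
  | _, _ => True

theorem eq_apply_iff (o : StackOp Γ) (S S' : ℕ → Option Γ) :
    S' = o.apply S ↔ (∀ n, o.Square (S n) (S (n + 1)) (S' n) (S' (n + 1))) ∧ o.Top (S' 0) := by
  cases o with
  | keep => simp only [apply, Square, Top, and_true, funext_iff]
  | pop => simp only [apply, Square, Top, and_true, funext_iff]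
  | push γ =>
    simp only [apply, Square, Top, funext_iff]
    exact ⟨fun h => ⟨fun n => h (n + 1), h 0⟩, fun h n => n.casesOn h.2 h.1⟩

end StackOp

/-- A deterministic machine with stacks indexed by `K`: it reads the tops of the stacks, then
changes state (halting if `next` is `none`) and operates on each stack. -/
structure StackMachine (K Γ : Type) where
  State : Type
  next : State → (K → Option Γ) → Option State
  op : State → K → StackOp Γ

namespace StackMachine

variable {K Γ : Type} (M : StackMachine K Γ)

/-- One step of the machine on infinite stacks. -/
def step (c : M.State × (K → ℕ → Option Γ)) : Option (M.State × (K → ℕ → Option Γ)) :=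
  (M.next c.1 fun k => c.2 k 0).map fun q => (q, fun k => (M.op c.1 k).apply (c.2 k))

theorem step_eq_some_iff {c c' : M.State × (K → ℕ → Option Γ)} :
    M.step c = some c' ↔
      M.next c.1 (fun k => c.2 k 0) = some c'.1 ∧ ∀ k, c'.2 k = (M.op c.1 k).apply (c.2 k) := by
  rw [step, Option.map_eq_some_iff]
  constructor
  · rintro ⟨q, hq, rfl⟩
    exact ⟨hq, fun _ => rfl⟩
  · rintro ⟨hq, hstack⟩
    exact ⟨_, hq, Prod.ext rfl (funext fun k => (hstack k).symm)⟩

/-- The space-time diagrams of `M` started in state `q₀` as tilings. Tiles of a row share the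
state and the tops of the stacks; the tile in column `k` holds the `k`-th cell of every stack. -/
def tileSet [Finite K] [Finite Γ] (Q : Set M.State) [Finite Q] (q₀ : M.State) :
    QuadrantTileSet (K → Option Γ) where
  Tile := Q × (K → Option Γ) × (K → Option Γ)
  finite_tile := inferInstance
  square := fun (q, top, x) (q', top', x') (_, _, y) (_, _, y') =>
    q = q' ∧ top = top' ∧ ∀ k, (M.op q k).Square (x k) (x' k) (y k) (y' k)
  column := fun (q, top, x) (q', _, y) =>
    top = x ∧ M.next q top = some q' ∧ ∀ k, (M.op q k).Top (y k)
  input := fun l (q, _, x) => q = q₀ ∧ x = l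

variable {M} [Finite K] [Finite Γ] {Q : Set M.State} [Finite Q] {q₀ : M.State}

theorem not_dom_eval_of_tileable {inp : ℕ → K → Option Γ} (h : (M.tileSet Q q₀).Tileable inp) :
    ¬ (eval M.step (q₀, fun k n => inp n k)).Dom := by
  obtain ⟨θ, hθ⟩ := h
  have hrow : ∀ t n, (θ t n).1 = (θ t 0).1 := fun t n =>
    n.rec rfl fun n ih => (hθ.square t n).1.symm.trans ih
  refine (not_dom_eval_iff_exists_orbit _ _).2
    ⟨fun t => ((θ t 0).1, fun k n => (θ t n).2.2 k), Prod.ext (hθ.input 0).1 ?_, fun t => ?_⟩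
  · funext k n
    exact congrFun (hθ.input n).2 k
  · obtain ⟨htop, hnext, hcol⟩ := hθ.column t
    refine M.step_eq_some_iff.2 ⟨?_, fun k =>
      (StackOp.eq_apply_iff _ _ _).2 ⟨fun n => ?_, hcol k⟩⟩
    · rwa [htop] at hnext
    · simpa only [hrow t n] using (hθ.square t n).2.2 k

theorem tileable_of_not_dom_eval (hq₀ : q₀ ∈ Q)
    (hQ : ∀ q ∈ Q, ∀ top, ∀ q' ∈ M.next q top, q' ∈ Q) {inp : ℕ → K → Option Γ}
    (h : ¬ (eval M.step (q₀, fun k n => inp n k)).Dom) : (M.tileSet Q q₀).Tileable inp := by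
  obtain ⟨c, h0, hc⟩ := (not_dom_eval_iff_exists_orbit _ _).1 h
  simp only [step_eq_some_iff] at hc
  have hmem : ∀ t, (c t).1 ∈ Q := fun t =>
    t.rec (h0 ▸ hq₀) fun t ih => hQ _ ih _ _ (hc t).1
  have hop : ∀ t k, _ := fun t k => (StackOp.eq_apply_iff _ _ _).1 ((hc t).2 k)
  exact ⟨fun t n => (⟨(c t).1, hmem t⟩, fun k => (c t).2 k 0, fun k => (c t).2 k n),
    fun t n => ⟨rfl, rfl, fun k => (hop t k).1 n⟩,
    fun t => ⟨rfl, (hc t).1, fun k => (hop t k).2⟩,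
    fun n => ⟨congrArg Prod.fst h0, funext fun k => congrFun (congrFun (congrArg Prod.snd h0) k) n⟩⟩

end StackMachine

end StackMachines

section TM2

open Turing StateTransition

variable {K Γ Λ σ : Type}

/-- Finite stacks as infinite ones, padded with `none`. -/
def streams (S : K → List Γ) (k : K) (n : ℕ) : Option Γ :=
  (S k)[n]?

theorem streams_zero (S : K → List Γ) (k : K) : streams S k 0 = (S k).head? :=
  List.head?_eq_getElem?.symm

theorem some_mem_stmts (M : Λ → TM2.Stmt (fun _ : K => Γ) Λ σ) {L : Finset Λ} {l : Λ} (hl : l ∈ L) :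
    some (M l) ∈ TM2.stmts M L := by
  classical
  exact Finset.some_mem_insertNone.2 (Finset.mem_biUnion.2 ⟨l, hl, TM2.stmts₁_self⟩)

variable [DecidableEq K]

/-- The stack machine executing a `TM2` program one elementary statement at a time; its states are
the statements still to be executed together with the value of the internal variable. -/
def StackMachine.ofTM2 (M : Λ → TM2.Stmt (fun _ : K => Γ) Λ σ) : StackMachine K Γ where
  State := TM2.Stmt (fun _ : K => Γ) Λ σ × σ
  next
    | (.push _ _ q, v), _ => some (q, v)
    | (.peek k f q, v), top => some (q, f v (top k))
    | (.pop k f q, v), top => some (q, f v (top k))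
    | (.load f q, v), _ => some (q, f v)
    | (.branch f q₁ q₂, v), _ => some (cond (f v) q₁ q₂, v)
    | (.goto f, v), _ => some (M (f v), v)
    | (.halt, _), _ => none
  op
    | (.push k f _, v) => Function.update (fun _ => .keep) k (.push (f v))
    | (.pop k _ _, _) => Function.update (fun _ => .keep) k .pop
    | _ => fun _ => .keep

namespace StackMachine

variable (M : Λ → TM2.Stmt (fun _ : K => Γ) Λ σ)

/-- A `TM2` configuration about to run label `l` corresponds to the stack machine being about to
execute a jump to `l`. -/
def CfgCorresponds :
    TM2.Cfg (fun _ : K => Γ) Λ σ → (ofTM2 M).State × (K → ℕ → Option Γ) → Prop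
  | ⟨some l, v, S⟩, c => ∃ f, f v = l ∧ c = ((.goto f, v), streams S)
  | ⟨none, _, _⟩, c => c.1.1 = .halt

theorem streams_update_push (S : K → List Γ) (k : K) (γ : Γ) :
    streams (Function.update S k (γ :: S k)) =
      fun k' => (Function.update (fun _ => StackOp.keep) k (.push γ) k').apply (streams S k') := by
  funext k' n
  rcases eq_or_ne k' k with rfl | h
  · cases n <;> simp [streams, StackOp.apply]
  · simp [streams, StackOp.apply, h]

theorem streams_update_tail (S : K → List Γ) (k : K) :
    streams (Function.update S k (S k).tail) =
      fun k' => (Function.update (fun _ => StackOp.keep) k .pop k').apply (streams S k') := by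
  funext k' n
  rcases eq_or_ne k' k with rfl | h
  · simp [streams, StackOp.apply]
  · simp [streams, StackOp.apply, h]

theorem exists_reaches_of_step {α : Type*} {f : α → Option α} {P : α → Prop} {a b : α}
    (hreach : ∃ c, P c ∧ Reaches f b c) (hstep : f a = some b) : ∃ c, P c ∧ Reaches f a c :=
  let ⟨c, hc, hbc⟩ := hreach
  ⟨c, hc, .head hstep hbc⟩

theorem exists_reaches_stepAux (q : TM2.Stmt (fun _ : K => Γ) Λ σ) (v : σ) (S : K → List Γ) :
    ∃ c, CfgCorresponds M (TM2.stepAux q v S) c ∧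
      Reaches (ofTM2 M).step ((q, v), streams S) c := by
  induction q generalizing v S with
  | push k f q ih =>
    refine exists_reaches_of_step (ih v _) ((step_eq_some_iff _).2 ⟨rfl, fun k' => ?_⟩)
    rw [streams_update_push]
    rfl
  | peek k f q ih =>
    refine exists_reaches_of_step (ih _ S) ((step_eq_some_iff _).2 ⟨?_, fun _ => rfl⟩)
    simp only [ofTM2, streams_zero]
  | pop k f q ih =>
    refine exists_reaches_of_step (ih _ _) ((step_eq_some_iff _).2 ⟨?_, fun k' => ?_⟩)
    · simp only [ofTM2, streams_zero]
    · rw [streams_update_tail]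
      rfl
  | load f q ih =>
    exact exists_reaches_of_step (ih _ S) ((step_eq_some_iff _).2 ⟨rfl, fun _ => rfl⟩)
  | branch f q₁ q₂ ih₁ ih₂ =>
    refine exists_reaches_of_step (b := ((cond (f v) q₁ q₂, v), streams S)) ?_
      ((step_eq_some_iff _).2 ⟨rfl, fun _ => rfl⟩)
    rw [TM2.stepAux]
    cases f v
    · exact ih₂ v S
    · exact ih₁ v S
  | goto f => exact ⟨_, ⟨f, rfl, rfl⟩, .refl⟩
  | halt => exact ⟨((.halt, v), streams S), rfl, .refl⟩

theorem respects_cfgCorresponds :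
    Respects (TM2.step M) (ofTM2 M).step (CfgCorresponds M) := by
  rintro ⟨_ | l, v, S⟩ ⟨⟨q, w⟩, T⟩ h
  · obtain rfl : q = .halt := h
    rfl
  · obtain ⟨f, rfl, hc⟩ := h
    obtain ⟨c, hcorr, hreach⟩ := exists_reaches_stepAux M (M (f v)) v S
    exact ⟨c, hcorr, .head' (hc ▸ (step_eq_some_iff _).2 ⟨rfl, fun _ => rfl⟩) hreach⟩

theorem dom_eval_ofTM2_iff (l : Λ) (v : σ) (S : K → List Γ) :
    (eval (ofTM2 M).step ((.goto fun _ => l, v), streams S)).Dom ↔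
      (eval (TM2.step M) ⟨some l, v, S⟩).Dom :=
  tr_eval_dom (respects_cfgCorresponds M) ⟨fun _ => l, rfl, rfl⟩

/-- The states whose statement occurs in the code of a label in `L`, and the jumps to a label
in `L`. -/
def supportedStates (L : Finset Λ) : Set (ofTM2 M).State :=
  {q | some q.1 ∈ TM2.stmts M L ∨ ∃ l ∈ L, q.1 = .goto fun _ => l}

theorem finite_supportedStates [Finite σ] (L : Finset Λ) :
    (supportedStates M L).Finite := by
  have hstmts : {q | some q ∈ TM2.stmts M L}.Finite :=
    (TM2.stmts M L).finite_toSet.preimage (Option.some_injective _).injOn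
  have hgoto : {q : TM2.Stmt (fun _ : K => Γ) Λ σ | ∃ l ∈ L, q = .goto fun _ => l}.Finite :=
    (L.finite_toSet.image fun l => .goto fun _ => l).subset
      fun _ ⟨l, hl, hq⟩ => ⟨l, hl, hq.symm⟩
  exact ((hstmts.union hgoto).prod Set.finite_univ).subset fun q hq => ⟨hq, trivial⟩

theorem next_mem_supportedStates [Inhabited Λ] {L : Finset Λ} (hL : TM2.Supports M L) :
    ∀ q ∈ supportedStates M L, ∀ top, ∀ q' ∈ (ofTM2 M).next q top, q' ∈ supportedStates M L := by
  classical
  rintro ⟨q, v⟩ (hq | ⟨l, hl, rfl⟩) top q' hq'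
  · have hsub {q₁} (h : q₁ ∈ TM2.stmts₁ q) : some q₁ ∈ TM2.stmts M L := TM2.stmts_trans h hq
    left
    cases q with
    | goto f =>
      cases hq'
      exact some_mem_stmts M (TM2.stmts_supportsStmt hL hq v)
    | halt => exact (Option.not_mem_none _ hq').elim
    | branch f q₁ q₂ =>
      cases hq'
      refine hsub (Finset.mem_insert_of_mem (Finset.mem_union.2 ?_))
      cases f v
      · exact .inr TM2.stmts₁_self
      · exact .inl TM2.stmts₁_self
    | _ =>
      cases hq'
      exact hsub (Finset.mem_insert_of_mem TM2.stmts₁_self)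
  · cases hq'
    exact .inl (some_mem_stmts M hl)

end StackMachine

theorem exists_tileSet_of_tm2 [Finite K] [Finite Γ] [Finite σ] [Inhabited Λ]
    (M : Λ → TM2.Stmt (fun _ : K => Γ) Λ σ) {L : Finset Λ} (hL : TM2.Supports M L) (v : σ) :
    ∃ 𝒯 : QuadrantTileSet (K → Option Γ), ∀ S : K → List Γ,
      𝒯.Tileable (fun n k => (S k)[n]?) ↔ ¬ (eval (TM2.step M) ⟨some default, v, S⟩).Dom := by
  have := (StackMachine.finite_supportedStates M L).to_subtype
  refine ⟨(StackMachine.ofTM2 M).tileSet (StackMachine.supportedStates M L)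
    (.goto fun _ => default, v), fun S => ?_⟩
  rw [← StackMachine.dom_eval_ofTM2_iff]
  exact ⟨StackMachine.not_dom_eval_of_tileable,
    StackMachine.tileable_of_not_dom_eval (.inr ⟨_, hL.1, rfl⟩)
      (StackMachine.next_mem_supportedStates M hL)⟩

end TM2

/-! ### Recursively enumerable sets of words -/

section RecursivelyEnumerable

open Turing

theorem exists_partrec_leftInverse {α β : Type*} [Primcodable α] [Primcodable β]
    {e : α → β} (he : Primrec e) (hinj : Function.Injective e) :
    ∃ g : β →. α, Partrec g ∧ ∀ a, g (e a) = Part.some a := by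
  classical
  let search : β → ℕ → Option α := fun b k =>
    (Encodable.decode k).bind fun a => if e a = b then some a else none
  have hsearch : Primrec₂ search :=
    Primrec.option_bind (Primrec.decode.comp Primrec.snd)
      (Primrec.ite (Primrec.eq.comp (he.comp Primrec.snd) (Primrec.fst.comp Primrec.fst))
        (Primrec.option_some.comp Primrec.snd) (Primrec.const none))
  refine ⟨fun b => Nat.rfindOpt (search b), Partrec.rfindOpt hsearch.to_comp, fun a => ?_⟩
  have hdom : (Nat.rfindOpt (search (e a))).Dom :=
    Nat.rfindOpt_dom.2 ⟨Encodable.encode a, a, by simp [search]⟩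
  obtain ⟨k, hk⟩ := Nat.rfindOpt_spec ⟨hdom, rfl⟩
  obtain ⟨a', -, ha'⟩ := Option.bind_eq_some_iff.1 hk
  split_ifs at ha' with heq
  exact Part.eq_some_iff.2 ⟨hdom, (Option.some.inj ha').symm.trans (hinj heq)⟩

theorem exists_code_dom_iff {α : Type*} [Primcodable α] {e : α → ℕ} (he : Primrec e)
    (hinj : Function.Injective e) {p : α → Prop} (hp : RE p) :
    ∃ c : ToPartrec.Code, ∀ a, (c.eval [e a]).Dom ↔ p a := by
  obtain ⟨g, hg, hge⟩ := exists_partrec_leftInverse he hinj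
  have hpart : Partrec fun n => ((g n).bind fun a => Part.assert (p a) fun _ =>
      Part.some ()).map fun _ => (0 : ℕ) :=
    (hg.bind (Partrec.to₂ (hp.comp Computable.snd))).map (Computable.const 0).to₂
  obtain ⟨c, hc⟩ := ToPartrec.Code.exists_code (Nat.Partrec'.part_iff₁.2 hpart)
  refine ⟨c, fun a => ?_⟩
  have hdom : (c.eval [e a]).Dom ↔ ((g (e a)).bind fun a => Part.assert (p a) fun _ =>
      Part.some ()).Dom := iff_of_eq (congrArg Part.Dom (hc ⟨[e a], rfl⟩))
  rw [hdom, hge, Part.bind_some]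
  exact ⟨fun h => h.1, fun h => ⟨h, trivial⟩⟩

/-- The number whose binary digits, lowest first, are `l` followed by a leading `1`. -/
def ofBits (l : List Bool) : ℕ :=
  l.foldr Nat.bit 1

theorem ofBits_ne_zero (l : List Bool) : ofBits l ≠ 0 := by
  induction l with
  | nil => exact one_ne_zero
  | cons b l ih => exact Nat.bit_ne_zero b ih

theorem bits_ofBits (l : List Bool) : (ofBits l).bits = l ++ [true] := by
  induction l with
  | nil => exact Nat.one_bits
  | cons b l ih =>
    exact (Nat.bits_append_bit _ _ fun h => (ofBits_ne_zero l h).elim).trans (congrArg _ ih)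

theorem ofBits_injective : Function.Injective ofBits := fun l l' h =>
  List.append_cancel_right ((bits_ofBits l).symm.trans ((congrArg Nat.bits h).trans
    (bits_ofBits l')))

theorem primrec_ofBits : Primrec ofBits := by
  have hbit : Primrec fun p : Bool × ℕ => cond p.1 (2 * p.2 + 1) (2 * p.2) :=
    Primrec.cond Primrec.fst (Primrec.nat_double_succ.comp Primrec.snd)
      (Primrec.nat_double.comp Primrec.snd)
  refine (Primrec.list_foldr Primrec.id (Primrec.const 1) (hbit.comp Primrec.snd).to₂).of_eq
    fun _ => rfl

/-- Binary digits as symbols of `PartrecToTM2`. -/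
def bitSymbol (b : Bool) : PartrecToTM2.Γ' :=
  cond b .bit1 .bit0

theorem trNat_bit (b : Bool) {n : ℕ} (hn : n ≠ 0) :
    PartrecToTM2.trNat (Nat.bit b n) = bitSymbol b :: PartrecToTM2.trNat n := by
  unfold PartrecToTM2.trNat
  rw [← Num.ofNat'_eq, ← Num.ofNat'_eq, Num.ofNat'_bit]
  rcases h : Num.ofNat' n with _ | m
  · rw [Num.ofNat'_eq] at h
    exact (hn (by simpa using congrArg (fun m : Num => (m : ℕ)) h)).elim
  · cases b <;> rfl

theorem trNat_ofBits (l : List Bool) :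
    PartrecToTM2.trNat (ofBits l) = l.map bitSymbol ++ [.bit1] := by
  induction l with
  | nil => simp [ofBits, PartrecToTM2.trNat, PartrecToTM2.trNum, PartrecToTM2.trPosNum]
  | cons b l ih => exact (trNat_bit b (ofBits_ne_zero l)).trans (congrArg _ ih)

theorem flatMap_injective_of_length_eq {α β : Type*} {f : α → List β} {r : ℕ} [NeZero r]
    (hlen : ∀ a, (f a).length = r) (hf : Function.Injective f) :
    Function.Injective (List.flatMap f) := by
  have hne (a : α) (w : List α) : (a :: w).flatMap f ≠ [] := fun h =>
    NeZero.ne r ((hlen a).symm.trans (by simp_all [List.flatMap_cons]))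
  intro w
  induction w with
  | nil =>
    rintro (_ | ⟨a', w'⟩) h
    · rfl
    · exact (hne a' w' h.symm).elim
  | cons a w ih =>
    rintro (_ | ⟨a', w'⟩) h
    · exact (hne a w h).elim
    · obtain ⟨ha, hw⟩ := List.append_inj h ((hlen a).trans (hlen a').symm)
      rw [hf ha, ih hw]

instance : Finite PartrecToTM2.K' :=
  .of_surjective (![.main, .rev, .aux, .stack] : Fin 4 → _) fun
    | .main => ⟨0, rfl⟩
    | .rev => ⟨1, rfl⟩
    | .aux => ⟨2, rfl⟩
    | .stack => ⟨3, rfl⟩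

theorem exists_tileSet_of_code (c : ToPartrec.Code) :
    ∃ 𝒯 : QuadrantTileSet (PartrecToTM2.K' → Option PartrecToTM2.Γ'), ∀ v : List ℕ,
      𝒯.Tileable (fun n k => (PartrecToTM2.K'.elim (PartrecToTM2.trList v) [] [] [] k)[n]?) ↔
        ¬ (c.eval v).Dom := by
  let : Inhabited PartrecToTM2.Λ' := ⟨PartrecToTM2.trNormal c .halt⟩
  obtain ⟨𝒯, h𝒯⟩ := exists_tileSet_of_tm2 PartrecToTM2.tr (PartrecToTM2.tr_supports c .halt) none
  refine ⟨𝒯, fun v => (h𝒯 _).trans (not_congr ?_)⟩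
  exact iff_of_eq (congrArg Part.Dom (PartrecToTM2.tr_eval c v))

section Input

variable {A : Type} {r : ℕ} [NeZero r]

/-- The letters of a word, then an end marker `some none`, then blanks `none`. -/
def markedInput (w : List A) (n : ℕ) : Option (Option A) :=
  (w.map some ++ [none])[n]?

/-- The block of `r` columns of stack contents under one letter of `markedInput w`. The word `w`
is presented on the main stack as the number with binary digits `w.flatMap (List.ofFn ∘ code)`;
the end marker supplies its leading `1` and the separator closing the number. -/
def inputBlock (code : A → Fin r → Bool) (l : Option (Option A)) (i : Fin r) :
    PartrecToTM2.K' → Option PartrecToTM2.Γ'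
  | .main => match l with
    | some (some a) => some (bitSymbol (code a i))
    | some none => [PartrecToTM2.Γ'.bit1, .cons][i.val]?
    | none => none
  | _ => none

theorem unblock_inputBlock_main (hr : 2 ≤ r) (code : A → Fin r → Bool) (w : List A) (n : ℕ) :
    unblock (fun k => inputBlock code (markedInput w k)) n .main =
      ((w.flatMap fun a => List.ofFn (code a)).map bitSymbol ++
        [PartrecToTM2.Γ'.bit1, .cons])[n]? := by
  induction w generalizing n with
  | nil =>
    rw [unblock_eq_ite]
    split_ifs with h
    · rfl
    · rw [List.getElem?_eq_none (by simpa using by omega)]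
      rfl
  | cons a w ih =>
    rw [unblock_eq_ite, List.flatMap_cons, List.map_append, List.append_assoc]
    split_ifs with h
    · rw [List.getElem?_append_left (by simpa using h)]
      simp [markedInput, inputBlock, h]
    · rw [List.getElem?_append_right (by simpa using not_lt.1 h)]
      exact (ih (n - r)).trans (by simp)

theorem unblock_inputBlock (hr : 2 ≤ r) (code : A → Fin r → Bool) (w : List A) :
    (unblock fun k => inputBlock code (markedInput w k)) = fun n k =>
      (PartrecToTM2.K'.elim
        (PartrecToTM2.trList [ofBits (w.flatMap fun a => List.ofFn (code a))]) [] [] [] k)[n]? := by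
  funext n k
  cases k with
  | main =>
    simp only [unblock_inputBlock_main hr, PartrecToTM2.K'.elim, PartrecToTM2.trList, trNat_ofBits,
      List.append_assoc, List.cons_append, List.nil_append]
  | _ => rfl

end Input

theorem exists_tileSet_of_re {A : Type} [Primcodable A] [Finite A] {p : List A → Prop}
    (hp : RE p) :
    ∃ 𝒯 : QuadrantTileSet (Option (Option A)), ∀ w, 𝒯.Tileable (markedInput w) ↔ ¬ p w := by
  obtain ⟨N, ⟨index⟩⟩ := Finite.exists_equiv_fin A
  let code : A → Fin (N + 2) → Bool := fun a i => decide (i.val = index a)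
  have hcode : Function.Injective code := fun a a' h => by
    have hidx := congrFun h ((index a).castAdd 2)
    exact index.injective (Fin.ext (by simpa [code] using hidx))
  let e : List A → ℕ := fun w => ofBits (w.flatMap fun a => List.ofFn (code a))
  have he : Primrec e := primrec_ofBits.comp (Primrec.list_flatMap Primrec.id
    ((Primrec.dom_finite fun a => List.ofFn (code a)).comp Primrec.snd).to₂)
  have hinj : Function.Injective e := ofBits_injective.comp
    (flatMap_injective_of_length_eq (fun a => List.length_ofFn)
      (List.ofFn_injective.comp hcode))
  obtain ⟨c, hc⟩ := exists_code_dom_iff he hinj hp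
  obtain ⟨𝒯, h𝒯⟩ := exists_tileSet_of_code c
  refine ⟨𝒯.blocks (inputBlock code), fun w => ?_⟩
  rw [𝒯.tileable_blocks_iff, unblock_inputBlock (Nat.le_add_left 2 N), h𝒯, hc]

end RecursivelyEnumerable

/-! ### Rays in a group -/

section Rays

variable {I G : Type*} [Group G]

/-- `x` or `x⁻¹`, according to a sign. -/
def signed (x : G) (σ : Bool) : G := if σ then x else x⁻¹

theorem signed_inv (x : G) (σ : Bool) : (signed x σ)⁻¹ = signed x !σ := by
  cases σ <;> simp [signed]

theorem signed_mem {K : Subgroup G} {x : G} (hx : x ∈ K) (σ : Bool) : signed x σ ∈ K := by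
  cases σ <;> simp [signed, hx]

/-- Two right multiplications for each index, by `(a i)^±1` and `(b i)^±1`, with position-dependent
signs. -/
structure Rays (I G : Type*) where
  a : I → G
  b : I → G
  l : I → G → Bool
  r : I → G → Bool

namespace Rays

/-- The move along the rays of index `i`. -/
def left (𝓡 : Rays I G) (i : I) (g : G) : G := g * signed (𝓡.a i) (𝓡.l i g)

/-- The move from `g` to the starting point of the ray of index `i` attached to `g`. -/
def right (𝓡 : Rays I G) (i : I) (g : G) : G := g * signed (𝓡.b i) (𝓡.r i g)

/-- The `n`-th point of the ray of index `i` attached to `g`. -/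
def point (𝓡 : Rays I G) (i : I) (n : ℕ) (g : G) : G := (𝓡.left i)^[n] (𝓡.right i g)

/-- Rays of the same index are infinite and pairwise disjoint. -/
structure Separated (𝓡 : Rays I G) : Prop where
  left_injective : ∀ i, (𝓡.left i).Injective
  right_injective : ∀ i, (𝓡.right i).Injective
  left_ne_right : ∀ i g h, 𝓡.left i g ≠ 𝓡.right i h

/-- Right multiplication by an element of the fixer of `i` commutes with both moves of index `i`. -/
def fixer (𝓡 : Rays I G) (i : I) : Subgroup G where
  carrier := {f | Commute f (𝓡.a i) ∧ Commute f (𝓡.b i) ∧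
    ∀ g, 𝓡.l i (g * f) = 𝓡.l i g ∧ 𝓡.r i (g * f) = 𝓡.r i g}
  one_mem' := ⟨.one_left _, .one_left _, by simp⟩
  mul_mem' := fun hf hf' => ⟨hf.1.mul_left hf'.1, hf.2.1.mul_left hf'.2.1, fun g => by
    rw [← mul_assoc, (hf'.2.2 _).1, (hf'.2.2 _).2]; exact hf.2.2 g⟩
  inv_mem' := fun {f} hf => ⟨hf.1.inv_left, hf.2.1.inv_left, fun g => by
    simpa [eq_comm] using hf.2.2 (g * f⁻¹)⟩

/-- Two indices are adjacent if each of their moves fixes the other index. -/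
structure Adj (𝓡 : Rays I G) (i j : I) : Prop where
  a_mem : 𝓡.a j ∈ 𝓡.fixer i
  b_mem : 𝓡.b j ∈ 𝓡.fixer i
  a_mem' : 𝓡.a i ∈ 𝓡.fixer j
  b_mem' : 𝓡.b i ∈ 𝓡.fixer j

variable {𝓡 : Rays I G} {i j : I}

theorem Adj.symm (h : 𝓡.Adj i j) : 𝓡.Adj j i := ⟨h.a_mem', h.b_mem', h.a_mem, h.b_mem⟩

theorem commute_signed {f x : G} (h : Commute f x) (σ : Bool) : Commute f (signed x σ) := by
  cases σ <;> simp [signed, h]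

theorem left_mul {f : G} (hf : f ∈ 𝓡.fixer i) (g : G) : 𝓡.left i (g * f) = 𝓡.left i g * f := by
  rw [left, left, (hf.2.2 g).1, mul_assoc, mul_assoc, (commute_signed hf.1 _).eq]

theorem right_mul {f : G} (hf : f ∈ 𝓡.fixer i) (g : G) :
    𝓡.right i (g * f) = 𝓡.right i g * f := by
  rw [right, right, (hf.2.2 g).2, mul_assoc, mul_assoc, (commute_signed hf.2.1 _).eq]

theorem point_succ (𝓡 : Rays I G) (i : I) (n : ℕ) (g : G) :
    𝓡.point i (n + 1) g = 𝓡.left i (𝓡.point i n g) :=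
  Function.iterate_succ_apply' ..

theorem point_mul {f : G} (hf : f ∈ 𝓡.fixer i) (n : ℕ) (g : G) :
    𝓡.point i n (g * f) = 𝓡.point i n g * f := by
  induction n with
  | zero => exact right_mul hf g
  | succ n ih => rw [point_succ, point_succ, ih, left_mul hf]

theorem exists_point_eq_mul (hij : 𝓡.Adj i j) (n : ℕ) (g : G) :
    ∃ f ∈ 𝓡.fixer j, 𝓡.point i n g = g * f := by
  induction n with
  | zero => exact ⟨_, signed_mem hij.b_mem' _, rfl⟩
  | succ n ih =>
    obtain ⟨f, hf, h⟩ := ih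
    rw [point_succ, h, left, mul_assoc]
    exact ⟨_, mul_mem hf (signed_mem hij.a_mem' _), rfl⟩

theorem point_left (hij : 𝓡.Adj i j) (n : ℕ) (g : G) :
    𝓡.point i n (𝓡.left j g) = 𝓡.left j (𝓡.point i n g) := by
  obtain ⟨f, hf, h⟩ := exists_point_eq_mul hij n g
  rw [h, left_mul hf, left, point_mul (signed_mem hij.a_mem _), h, mul_assoc, mul_assoc,
    (commute_signed hf.1 _).eq]

theorem point_right (hij : 𝓡.Adj i j) (n : ℕ) (g : G) :
    𝓡.point i n (𝓡.right j g) = 𝓡.right j (𝓡.point i n g) := by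
  obtain ⟨f, hf, h⟩ := exists_point_eq_mul hij n g
  rw [h, right_mul hf, right, point_mul (signed_mem hij.b_mem _), h, mul_assoc, mul_assoc,
    (commute_signed hf.2.1 _).eq]

theorem point_comm (hij : 𝓡.Adj i j) (n k : ℕ) (g : G) :
    𝓡.point i n (𝓡.point j k g) = 𝓡.point j k (𝓡.point i n g) := by
  induction k with
  | zero => exact point_right hij n g
  | succ k ih => rw [point_succ, point_succ, point_left hij, ih]

theorem left_point_point (hij : 𝓡.Adj i j) (n k : ℕ) (g : G) :
    𝓡.left j (𝓡.point i n (𝓡.point j k g)) = 𝓡.point i n (𝓡.point j (k + 1) g) := by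
  rw [point_succ, point_left hij]

section Decoding

theorem Separated.point_injective (h𝓡 : 𝓡.Separated) (i : I) :
    Function.Injective fun c : ℕ × G => 𝓡.point i c.1 c.2 := by
  rintro ⟨n, g⟩ ⟨m, h⟩ e
  induction n generalizing m with
  | zero =>
    cases m with
    | zero => exact congrArg _ (h𝓡.right_injective i e)
    | succ m => exact (h𝓡.left_ne_right i _ _ ((point_succ ..).symm.trans e.symm)).elim
  | succ n ih =>
    cases m with
    | zero => exact (h𝓡.left_ne_right i _ _ ((point_succ ..).symm.trans e)).elim
    | succ m =>
      simp only [point_succ] at e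
      simpa using ih m (h𝓡.left_injective i e)

/-- The index and the base point of a position on a ray of index `i`. -/
noncomputable def decode (𝓡 : Rays I G) (i : I) : G → Option (ℕ × G) :=
  Function.partialInv fun c : ℕ × G => 𝓡.point i c.1 c.2

variable (h𝓡 : 𝓡.Separated)
include h𝓡

theorem decode_eq_some {g : G} {c : ℕ × G} :
    𝓡.decode i g = some c ↔ 𝓡.point i c.1 c.2 = g :=
  (h𝓡.point_injective i).isPartialInv c g

theorem decode_point (n : ℕ) (g : G) : 𝓡.decode i (𝓡.point i n g) = some (n, g) :=
  (decode_eq_some h𝓡).2 rfl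

theorem decode_left (g : G) :
    𝓡.decode i (𝓡.left i g) = (𝓡.decode i g).map (Prod.map Nat.succ id) := by
  ext ⟨n, h⟩
  simp only [Option.map_eq_some_iff, Prod.exists, decode_eq_some h𝓡, Prod.map_apply, id,
    Prod.mk.injEq]
  refine ⟨fun e => ?_, ?_⟩
  · cases n with
    | zero => exact (h𝓡.left_ne_right i _ _ e.symm).elim
    | succ n => exact ⟨n, h, h𝓡.left_injective i ((point_succ ..).symm.trans e), rfl, rfl⟩
  · rintro ⟨n, h, rfl, rfl, rfl⟩
    exact point_succ ..

theorem decode_mul {f : G} (hf : f ∈ 𝓡.fixer i) (g : G) :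
    𝓡.decode i (g * f) = (𝓡.decode i g).map (Prod.map id (· * f)) := by
  ext ⟨n, h⟩
  simp only [Option.map_eq_some_iff, Prod.exists, decode_eq_some h𝓡, Prod.map_apply, id,
    Prod.mk.injEq]
  refine ⟨fun e => ⟨n, h * f⁻¹, ?_, rfl, by simp⟩, ?_⟩
  · rw [point_mul (inv_mem hf), e, mul_inv_cancel_right]
  · rintro ⟨n, h, rfl, rfl, rfl⟩
    exact point_mul hf n h

end Decoding

end Rays

end Rays

/-! ### The subshift of finite type -/

/-- The alphabet of the subshift, `B` being the type of data carried by rays. -/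
structure Symbol (I P B Θ : Type*) where
  /-- sign of the left move -/
  l : I → Bool
  /-- sign of the right move -/
  r : I → Bool
  /-- data at a point of a ray -/
  data : I → B
  /-- `carried i j` is constant along rays of index `j` and is `data i` at their base point -/
  carried : I → I → B
  /-- at `point i n (point j k g)`, the comparison of `n` and `k` -/
  order : I → I → Option Ordering
  /-- the tiles of a tiling for each element of `P` -/
  tile : P → Option Θ

instance {I P B Θ : Type*} [Finite I] [Finite P] [Finite B] [Finite Θ] :
    Finite (Symbol I P B Θ) := by
  refine Finite.of_injective
    (fun c : Symbol I P B Θ => (c.l, c.r, c.data, c.carried, c.order, c.tile)) fun c c' h => ?_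
  cases c
  cases c'
  simpa using h

/-- The parameters of the subshift: directions of rays, a finite set `T`, a tuple `s` with
distinguished index `e` (in applications `s e = 1`), a finite set `P` of group elements whose
action is recorded in the data, the indices `α` (time) and `β` (space) spanning the tiled
quadrants, and a tile set. -/
structure Blueprint (I G : Type*) (m : ℕ) where
  rays : Rays I G
  T : Set G
  s : Fin m → G
  e : Fin m
  P : Set G
  α : I
  β : I
  tiles : QuadrantTileSet (Option (Option (Fin m → Bool)))

/-- The letter in column `k` of the marked input of length `n`, as a function of the comparison of
`n` and `k`. -/
def inputLetter {A : Type*} (c : A) : Ordering → Option (Option A)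
  | .lt => none
  | .eq => some none
  | .gt => some (some c)

theorem markedInput_ofFn {A : Type} (y : ℕ → A) (n k : ℕ) :
    markedInput (List.ofFn fun i : Fin n => y i) k = inputLetter (y k) (compare n k) := by
  rcases lt_trichotomy n k with h | rfl | h
  · simp [markedInput, inputLetter, compare_lt_iff_lt.2 h, List.getElem?_append, h.not_gt,
      Nat.sub_ne_zero_of_lt h]
  · simp [markedInput, inputLetter]
  · simp [markedInput, inputLetter, compare_gt_iff_gt.2 h, List.getElem?_append, h]

namespace Rays

variable {I G P B Θ : Type*} [Group G]

/-- The rays with the signs read off a configuration. -/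
def steer (𝓡 : Rays I G) (x : G → Symbol I P B Θ) : Rays I G where
  a := 𝓡.a
  b := 𝓡.b
  l := fun i g => (x g).l i
  r := fun i g => (x g).r i

/-- The right multiplications performed by the moves. -/
def steps (𝓡 : Rays I G) : Set G :=
  (Set.range fun c : I × Bool => signed (𝓡.a c.1) c.2) ∪
    Set.range fun c : I × Bool => signed (𝓡.b c.1) c.2

theorem signed_a_mem_steps (𝓡 : Rays I G) (i : I) (σ : Bool) : signed (𝓡.a i) σ ∈ 𝓡.steps :=
  .inl ⟨(i, σ), rfl⟩

theorem signed_b_mem_steps (𝓡 : Rays I G) (i : I) (σ : Bool) : signed (𝓡.b i) σ ∈ 𝓡.steps :=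
  .inr ⟨(i, σ), rfl⟩

end Rays

namespace Blueprint

variable {I G : Type*} [Group G] {m : ℕ}

/-- The alphabet of the subshift of a blueprint. -/
abbrev Sym (D : Blueprint I G m) : Type _ :=
  Symbol I D.P (D.P → Fin m → Bool) D.tiles.Tile

/-- The window through which the rules are checked. -/
def window (D : Blueprint I G m) : Set G :=
  insert 1 (D.T ∪ D.rays.steps ∪ D.rays.steps * D.rays.steps)

/-- The rules of the subshift at the position `g`, the moves being those of `𝓢`. -/
structure RulesFor (D : Blueprint I G m) (𝓢 : Rays I G) (x : G → D.Sym) (g : G) : Prop where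
  invariant : ∀ i, ∀ f ∈ D.window, f ∈ D.rays.fixer i →
    (x (g * f)).l i = (x g).l i ∧ (x (g * f)).r i = (x g).r i
  carried_right : ∀ i j, D.rays.Adj i j → (x (𝓢.right j g)).carried i j = (x g).data i
  carried_left : ∀ i j, D.rays.Adj i j → (x (𝓢.left j g)).carried i j = (x g).carried i j
  order_right_right : ∀ i j, D.rays.Adj i j →
    (x (𝓢.right i (𝓢.right j g))).order i j = some .eq
  order_left_left : ∀ i j, D.rays.Adj i j → (x g).order i j = some .eq →
    (x (𝓢.left i (𝓢.left j g))).order i j = some .eq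
  order_left : ∀ i j, D.rays.Adj i j → ∀ o ≠ .lt, (x g).order i j = some o →
    (x (𝓢.left i g)).order i j = some .gt
  order_left' : ∀ i j, D.rays.Adj i j → ∀ o ≠ .gt, (x g).order i j = some o →
    (x (𝓢.left j g)).order i j = some .lt
  diagonal : ∀ i j, D.rays.Adj i j → (x g).order i j = some .eq →
    (x g).carried i j = (x g).carried j i
  input : ∀ p o, (x g).order D.α D.β = some o → ∃ θ,
    (x (𝓢.right D.α g)).tile p = some θ ∧ D.tiles.input (inputLetter ((x g).carried D.β D.α p) o) θ
  square : ∀ p θ, (x g).tile p = some θ → ∃ θ₁ θ₂ θ₃,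
    (x (𝓢.left D.β g)).tile p = some θ₁ ∧
    (x (𝓢.left D.α g)).tile p = some θ₂ ∧
    (x (𝓢.left D.α (𝓢.left D.β g))).tile p = some θ₃ ∧
    D.tiles.square θ θ₁ θ₂ θ₃
  column : ∀ p θ, (x (𝓢.right D.β g)).tile p = some θ → ∃ θ₁,
    (x (𝓢.left D.α (𝓢.right D.β g))).tile p = some θ₁ ∧
    D.tiles.column θ θ₁
  translate : ∀ i, ∀ t ∈ D.T, t ∈ D.rays.fixer i → ∀ p p' : D.P, (p : G) = 1 → (p' : G) = t⁻¹ →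
    (x (g * t)).data i p = (x g).data i p'
  consistent : ∀ i (p p' : D.P) k, (p' : G) = D.s k * p →
    (x g).data i p k = (x g).data i p' D.e

/-- The rules of the subshift at the position `g`, with moves read off the configuration. -/
abbrev Rules (D : Blueprint I G m) (x : G → D.Sym) (g : G) : Prop :=
  D.RulesFor (D.rays.steer x) x g

variable {D : Blueprint I G m}

theorem one_mem_window : 1 ∈ D.window := Set.mem_insert ..

theorem steps_subset_window : D.rays.steps ⊆ D.window := fun _ h => .inr (.inl (.inr h))

theorem steps_mul_steps_subset_window : D.rays.steps * D.rays.steps ⊆ D.window :=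
  fun _ h => .inr (.inr h)

theorem window_finite [Finite I] (hT : D.T.Finite) : D.window.Finite := by
  have hS : D.rays.steps.Finite := (Set.finite_range _).union (Set.finite_range _)
  exact ((hT.union hS).union (hS.mul hS)).insert 1

theorem Rules.congr {x x' : G → D.Sym} {g g' : G}
    (h : ∀ f ∈ D.window, x (g * f) = x' (g' * f)) (hx : D.Rules x g) : D.Rules x' g' := by
  have h₁ : x g = x' g' := by simpa using h 1 one_mem_window
  have ha i σ : x (g * signed (D.rays.a i) σ) = x' (g' * signed (D.rays.a i) σ) :=
    h _ (steps_subset_window (D.rays.signed_a_mem_steps i σ))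
  have hb i σ : x (g * signed (D.rays.b i) σ) = x' (g' * signed (D.rays.b i) σ) :=
    h _ (steps_subset_window (D.rays.signed_b_mem_steps i σ))
  have hSS f (hf : f ∈ D.rays.steps) f' (hf' : f' ∈ D.rays.steps) :
      x (g * (f * f')) = x' (g' * (f * f')) :=
    h _ (steps_mul_steps_subset_window (Set.mul_mem_mul hf hf'))
  have hl i : x ((D.rays.steer x).left i g) = x' ((D.rays.steer x').left i g') := by
    simp only [Rays.left, Rays.steer, h₁, ha]
  have hr i : x ((D.rays.steer x).right i g) = x' ((D.rays.steer x').right i g') := by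
    simp only [Rays.right, Rays.steer, h₁, hb]
  have hll i j : x ((D.rays.steer x).left i ((D.rays.steer x).left j g)) =
      x' ((D.rays.steer x').left i ((D.rays.steer x').left j g')) := by
    simp only [Rays.left, Rays.steer, h₁, ha, mul_assoc, hSS, Rays.signed_a_mem_steps]
  have hlr i j : x ((D.rays.steer x).left i ((D.rays.steer x).right j g)) =
      x' ((D.rays.steer x').left i ((D.rays.steer x').right j g')) := by
    simp only [Rays.left, Rays.right, Rays.steer, h₁, hb, mul_assoc, hSS,
      Rays.signed_a_mem_steps, Rays.signed_b_mem_steps]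
  have hrr i j : x ((D.rays.steer x).right i ((D.rays.steer x).right j g)) =
      x' ((D.rays.steer x').right i ((D.rays.steer x').right j g')) := by
    simp only [Rays.right, Rays.steer, h₁, hb, mul_assoc, hSS, Rays.signed_b_mem_steps]
  exact {
    invariant := fun i f hf => by simpa only [h₁, h f hf] using hx.invariant i f hf
    carried_right := by simpa only [h₁, hr] using hx.carried_right
    carried_left := by simpa only [h₁, hl] using hx.carried_left
    order_right_right := by simpa only [hrr] using hx.order_right_right
    order_left_left := by simpa only [h₁, hll] using hx.order_left_left
    order_left := by simpa only [h₁, hl] using hx.order_left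
    order_left' := by simpa only [h₁, hl] using hx.order_left'
    diagonal := by simpa only [h₁] using hx.diagonal
    input := by simpa only [h₁, hr] using hx.input
    square := by simpa only [h₁, hl, hll] using hx.square
    column := by simpa only [hr, hlr] using hx.column
    translate := fun i t ht => by
      simpa only [h₁, h t (.inr (.inl (.inl ht)))] using hx.translate i t ht
    consistent := by simpa only [h₁] using hx.consistent }

end Blueprint

theorem isSFT_of_window {G A : Type*} [Group G] {W : Set G} (hW : W.Finite)
    {R : (G → A) → G → Prop}
    (hR : ∀ x x' g g', (∀ f ∈ W, x (g * f) = x' (g' * f)) → R x g → R x' g') :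
    IsSFT {x | ∀ g, R x g} := by
  refine ⟨hW.toFinset, {p | ∃ x g, R x g ∧ ∀ f : hW.toFinset, x (g * f) = p f}, fun x =>
    forall_congr' fun g => ⟨fun h => ⟨x, g, h, fun _ => rfl⟩, ?_⟩⟩
  rintro ⟨x', g', h, hx'⟩
  exact hR x' x g' g (fun f hf => hx' ⟨f, hW.mem_toFinset.2 hf⟩) h

theorem extendsWord_ofFn {A : Type*} {y y' : ℕ → A} {n : ℕ} :
    ExtendsWord y' (List.ofFn fun i : Fin n => y i) ↔ ∀ k < n, y' k = y k := by
  simp only [ExtendsWord, List.get_eq_getElem, List.getElem_ofFn]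
  exact ⟨fun h k hk => h ⟨k, by simpa using hk⟩, fun h k => h k (by simpa using k.2)⟩

theorem mem_of_forall_exists_extendsWord {A : Type*} [TopologicalSpace A] {V : Set (ℕ → A)}
    (hV : IsClosed V) {y : ℕ → A}
    (h : ∀ n, ∃ y' ∈ V, ExtendsWord y' (List.ofFn fun i : Fin n => y i)) : y ∈ V := by
  choose y' hy' hext using h
  refine hV.mem_of_tendsto (b := Filter.atTop) (tendsto_pi_nhds.2 fun k => ?_) (.of_forall hy')
  refine tendsto_const_nhds.congr' ((Filter.eventually_gt_atTop k).mono fun n hn => ?_)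
  exact (extendsWord_ofFn.1 (hext n) k hn).symm

/-- A set containing `1` whose elements are reached from `1` inside the set by left
multiplications by entries of `s`. -/
def LeftConnected {ι G : Type*} [Group G] (s : ι → G) (P : Set G) : Prop :=
  1 ∈ P ∧ ∀ Q : Set G, 1 ∈ Q → (∀ q ∈ Q, ∀ k, s k * q ∈ P → s k * q ∈ Q) → P ⊆ Q

theorem LeftConnected.insert {ι G : Type*} [Group G] {s : ι → G} {P : Set G}
    (hP : LeftConnected s P) {q : G} (hq : q ∈ P) (k : ι) :
    LeftConnected s (insert (s k * q) P) := by
  refine ⟨.inr hP.1, fun Q h1 hQ => ?_⟩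
  have hPQ : P ⊆ Q := hP.2 Q h1 fun q hq k hk => hQ q hq k (.inr hk)
  exact Set.insert_subset (hQ q (hPQ hq) k (.inl rfl)) hPQ

theorem LeftConnected.exists_superset_mem {ι G : Type*} [Group G] {s : ι → G} {P : Set G}
    (hP : LeftConnected s P) (hfin : P.Finite) (hs : Submonoid.closure (Set.range s) = ⊤) (g : G) :
    ∃ P' : Set G, P'.Finite ∧ LeftConnected s P' ∧ P ⊆ P' ∧ g ∈ P' := by
  induction g using Submonoid.induction_of_closure_eq_top_left hs with
  | one => exact ⟨P, hfin, hP, subset_rfl, hP.1⟩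
  | mul_left g hg q ih =>
    obtain ⟨k, rfl⟩ := hg
    obtain ⟨P', hfin', hP', hPP', hq⟩ := ih
    exact ⟨_, hfin'.insert _, hP'.insert hq k, hPP'.trans (Set.subset_insert ..), .inl rfl⟩

theorem exists_leftConnected {ι G : Type*} [Group G] {s : ι → G}
    (hs : Submonoid.closure (Set.range s) = ⊤) {F : Set G} (hF : F.Finite) :
    ∃ P : Set G, P.Finite ∧ LeftConnected s P ∧ F ⊆ P := by
  induction F, hF using Set.Finite.induction_on with
  | empty =>
    exact ⟨{1}, Set.finite_singleton 1, ⟨rfl, fun Q h1 _ => by simpa using h1⟩,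
      Set.empty_subset _⟩
  | @insert g F _ _ ih =>
    obtain ⟨P, hfin, hP, hFP⟩ := ih
    obtain ⟨P', hfin', hP', hPP', hg⟩ := hP.exists_superset_mem hfin hs g
    exact ⟨P', hfin', hP', Set.insert_subset hg (hFP.trans hPP')⟩

/-! ### Configurations obeying the rules -/

namespace Blueprint

section Forward

variable {I G : Type*} [Group G] {m : ℕ} {D : Blueprint I G m} {x : G → D.Sym} {i j : I}
variable (hx : ∀ g, D.Rules x g)
include hx

theorem mem_fixer_steer {f : G} (hf : f ∈ D.window) (hfi : f ∈ D.rays.fixer i) :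
    f ∈ (D.rays.steer x).fixer i :=
  ⟨hfi.1, hfi.2.1, fun g => (hx g).invariant i f hf hfi⟩

theorem adj_steer (hij : D.rays.Adj i j) : (D.rays.steer x).Adj i j where
  a_mem := mem_fixer_steer hx (steps_subset_window (D.rays.signed_a_mem_steps j true)) hij.a_mem
  b_mem := mem_fixer_steer hx (steps_subset_window (D.rays.signed_b_mem_steps j true)) hij.b_mem
  a_mem' := mem_fixer_steer hx (steps_subset_window (D.rays.signed_a_mem_steps i true)) hij.a_mem'
  b_mem' := mem_fixer_steer hx (steps_subset_window (D.rays.signed_b_mem_steps i true)) hij.b_mem'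

theorem carried_point (hij : D.rays.Adj i j) (n : ℕ) (g : G) :
    (x ((D.rays.steer x).point j n g)).carried i j = (x g).data i := by
  induction n with
  | zero => exact (hx g).carried_right i j hij
  | succ n ih => rw [Rays.point_succ, (hx _).carried_left i j hij, ih]

theorem order_point_diagonal (hij : D.rays.Adj i j) (n : ℕ) (g : G) :
    (x ((D.rays.steer x).point i n ((D.rays.steer x).point j n g))).order i j = some .eq := by
  induction n with
  | zero => exact (hx g).order_right_right i j hij
  | succ n ih =>
    rw [Rays.point_succ, ← Rays.left_point_point (adj_steer hx hij)]
    exact (hx _).order_left_left i j hij ih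

theorem order_point (hij : D.rays.Adj i j) (n k : ℕ) (g : G) :
    (x ((D.rays.steer x).point i n ((D.rays.steer x).point j k g))).order i j =
      some (compare n k) := by
  rcases lt_trichotomy n k with h | rfl | h
  · rw [compare_lt_iff_lt.2 h]
    induction k, h using Nat.le_induction with
    | base =>
      rw [← Rays.left_point_point (adj_steer hx hij)]
      exact (hx _).order_left' i j hij _ (by simp) (order_point_diagonal hx hij n g)
    | succ k _ ih =>
      rw [← Rays.left_point_point (adj_steer hx hij)]
      exact (hx _).order_left' i j hij _ (by simp) ih
  · simpa using order_point_diagonal hx hij n g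
  · rw [compare_gt_iff_gt.2 h]
    induction n, h using Nat.le_induction with
    | base =>
      rw [Rays.point_succ]
      exact (hx _).order_left i j hij _ (by simp) (order_point_diagonal hx hij k g)
    | succ n _ ih =>
      rw [Rays.point_succ]
      exact (hx _).order_left i j hij _ (by simp) ih

theorem data_point_eq (hij : Relation.ReflTransGen D.rays.Adj i j) (n : ℕ) (g : G) :
    (x ((D.rays.steer x).point i n g)).data i = (x ((D.rays.steer x).point j n g)).data j := by
  induction hij with
  | refl => rfl
  | @tail j k _ hjk ih =>
    rw [ih, ← carried_point hx hjk n, ← carried_point hx hjk.symm n,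
      Rays.point_comm (adj_steer hx hjk.symm)]
    exact (hx _).diagonal j k hjk (order_point_diagonal hx hjk n g)

theorem exists_tile_input (hαβ : D.rays.Adj D.α D.β) (p : D.P) (n k : ℕ) (g : G) :
    ∃ θ, (x ((D.rays.steer x).point D.α 0 ((D.rays.steer x).point D.β k
        ((D.rays.steer x).point D.α n g)))).tile p = some θ ∧
      D.tiles.input (markedInput (List.ofFn fun k : Fin n =>
        (x ((D.rays.steer x).point D.β k g)).data D.β p) k) θ := by
  rw [markedInput_ofFn fun k => (x ((D.rays.steer x).point D.β k g)).data D.β p,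
    ← carried_point hx hαβ.symm n, Rays.point_comm (adj_steer hx hαβ.symm)]
  exact (hx _).input p _ (order_point hx hαβ n k g)

theorem tileable_markedInput (hαβ : D.rays.Adj D.α D.β) (p : D.P) (n : ℕ) (g : G) :
    D.tiles.Tileable (markedInput (List.ofFn fun k : Fin n =>
      (x ((D.rays.steer x).point D.β k g)).data D.β p)) := by
  have hadj := adj_steer hx hαβ
  set 𝓢 := D.rays.steer x with h𝓢
  have hall (t k) : ∃ θ, (x (𝓢.point D.α t (𝓢.point D.β k (𝓢.point D.α n g)))).tile p = some θ := by
    induction t with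
    | zero => exact (exists_tile_input hx hαβ p n k g).imp fun _ => And.left
    | succ t ih =>
      obtain ⟨θ, hθ⟩ := ih
      obtain ⟨-, θ', -, -, h, -⟩ := (hx _).square p θ hθ
      exact ⟨θ', by rw [Rays.point_succ]; exact h⟩
  choose θ hθ using hall
  refine ⟨θ, fun t k => ?_, fun t => ?_, fun k => ?_⟩
  · obtain ⟨θ₁, θ₂, θ₃, h₁, h₂, h₃, h⟩ := (hx _).square p _ (hθ t k)
    rw [← h𝓢, Rays.left_point_point hadj, hθ, Option.some_inj] at h₁
    rw [← h𝓢, ← Rays.point_succ, hθ, Option.some_inj] at h₂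
    rw [← h𝓢, Rays.left_point_point hadj, ← Rays.point_succ, hθ, Option.some_inj] at h₃
    rwa [h₁, h₂, h₃]
  · have hcol : 𝓢.point D.α t (𝓢.point D.β 0 (𝓢.point D.α n g)) =
        𝓢.right D.β (𝓢.point D.α t (𝓢.point D.α n g)) := Rays.point_right hadj ..
    obtain ⟨θ', h', h⟩ := (hx _).column p (θ t 0) (hcol ▸ hθ t 0)
    rw [← h𝓢, ← hcol, ← Rays.point_succ, hθ, Option.some_inj] at h'
    rwa [h']
  · obtain ⟨θ', h', h⟩ := exists_tile_input hx hαβ p n k g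
    rw [← h𝓢, hθ, Option.some_inj] at h'
    rwa [h']

theorem data_mem {V : Set (ℕ → Fin m → Bool)} (hV : IsClosed V)
    (htiles : ∀ w, D.tiles.Tileable (markedInput w) → ∃ y ∈ V, ExtendsWord y w)
    (hαβ : D.rays.Adj D.α D.β) (p : D.P) (g : G) :
    (fun n => (x ((D.rays.steer x).point D.β n g)).data D.β p) ∈ V :=
  mem_of_forall_exists_extendsWord hV fun n => htiles _ (tileable_markedInput hx hαβ p n g)

omit hx in
/-- The sequence read off the ray at `g` for the element `p` of `P`. -/
def reading (D : Blueprint I G m) (x : G → D.Sym) (g : G) (p : D.P) (n : ℕ) : Bool :=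
  (x ((D.rays.steer x).point D.β n g)).data D.β p D.e

theorem reading_mul (hconn : ∀ i, Relation.ReflTransGen D.rays.Adj i D.β)
    (hT : ∀ t ∈ D.T, ∃ i, t ∈ D.rays.fixer i) {t : G} (ht : t ∈ D.T) (g : G) {p p' : D.P}
    (hp : (p : G) = 1) (hp' : (p' : G) = t⁻¹) : D.reading x (g * t) p = D.reading x g p' := by
  obtain ⟨i, hi⟩ := hT t ht
  funext n
  rw [reading, reading, ← data_point_eq hx (hconn i), ← data_point_eq hx (hconn i),
    Rays.point_mul (mem_fixer_steer hx (.inr (.inl (.inl ht))) hi),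
    (hx _).translate i t ht hi p p' hp hp']

variable {X : Set (ℕ → Bool)} {act : G → (ℕ → Bool) → ℕ → Bool}
  (hdata : ∀ p g, (fun n => (x ((D.rays.steer x).point D.β n g)).data D.β p) ∈ SetRep D.s act X)
  (hact : IsActionOn act X) (hs : D.s D.e = 1)
include hdata hact hs

omit hx in
theorem reading_mem_and_act (g : G) (p : D.P) : D.reading x g p ∈ X ∧
    ∀ k, (fun n => (x ((D.rays.steer x).point D.β n g)).data D.β p k) =
      act (D.s k) (D.reading x g p) := by
  obtain ⟨ξ, hξ, h⟩ := hdata p g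
  have : D.reading x g p = ξ := by rw [← hact.2.1 ξ hξ, ← hs]; exact h D.e
  exact this ▸ ⟨hξ, h⟩

theorem reading_eq_act (hP : LeftConnected D.s D.P) (g : G) {p₁ : D.P} (hp₁ : (p₁ : G) = 1)
    (p : D.P) : D.reading x g p = act p (D.reading x g p₁) := by
  have hmem := fun p => reading_mem_and_act hdata hact hs g p
  refine (hP.2 {q | ∃ hq : q ∈ D.P, D.reading x g ⟨q, hq⟩ = act q (D.reading x g p₁)} ?_ ?_ p.2).2
  · exact ⟨hP.1, by rw [hact.2.1 _ (hmem p₁).1]; congr 1; exact Subtype.ext hp₁.symm⟩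
  · rintro q ⟨hq, h⟩ k hk
    refine ⟨hk, ?_⟩
    rw [hact.2.2 _ _ _ (hmem p₁).1, ← h, ← (hmem ⟨q, hq⟩).2 k]
    exact funext fun n => ((hx _).consistent D.β ⟨q, hq⟩ ⟨_, hk⟩ k rfl).symm

theorem reading_eq_act_inv (hP : LeftConnected D.s D.P) (hTP : D.T⁻¹ ⊆ D.P)
    (hconn : ∀ i, Relation.ReflTransGen D.rays.Adj i D.β)
    (hT : ∀ t ∈ D.T, ∃ i, t ∈ D.rays.fixer i) (htop : Subgroup.closure D.T = ⊤)
    {p₁ : D.P} (hp₁ : (p₁ : G) = 1) (g : G) :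
    D.reading x g p₁ = act g⁻¹ (D.reading x 1 p₁) := by
  have hmem := fun g => (reading_mem_and_act hdata hact hs g p₁).1
  have hstep (g) {t} (ht : t ∈ D.T) :
      D.reading x (g * t) p₁ = act t⁻¹ (D.reading x g p₁) := by
    have ht' : t⁻¹ ∈ D.P := hTP (Set.inv_mem_inv.2 ht)
    rw [reading_mul hx hconn hT ht g (p' := ⟨t⁻¹, ht'⟩) hp₁ rfl,
      reading_eq_act hx hdata hact hs hP g hp₁]
  induction (show g ∈ Subgroup.closure D.T from htop ▸ Subgroup.mem_top g)
    using Subgroup.closure_induction_right with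
  | one => rw [inv_one, hact.2.1 _ (hmem 1)]
  | mul_right g _ t ht ih =>
    rw [hstep g ht, ih, mul_inv_rev, hact.2.2 _ _ _ (hmem 1)]
  | mul_inv_cancel g _ t ht ih =>
    have h := hstep (g * t⁻¹) ht
    rw [inv_mul_cancel_right, ih] at h
    rw [mul_inv_rev, inv_inv, hact.2.2 _ _ _ (hmem 1), h, ← hact.2.2 _ _ _ (hmem _),
      mul_inv_cancel, hact.2.1 _ (hmem _)]

end Forward

end Blueprint

theorem isLocallyConstant_eval {G A : Type*} [TopologicalSpace A] [DiscreteTopology A]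
    {f : (G → A) → G} (hf : IsLocallyConstant f) :
    IsLocallyConstant fun x : G → A => x (f x) := by
  refine (IsLocallyConstant.iff_eventually_eq _).2 fun x => ?_
  filter_upwards [hf.eventually_eq x,
    ((IsLocallyConstant.iff_continuous _).2 (continuous_apply (f x))).eventually_eq x] with y h h'
  rw [h, h']

namespace Blueprint

section Backward

variable {I G : Type*} [Group G] {m : ℕ}

/-- The configuration whose rays at `g` carry `z g`, and whose quadrant of indices `α`, `β` at
`point α n h` carries, for each `p`, the tiling `θ h n p`. -/
noncomputable def config (D : Blueprint I G m) (z : G → ℕ → D.P → Fin m → Bool)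
    (θ : G → ℕ → D.P → ℕ → ℕ → D.tiles.Tile) (g : G) : D.Sym where
  l i := D.rays.l i g
  r i := D.rays.r i g
  data i := (D.rays.decode i g).elim (fun _ _ => false) fun c => z c.2 c.1
  carried i j := (D.rays.decode j g).elim (fun _ _ => false) fun c =>
    (D.rays.decode i c.2).elim (fun _ _ => false) fun c' => z c'.2 c'.1
  order i j := (D.rays.decode i g).bind fun c => (D.rays.decode j c.2).map fun c' =>
    compare c.1 c'.1
  tile p := (D.rays.decode D.α g).bind fun c => (D.rays.decode D.β c.2).bind fun c' =>
    (D.rays.decode D.α c'.2).map fun c'' => θ c''.2 c''.1 p c.1 c'.1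

variable {D : Blueprint I G m} {z : G → ℕ → D.P → Fin m → Bool}
  {θ : G → ℕ → D.P → ℕ → ℕ → D.tiles.Tile} {i j : I} (h𝓡 : D.rays.Separated)
include h𝓡

theorem config_data_point (n : ℕ) (g : G) :
    (D.config z θ (D.rays.point i n g)).data i = z g n := by
  simp only [config, Rays.decode_point h𝓡, Option.elim_some]

theorem config_carried_point (n : ℕ) (g : G) :
    (D.config z θ (D.rays.point j n g)).carried i j = (D.config z θ g).data i := by
  simp only [config, Rays.decode_point h𝓡, Option.elim_some]

theorem config_carried_left (g : G) :
    (D.config z θ (D.rays.left j g)).carried i j = (D.config z θ g).carried i j := by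
  simp only [config, Rays.decode_left h𝓡, Option.elim_map]
  rfl

theorem config_order_eq_some {g : G} {o : Ordering} :
    (D.config z θ g).order i j = some o ↔
      ∃ n k h, D.rays.point i n (D.rays.point j k h) = g ∧ compare n k = o := by
  simp only [config, Option.bind_eq_some_iff, Option.map_eq_some_iff, Rays.decode_eq_some h𝓡,
    Prod.exists]
  constructor
  · rintro ⟨n, g, rfl, k, h, rfl, rfl⟩
    exact ⟨n, k, h, rfl, rfl⟩
  · rintro ⟨n, k, h, rfl, rfl⟩
    exact ⟨n, _, rfl, k, h, rfl, rfl⟩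

theorem config_tile_eq_some {g : G} {p : D.P} {a : D.tiles.Tile} :
    (D.config z θ g).tile p = some a ↔ ∃ t k n h,
      D.rays.point D.α t (D.rays.point D.β k (D.rays.point D.α n h)) = g ∧ θ h n p t k = a := by
  simp only [config, Option.bind_eq_some_iff, Option.map_eq_some_iff, Rays.decode_eq_some h𝓡,
    Prod.exists]
  constructor
  · rintro ⟨t, g, rfl, k, g, rfl, n, h, rfl, rfl⟩
    exact ⟨t, k, n, h, rfl, rfl⟩
  · rintro ⟨t, k, n, h, rfl, rfl⟩
    exact ⟨t, _, rfl, k, _, rfl, n, h, rfl, rfl⟩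

theorem config_data_mul_congr {t : G} (ht : t ∈ D.rays.fixer i) {p p' : D.P}
    (hz : ∀ g n, z (g * t) n p = z g n p') (g : G) :
    (D.config z θ (g * t)).data i p = (D.config z θ g).data i p' := by
  simp only [config, Rays.decode_mul h𝓡 ht]
  cases D.rays.decode i g with
  | none => rfl
  | some c => exact hz c.2 c.1

theorem config_input (hαβ : D.rays.Adj D.α D.β)
    (hθ : ∀ g n p, D.tiles.IsTiling (markedInput (List.ofFn fun k : Fin n => z g k p)) (θ g n p))
    (g : G) (p : D.P) (o : Ordering) (ho : (D.config z θ g).order D.α D.β = some o) :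
    ∃ a, (D.config z θ (D.rays.right D.α g)).tile p = some a ∧
      D.tiles.input (inputLetter ((D.config z θ g).carried D.β D.α p) o) a := by
  obtain ⟨n, k, h, rfl, rfl⟩ := (config_order_eq_some h𝓡).1 ho
  refine ⟨θ h n p 0 k, (config_tile_eq_some h𝓡).2 ⟨0, k, n, h, ?_, rfl⟩, ?_⟩
  · rw [Rays.point_comm hαβ.symm]
    rfl
  · rw [config_carried_point h𝓡, config_data_point h𝓡,
      ← markedInput_ofFn fun k => z h k p]
    exact (hθ h n p).input k

theorem config_square (hαβ : D.rays.Adj D.α D.β)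
    (hθ : ∀ g n p, D.tiles.IsTiling (markedInput (List.ofFn fun k : Fin n => z g k p)) (θ g n p))
    (g : G) (p : D.P) (a : D.tiles.Tile) (ha : (D.config z θ g).tile p = some a) :
    ∃ a₁ a₂ a₃, (D.config z θ (D.rays.left D.β g)).tile p = some a₁ ∧
      (D.config z θ (D.rays.left D.α g)).tile p = some a₂ ∧
      (D.config z θ (D.rays.left D.α (D.rays.left D.β g))).tile p = some a₃ ∧
      D.tiles.square a a₁ a₂ a₃ := by
  obtain ⟨t, k, n, h, rfl, rfl⟩ := (config_tile_eq_some h𝓡).1 ha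
  refine ⟨_, _, _, (config_tile_eq_some h𝓡).2 ⟨t, k + 1, n, h, ?_, rfl⟩,
    (config_tile_eq_some h𝓡).2 ⟨t + 1, k, n, h, Rays.point_succ .., rfl⟩,
    (config_tile_eq_some h𝓡).2 ⟨t + 1, k + 1, n, h, ?_, rfl⟩, (hθ h n p).square t k⟩
  · rw [Rays.left_point_point hαβ]
  · rw [Rays.left_point_point hαβ, ← Rays.point_succ]

theorem config_column (hαβ : D.rays.Adj D.α D.β)
    (hθ : ∀ g n p, D.tiles.IsTiling (markedInput (List.ofFn fun k : Fin n => z g k p)) (θ g n p))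
    (g : G) (p : D.P) (a : D.tiles.Tile)
    (ha : (D.config z θ (D.rays.right D.β g)).tile p = some a) :
    ∃ a₁, (D.config z θ (D.rays.left D.α (D.rays.right D.β g))).tile p = some a₁ ∧
      D.tiles.column a a₁ := by
  obtain ⟨t, k, n, h, hg, rfl⟩ := (config_tile_eq_some h𝓡).1 ha
  have hk : k = 0 := by
    rw [Rays.point_comm hαβ] at hg
    exact congrArg Prod.fst (@h𝓡.point_injective _ _ _ _ D.β (k, _) (0, g) hg)
  subst hk
  refine ⟨_, (config_tile_eq_some h𝓡).2 ⟨t + 1, 0, n, h, ?_, rfl⟩, (hθ h n p).column t⟩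
  rw [Rays.point_succ, hg]

theorem config_rules (hαβ : D.rays.Adj D.α D.β)
    (htrans : ∀ t ∈ D.T, ∀ p p' : D.P, (p : G) = 1 → (p' : G) = t⁻¹ →
      ∀ g n, z (g * t) n p = z g n p')
    (hcons : ∀ g n (p p' : D.P) k, (p' : G) = D.s k * p → z g n p k = z g n p' D.e)
    (hθ : ∀ g n p, D.tiles.IsTiling (markedInput (List.ofFn fun k : Fin n => z g k p)) (θ g n p))
    (g : G) : D.Rules (D.config z θ) g where
  invariant i f _ hf := hf.2.2 g
  carried_right i j _ := config_carried_point h𝓡 0 g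
  carried_left i j _ := config_carried_left h𝓡 g
  order_right_right i j _ := (config_order_eq_some h𝓡).2 ⟨0, 0, g, rfl, rfl⟩
  order_left_left i j hij ho := by
    obtain ⟨n, k, h, rfl, hnk⟩ := (config_order_eq_some h𝓡).1 ho
    refine (config_order_eq_some h𝓡).2 ⟨n + 1, k + 1, h, ?_, by simpa using hnk⟩
    exact (Rays.point_succ ..).trans (congrArg _ (Rays.left_point_point hij ..).symm)
  order_left i j _ o ho' ho := by
    obtain ⟨n, k, h, rfl, rfl⟩ := (config_order_eq_some h𝓡).1 ho
    exact (config_order_eq_some h𝓡).2 ⟨n + 1, k, h, Rays.point_succ ..,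
      compare_gt_iff_gt.2 (Nat.lt_succ_of_le (compare_ge_iff_ge.1 ho'))⟩
  order_left' i j hij o ho' ho := by
    obtain ⟨n, k, h, rfl, rfl⟩ := (config_order_eq_some h𝓡).1 ho
    exact (config_order_eq_some h𝓡).2 ⟨n, k + 1, h, (Rays.left_point_point hij ..).symm,
      compare_lt_iff_lt.2 (Nat.lt_succ_of_le (compare_le_iff_le.1 ho'))⟩
  diagonal i j hij ho := by
    obtain ⟨n, k, h, rfl, hnk⟩ := (config_order_eq_some h𝓡).1 ho
    obtain rfl := compare_eq_iff_eq.1 hnk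
    rw [config_carried_point h𝓡, config_data_point h𝓡, Rays.point_comm hij,
      config_carried_point h𝓡, config_data_point h𝓡]
  input := config_input h𝓡 hαβ hθ g
  square := config_square h𝓡 hαβ hθ g
  column := config_column h𝓡 hαβ hθ g
  translate i t ht hf p p' hp hp' := config_data_mul_congr h𝓡 hf (htrans t ht p p' hp hp') g
  consistent i p p' k hk := by
    cases h : D.rays.decode i g with
    | none => simp only [config, h, Option.elim_none]
    | some c => simpa only [config, h, Option.elim_some] using hcons c.2 c.1 p p' k hk

omit h𝓡 in
theorem exists_rules_reading_eq {X : Set (ℕ → Bool)} {act : G → (ℕ → Bool) → ℕ → Bool}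
    (hact : IsActionOn act X) (hs : D.s D.e = 1) (h𝓡 : D.rays.Separated)
    (hαβ : D.rays.Adj D.α D.β)
    (htiles : ∀ w, (∃ y ∈ SetRep D.s act X, ExtendsWord y w) →
      D.tiles.Tileable (markedInput w))
    {p₁ : D.P} (hp₁ : (p₁ : G) = 1) {ξ : ℕ → Bool} (hξ : ξ ∈ X) :
    ∃ x : G → D.Sym, (∀ g, D.Rules x g) ∧ D.reading x 1 p₁ = ξ := by
  have hmem g : act g ξ ∈ X := hact.1 g hξ
  let z (g : G) (n : ℕ) (p : D.P) (k : Fin m) : Bool := act (D.s k * p) (act g⁻¹ ξ) n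
  have htileable g n p : D.tiles.Tileable (markedInput (List.ofFn fun k : Fin n => z g k p)) :=
    htiles _ ⟨fun n => z g n p,
      ⟨act p (act g⁻¹ ξ), hact.1 _ (hmem _), fun k => hact.2.2 _ _ _ (hmem _)⟩,
      extendsWord_ofFn.2 fun _ _ => rfl⟩
  choose θ hθ using htileable
  refine ⟨D.config z θ, config_rules h𝓡 hαβ ?_ ?_ hθ, funext fun n => ?_⟩
  · intro t _ p p' hp hp' g n
    simp only [z, hp, hp', mul_inv_rev, hact.2.2 _ _ _ hξ, hact.2.2 _ _ _ (hmem _),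
      hact.2.1 _ (hact.1 _ (hmem _))]
  · intro g n p p' k hk
    simp only [z, hs, hk, one_mul]
  · change (D.config z θ (D.rays.point D.β n 1)).data D.β p₁ D.e = ξ n
    simp only [config_data_point h𝓡, z, hs, hp₁, inv_one, mul_one, hact.2.1 ξ hξ]

end Backward

section FactorMap

variable {I G : Type*} [Group G] {m : ℕ} {D : Blueprint I G m}

theorem reading_shift (x : G → D.Sym) (g h : G) (p : D.P) :
    D.reading (shift g x) h p = D.reading x (g⁻¹ * h) p := by
  have hleft i h :
      g⁻¹ * (D.rays.steer (shift g x)).left i h = (D.rays.steer x).left i (g⁻¹ * h) :=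
    (mul_assoc ..).symm
  have hpoint i n : g⁻¹ * (D.rays.steer (shift g x)).point i n h =
      (D.rays.steer x).point i n (g⁻¹ * h) := by
    induction n with
    | zero => exact (mul_assoc ..).symm
    | succ n ih => rw [Rays.point_succ, Rays.point_succ, hleft, ih]
  funext n
  simp only [reading, shift, hpoint]

variable [TopologicalSpace D.Sym] [DiscreteTopology D.Sym]

theorem isLocallyConstant_point (i : I) (n : ℕ) (g : G) :
    IsLocallyConstant fun x : G → D.Sym => (D.rays.steer x).point i n g := by
  induction n with
  | zero =>
    exact (isLocallyConstant_eval (.const g)).comp fun c : D.Sym => g * signed (D.rays.b i) (c.r i)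
  | succ n ih =>
    simp only [Rays.point_succ]
    exact ih.mul ((isLocallyConstant_eval ih).comp fun c => signed (D.rays.a i) (c.l i))

theorem continuous_reading (g : G) (p : D.P) : Continuous fun x => D.reading x g p :=
  continuous_pi fun n =>
    ((isLocallyConstant_eval (isLocallyConstant_point D.β n g)).comp
      fun c => c.data D.β p D.e).continuous

end FactorMap

theorem isFactorOfSFT {I G : Type*} [Group G] [Finite I] {m : ℕ} {D : Blueprint I G m}
    {X : Set (ℕ → Bool)} {act : G → (ℕ → Bool) → ℕ → Bool} (hact : IsActionOn act X)
    (hclosed : IsClosed (SetRep D.s act X))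
    (htiles : ∀ w, D.tiles.Tileable (markedInput w) ↔ ∃ y ∈ SetRep D.s act X, ExtendsWord y w)
    (h𝓡 : D.rays.Separated) (hαβ : D.rays.Adj D.α D.β)
    (hconn : ∀ i, Relation.ReflTransGen D.rays.Adj i D.β)
    (hfin : D.T.Finite) (htop : Subgroup.closure D.T = ⊤)
    (hT : ∀ t ∈ D.T, ∃ i, t ∈ D.rays.fixer i) (hs : D.s D.e = 1) (hPfin : D.P.Finite)
    (hP : LeftConnected D.s D.P) (hTP : D.T⁻¹ ⊆ D.P) : IsFactorOfSFT act X := by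
  have := hPfin.to_subtype
  have := D.tiles.finite_tile
  let _ : TopologicalSpace D.Sym := ⊥
  have : DiscreteTopology D.Sym := ⟨rfl⟩
  obtain ⟨k, ⟨ι⟩⟩ := Finite.exists_equiv_fin D.Sym
  let p₁ : D.P := ⟨1, hP.1⟩
  have hdata {x : G → D.Sym} (hx : ∀ g, D.Rules x g) (p g) :=
    data_mem hx hclosed (fun w => (htiles w).1) hαβ p g
  refine ⟨k, {y | ∀ g, D.Rules (ι.symm ∘ y) g}, fun y => D.reading (ι.symm ∘ y) 1 p₁,
    isSFT_of_window (window_finite hfin) fun y y' g g' h => Rules.congr fun f hf => ?_,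
    ?_, fun y hy => ?_, fun ξ hξ => ?_, fun g y hy => ?_⟩
  · exact congrArg ι.symm (h f hf)
  · have : Continuous fun y : G → Fin k => ι.symm ∘ y := by fun_prop
    exact ((continuous_reading 1 p₁).comp this).continuousOn
  · exact (reading_mem_and_act (hdata hy) hact hs 1 p₁).1
  · obtain ⟨x, hx, hxξ⟩ :=
      exists_rules_reading_eq hact hs h𝓡 hαβ (fun w => (htiles w).2) (p₁ := p₁) rfl hξ
    have hι : ι.symm ∘ ι ∘ x = x := by simp [← Function.comp_assoc]
    exact ⟨ι ∘ x, by simpa only [Set.mem_ofPred_eq, hι] using hx, by simpa only [hι] using hxξ⟩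
  · calc D.reading (shift g (ι.symm ∘ y)) 1 p₁ = D.reading (ι.symm ∘ y) g⁻¹ p₁ := by
          rw [reading_shift, mul_one]
      _ = act g (D.reading (ι.symm ∘ y) 1 p₁) := by
          rw [reading_eq_act_inv hy (hdata hy) hact hs hP hTP hconn hT htop rfl, inv_inv]

end Blueprint

theorem selfSimulable_of_rays {I G : Type*} [Group G] [Finite I] (𝓡 : Rays I G)
    (h𝓡 : 𝓡.Separated) {T : Set G} (hfin : T.Finite) (htop : Subgroup.closure T = ⊤)
    (hT : ∀ t ∈ T, ∃ i, t ∈ 𝓡.fixer i) {α β : I} (hαβ : 𝓡.Adj α β)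
    (hconn : ∀ i, Relation.ReflTransGen 𝓡.Adj i β) : SelfSimulable G := by
  rintro X act ⟨m, s, -, hact, ⟨e, he⟩, hs, hclosed, hRE⟩
  obtain ⟨𝒯, h𝒯⟩ := exists_tileSet_of_re hRE
  obtain ⟨P, hPfin, hP, hTP⟩ := exists_leftConnected hs hfin.inv
  let D : Blueprint I G m := ⟨𝓡, T, s, e, P, α, β, 𝒯⟩
  refine Blueprint.isFactorOfSFT (D := D) hact hclosed (fun w => (h𝒯 w).trans ?_)
    h𝓡 hαβ hconn hfin htop hT he hPfin hP hTP
  push Not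
  exact exists_congr fun y => and_comm

/-! ### Nielsen reduction in free groups -/

section Nielsen

open FreeGroup hiding map_mul map_inv map_one

variable {α β : Type*} [DecidableEq α]

/-- The reduced words of `u`, `v` and `u * v` are `A p⁻¹`, `p B` and `A B`. -/
structure Cancels (u v : FreeGroup α) (A p B : List (α × Bool)) : Prop where
  left : u.toWord = A ++ invRev p
  right : v.toWord = p ++ B
  mul : (u * v).toWord = A ++ B

omit [DecidableEq α] in
theorem exists_reduced_append {L₁ L₂ : List (α × Bool)} (h₁ : IsReduced L₁) (h₂ : IsReduced L₂) :
    ∃ A p B, L₁ = A ++ invRev p ∧ L₂ = p ++ B ∧ IsReduced (A ++ B) := by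
  induction L₁ using List.reverseRecOn generalizing L₂ with
  | nil => exact ⟨[], [], L₂, rfl, rfl, h₂⟩
  | append_singleton L x ih =>
    rcases L₂ with _ | ⟨y, L₂⟩
    · exact ⟨L ++ [x], [], [], by simp, rfl, by simpa using h₁⟩
    by_cases hxy : x.1 = y.1 → x.2 = y.2
    · refine ⟨L ++ [x], [], y :: L₂, by simp, rfl, List.isChain_append.2 ⟨h₁, h₂, ?_⟩⟩
      simpa using hxy
    · obtain ⟨A, p, B, rfl, rfl, hAB⟩ := ih (h₁.infix (List.prefix_append ..).isInfix)
        (h₂.infix (List.suffix_cons ..).isInfix)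
      have hx : x = (y.1, !y.2) := by
        push Not at hxy
        exact Prod.ext hxy.1 (Bool.eq_not_of_ne hxy.2)
      exact ⟨A, y :: p, B, by rw [hx, invRev_cons, ← List.append_assoc]; rfl, rfl, hAB⟩

theorem exists_cancels (u v : FreeGroup α) : ∃ A p B, Cancels u v A p B := by
  obtain ⟨A, p, B, hu, hv, hAB⟩ := exists_reduced_append (isReduced_toWord (x := u))
    (isReduced_toWord (x := v))
  refine ⟨A, p, B, hu, hv, ?_⟩
  have : u * v = mk (A ++ B) := by
    rw [← mk_toWord (x := u), ← mk_toWord (x := v), hu, hv, ← mul_mk, ← mul_mk, ← mul_mk,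
      ← inv_mk]
    group
  rw [this, toWord_mk, hAB.reduce_eq]

theorem Cancels.inv {u v : FreeGroup α} {A p B : List (α × Bool)} (h : Cancels u v A p B) :
    Cancels v⁻¹ u⁻¹ (invRev B) p (invRev A) where
  left := by rw [toWord_inv, h.right, invRev_append]
  right := by rw [toWord_inv, h.left, invRev_append, invRev_invRev]
  mul := by rw [← mul_inv_rev, toWord_inv, h.mul, invRev_append]

theorem norm_eq_length (u : FreeGroup α) : u.norm = u.toWord.length := rfl

/-- The number of letters of `u` cancelled by letters of `v` in the product `u * v`. -/
def cancellation (u v : FreeGroup α) : ℕ := (u.norm + v.norm - (u * v).norm) / 2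

theorem Cancels.cancellation_eq {u v : FreeGroup α} {A p B : List (α × Bool)}
    (h : Cancels u v A p B) : cancellation u v = p.length := by
  simp only [cancellation, norm_eq_length, h.left, h.right, h.mul, List.length_append,
    invRev_length]
  lia

theorem norm_lt_norm_mul_self {u : FreeGroup α} (hu : u ≠ 1) : u.norm < (u * u).norm := by
  have hw := reduceCyclically.conj_conjugator_reduceCyclically u.toWord
  have hww := reduceCyclically.reduce_flatten_replicate_succ (isReduced_toWord (x := u)) 1
  set c := reduceCyclically.conjugator u.toWord
  set r := reduceCyclically u.toWord
  have hr : r ≠ [] := by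
    intro hr
    refine hu (mk_toWord.symm.trans ?_)
    rw [← hw, hr, List.append_nil, ← mul_mk, ← inv_mk, mul_inv_cancel]
  have hpos := List.length_pos_iff.2 hr
  have huu : (u * u).toWord = c ++ (r ++ r) ++ invRev c := by simpa [toWord_mul] using hww
  rw [norm_eq_length, norm_eq_length, huu, ← hw]
  simp only [List.length_append]
  lia

/-- The number whose digits in base `K` are the codes of the letters of a word, the first letter
being the least significant. -/
def wordCode {K : ℕ} (code : α × Bool ↪ Fin K) (l : List (α × Bool)) : ℕ :=
  Nat.ofDigits K (l.map fun x => (code x : ℕ))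

variable {K : ℕ} {code : α × Bool ↪ Fin K}

omit [DecidableEq α] in
theorem wordCode_append (l l' : List (α × Bool)) :
    wordCode code (l ++ l') = wordCode code l + K ^ l.length * wordCode code l' := by
  simp [wordCode, Nat.ofDigits_append]

omit [DecidableEq α] in
theorem eq_of_wordCode_eq {l l' : List (α × Bool)} (hlen : l.length = l'.length)
    (h : wordCode code l = wordCode code l') : l = l' := by
  rcases l with _ | ⟨x, l⟩
  · exact (List.length_eq_zero_iff.1 hlen.symm).symm
  have : Nontrivial (α × Bool) := ⟨(x.1, true), (x.1, false), by simp⟩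
  have hK : 1 < K := Fin.nontrivial_iff_two_le.1 code.injective.nontrivial
  have digit_lt (l : List (α × Bool)) : ∀ d ∈ l.map fun x => (code x : ℕ), d < K := by
    rintro _ h
    obtain ⟨x, -, rfl⟩ := List.mem_map.1 h
    exact (code x).is_lt
  exact List.map_injective_iff.2 (Fin.val_injective.comp code.injective)
    (Nat.ofDigits_inj_of_len_eq hK (by simpa using hlen) (digit_lt _) (digit_lt _) h)

/-- The sum of the codes of the first halves of the reduced words of `u` and `u⁻¹`. -/
def halvesCode (code : α × Bool ↪ Fin K) (u : FreeGroup α) : ℕ :=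
  wordCode code (u.toWord.take ((u.norm + 1) / 2)) +
    wordCode code ((u⁻¹).toWord.take ((u.norm + 1) / 2))

/-- The measure that decreases in the Nielsen reduction: word length first, then the code of the
halves. -/
def nielsenMeasure (code : α × Bool ↪ Fin K) (u : FreeGroup α) : ℕ ×ₗ ℕ :=
  toLex (u.norm, halvesCode code u)

theorem nielsenMeasure_inv (u : FreeGroup α) :
    nielsenMeasure code u⁻¹ = nielsenMeasure code u := by
  simp only [nielsenMeasure, halvesCode, norm_inv_eq, inv_inv, add_comm]

theorem nielsenMeasure_le {u v : FreeGroup α} : nielsenMeasure code u ≤ nielsenMeasure code v ↔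
    u.norm < v.norm ∨ u.norm = v.norm ∧ halvesCode code u ≤ halvesCode code v :=
  Prod.Lex.toLex_le_toLex

theorem halvesCode_eq {u : FreeGroup α} {p B : List (α × Bool)} (hu : u.toWord = p ++ B)
    (h : p.length ≤ B.length) :
    halvesCode code u = wordCode code p + K ^ p.length * wordCode code
      (B.take ((p.length + B.length + 1) / 2 - p.length)) +
      wordCode code ((invRev B).take ((p.length + B.length + 1) / 2)) := by
  rw [halvesCode, toWord_inv, norm_eq_length, hu, invRev_append, List.length_append,
    List.take_append, List.take_append, List.take_of_length_le (by lia), wordCode_append,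
    invRev_length, Nat.sub_eq_zero_of_le (by lia : (p.length + B.length + 1) / 2 ≤ B.length),
    List.take_zero, List.append_nil]

theorem wordCode_le_of_nielsenMeasure_le {u v : FreeGroup α} {p q B : List (α × Bool)}
    (hu : u.toWord = q ++ B) (hv : v.toWord = p ++ B) (hpq : p.length = q.length)
    (hB : q.length ≤ B.length) (h : nielsenMeasure code u ≤ nielsenMeasure code v) :
    wordCode code q ≤ wordCode code p := by
  have hnorm : u.norm = v.norm := by simp [norm_eq_length, hu, hv, hpq]
  have := ((nielsenMeasure_le.1 h).resolve_left hnorm.not_lt).2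
  rw [halvesCode_eq hu hB, halvesCode_eq hv (hpq ▸ hB), hpq] at this
  lia

/-- The images of the basis elements are nontrivial and cannot be made smaller by multiplication
by images of other basis elements or of their inverses. -/
structure IsNielsenMinimal (code : α × Bool ↪ Fin K) (f : FreeGroup β →* FreeGroup α) : Prop where
  intro ::
  ne_one : ∀ v, f (mk [v]) ≠ 1
  le_mul_left : ∀ w z : β × Bool, w.1 ≠ z.1 →
    nielsenMeasure code (f (mk [z])) ≤ nielsenMeasure code (f (mk [w]) * f (mk [z]))

namespace IsNielsenMinimal

variable {f : FreeGroup β →* FreeGroup α} (hf : IsNielsenMinimal code f) {v w z : β × Bool}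
include hf

theorem le_mul_right (hvw : v.1 ≠ w.1) :
    nielsenMeasure code (f (mk [v])) ≤ nielsenMeasure code (f (mk [v]) * f (mk [w])) := by
  have h := hf.le_mul_left (w.1, !w.2) (v.1, !v.2) hvw.symm
  rwa [show mk [(w.1, !w.2)] = (mk [w])⁻¹ from rfl, show mk [(v.1, !v.2)] = (mk [v])⁻¹ from rfl,
    map_inv, map_inv, ← mul_inv_rev, nielsenMeasure_inv, nielsenMeasure_inv] at h

theorem norm_le_norm_mul (hvw : v.1 = w.1 → v.2 = w.2) :
    (f (mk [v])).norm ≤ (f (mk [v]) * f (mk [w])).norm ∧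
      (f (mk [w])).norm ≤ (f (mk [v]) * f (mk [w])).norm := by
  by_cases h : v.1 = w.1
  · obtain rfl : v = w := Prod.ext h (hvw h)
    exact ⟨(norm_lt_norm_mul_self (hf.ne_one v)).le, (norm_lt_norm_mul_self (hf.ne_one v)).le⟩
  · have hv := nielsenMeasure_le.1 (hf.le_mul_right h)
    have hw := nielsenMeasure_le.1 (hf.le_mul_left v w h)
    exact ⟨by lia, by lia⟩

theorem two_mul_cancellation_le (hvw : v.1 = w.1 → v.2 = w.2) :
    2 * cancellation (f (mk [v])) (f (mk [w])) ≤ (f (mk [v])).norm ∧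
      2 * cancellation (f (mk [v])) (f (mk [w])) ≤ (f (mk [w])).norm := by
  have h := hf.norm_le_norm_mul hvw
  simp only [cancellation]
  lia

theorem norm_pos (v : β × Bool) : 0 < (f (mk [v])).norm :=
  Nat.pos_of_ne_zero fun h => hf.ne_one v (FreeGroup.norm_eq_zero.1 h)

theorem two_mul_cancellation_self_lt :
    2 * cancellation (f (mk [v])) (f (mk [v])) < (f (mk [v])).norm := by
  have h := norm_lt_norm_mul_self (hf.ne_one v)
  have hpos := hf.norm_pos v
  simp only [cancellation]
  lia

theorem cancellation_lt_norm (hvw : v.1 = w.1 → v.2 = w.2) :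
    cancellation (f (mk [v])) (f (mk [w])) < (f (mk [w])).norm := by
  have h := (hf.two_mul_cancellation_le hvw).2
  have hpos := hf.norm_pos w
  lia

-- If `f w` were entirely cancelled by its neighbours, it would be `p q⁻¹` with `p` and `q` of the
-- same length, and minimality on either side would force the codes of `p` and `q` to agree.
theorem cancellation_add_lt (hvw : v.1 = w.1 → v.2 = w.2) (hwz : w.1 = z.1 → w.2 = z.2) :
    cancellation (f (mk [v])) (f (mk [w])) + cancellation (f (mk [w])) (f (mk [z])) <
      (f (mk [w])).norm := by
  have hcv := hf.two_mul_cancellation_le hvw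
  have hcz := hf.two_mul_cancellation_le hwz
  by_contra! hc
  have hvw' : v.1 ≠ w.1 := fun h => by
    obtain rfl : v = w := Prod.ext h (hvw h)
    have := hf.two_mul_cancellation_self_lt (v := v)
    lia
  have hwz' : w.1 ≠ z.1 := fun h => by
    obtain rfl : w = z := Prod.ext h (hwz h)
    have := hf.two_mul_cancellation_self_lt (v := w)
    lia
  obtain ⟨A, p, B₁, hp⟩ := exists_cancels (f (mk [v])) (f (mk [w]))
  obtain ⟨A₂, q, B, hq⟩ := exists_cancels (f (mk [w])) (f (mk [z]))
  rw [hp.cancellation_eq] at hcv hc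
  rw [hq.cancellation_eq] at hcz hc
  simp only [norm_eq_length] at hcv hcz hc
  have hlen := congrArg List.length hp.right
  have hlen₂ := congrArg List.length hq.left
  have hlenA := congrArg List.length hp.left
  have hlenB := congrArg List.length hq.right
  simp only [List.length_append, invRev_length] at hlen hlen₂ hlenA hlenB
  have hw : p ++ B₁ = A₂ ++ invRev q := by rw [← hp.right, hq.left]
  obtain ⟨rfl, rfl⟩ := List.append_inj hw (by lia)
  have hqp : wordCode code q ≤ wordCode code p :=
    wordCode_le_of_nielsenMeasure_le hq.right hq.mul (by lia) (by lia) (hf.le_mul_left w z hwz')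
  have hpq : wordCode code p ≤ wordCode code q := by
    have h := hf.le_mul_right hvw'
    rw [← nielsenMeasure_inv, ← nielsenMeasure_inv (_ * _), mul_inv_rev] at h
    refine wordCode_le_of_nielsenMeasure_le hp.inv.right ?_ (by lia)
      (by rw [invRev_length]; lia) h
    rw [hp.inv.mul, invRev_invRev]
  obtain rfl := eq_of_wordCode_eq (by lia) (le_antisymm hpq hqp)
  refine hf.ne_one w ?_
  rw [← mk_toWord (x := f (mk [w])), hp.right, ← mul_mk, ← inv_mk, mul_inv_cancel]

-- A prefix of `f v` longer than any cancellation on its left survives in the image of a reduced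
-- word starting with `v`, and each further letter leaves at least one letter of its own.
theorem exists_toWord_map_eq {l : List (β × Bool)} (hl : IsReduced (v :: l)) :
    ∃ S M, S <+: (f (mk [v])).toWord ∧
      (∀ u : β × Bool, (u.1 = v.1 → u.2 = v.2) →
        cancellation (f (mk [u])) (f (mk [v])) < S.length) ∧
      (f (mk (v :: l))).toWord = S ++ M ∧ l.length ≤ M.length := by
  induction l generalizing v with
  | nil => exact ⟨_, [], List.prefix_rfl, fun u hu => hf.cancellation_lt_norm hu, by simp, le_rfl⟩
  | cons w l ih =>
    rw [isReduced_cons_cons] at hl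
    obtain ⟨S, M, hS, hcS, hSM, hlM⟩ := ih hl.2
    obtain ⟨A, p, B, hp⟩ := exists_cancels (f (mk [v])) (f (mk [w]))
    have hpS := hp.cancellation_eq ▸ hcS v hl.1
    obtain ⟨S, rfl⟩ := List.prefix_of_prefix_length_le (hp.right ▸ List.prefix_append p B) hS
      hpS.le
    have hS0 : S ≠ [] := by
      rintro rfl
      simp at hpS
    have hSB : S <+: B := (List.prefix_append_right_inj p).1 (hp.right ▸ hS)
    have hlenA := congrArg List.length hp.left
    simp only [List.length_append, invRev_length] at hlenA
    refine ⟨A, S ++ M, hp.left ▸ List.prefix_append .., fun u hu => ?_, ?_, ?_⟩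
    · have := hf.cancellation_add_lt hu hl.1
      rw [hp.cancellation_eq, norm_eq_length] at this
      lia
    · have hred : IsReduced (A ++ S ++ M) := by
        refine IsReduced.append_overlap ?_ ?_ hS0
        · refine (hp.mul ▸ isReduced_toWord).infix (List.IsPrefix.isInfix ?_)
          exact (List.prefix_append_right_inj A).2 hSB
        · refine (hSM ▸ isReduced_toWord).infix (List.IsSuffix.isInfix ?_)
          exact ⟨p, (List.append_assoc ..).symm⟩
      have : f (mk (v :: w :: l)) = mk (A ++ S ++ M) := by
        rw [← List.singleton_append, ← mul_mk, map_mul, ← mk_toWord (x := f (mk [v])),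
          ← mk_toWord (x := f (mk (w :: l))), hp.left, hSM]
        simp only [← mul_mk, ← inv_mk]
        group
      rw [this, toWord_mk, hred.reduce_eq, List.append_assoc]
    · have := List.length_pos_iff.2 hS0
      simp only [List.length_append, List.length_cons]
      lia

theorem norm_le_norm_map [DecidableEq β] (g : FreeGroup β) : g.norm ≤ (f g).norm := by
  rcases h : g.toWord with _ | ⟨v, l⟩
  · simp [norm_eq_length, h]
  obtain ⟨S, M, -, hS, hSM, hlM⟩ := hf.exists_toWord_map_eq (h ▸ isReduced_toWord (x := g))
  have := hS v fun _ => rfl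
  rw [norm_eq_length, norm_eq_length, h, ← mk_toWord (x := g), h, hSM]
  simp only [List.length_append, List.length_cons]
  lia

end IsNielsenMinimal

/-! ### Nielsen generators of `Aut(F_n)` -/

theorem map_signed {G H F : Type*} [Group G] [Group H] [FunLike F G H] [MonoidHomClass F G H]
    (f : F) (x : G) (σ : Bool) : f (signed x σ) = signed (f x) σ := by
  cases σ <;> simp [signed]

omit [DecidableEq α] in
theorem mk_singleton (v : α × Bool) : mk [v] = signed (of v.1) v.2 := by
  obtain ⟨k, σ⟩ := v
  cases σ <;> rfl

omit [DecidableEq α] in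
theorem mulAut_ext {φ ψ : MulAut (FreeGroup α)} (h : ∀ k, φ (of k) = ψ (of k)) : φ = ψ :=
  MulEquiv.toMonoidHom_injective (FreeGroup.ext_hom _ _ h)

/-- An ordered pair of distinct indices of free generators. -/
structure DistinctPair (α : Type*) where
  fst : α
  snd : α
  ne : fst ≠ snd

namespace DistinctPair

instance [Finite α] : Finite (DistinctPair α) :=
  Finite.of_injective (fun p => (p.fst, p.snd)) fun ⟨_, _, _⟩ ⟨_, _, _⟩ h => by simpa using h

/-- The pair in the opposite order. -/
def swap (p : DistinctPair α) : DistinctPair α := ⟨p.snd, p.fst, p.ne.symm⟩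

end DistinctPair

/-- The endomorphism of the free group that replaces the generator `i` by `g`. -/
def replaceHom (i : α) (g : FreeGroup α) : FreeGroup α →* FreeGroup α :=
  FreeGroup.lift (Function.update of i g)

theorem replaceHom_self (i : α) (g : FreeGroup α) : replaceHom i g (of i) = g := by
  simp [replaceHom]

theorem replaceHom_of_ne {i k : α} (h : k ≠ i) (g : FreeGroup α) :
    replaceHom i g (of k) = of k := by
  simp [replaceHom, h]

theorem replaceHom_comp {i : α} {g h : FreeGroup α} (hgh : replaceHom i h g = of i) :
    (replaceHom i h).comp (replaceHom i g) = MonoidHom.id _ := by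
  ext k
  by_cases hk : k = i
  · simp [hk, replaceHom_self, hgh]
  · simp [replaceHom_of_ne hk]

/-- The Nielsen transvection `xᵢ ↦ xᵢ xⱼ` of the pair `(i, j)`. -/
def transvection (p : DistinctPair α) : MulAut (FreeGroup α) :=
  MonoidHom.toMulEquiv (replaceHom p.fst (of p.fst * of p.snd))
    (replaceHom p.fst (of p.fst * (of p.snd)⁻¹))
    (replaceHom_comp (by simp [replaceHom_self, replaceHom_of_ne p.ne.symm]))
    (replaceHom_comp (by simp [replaceHom_self, replaceHom_of_ne p.ne.symm]))

theorem signed_transvection_fst (p : DistinctPair α) (σ : Bool) :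
    signed (transvection p) σ (of p.fst) = of p.fst * signed (of p.snd) σ := by
  cases σ
  · exact replaceHom_self ..
  · exact replaceHom_self ..

theorem signed_transvection_of_ne (p : DistinctPair α) (σ : Bool) {k : α} (h : k ≠ p.fst) :
    signed (transvection p) σ (of k) = of k := by
  cases σ
  · exact replaceHom_of_ne h _
  · exact replaceHom_of_ne h _

/-- The automorphism `xᵢ ↦ xᵢ⁻¹`. -/
def inversion (i : α) : MulAut (FreeGroup α) :=
  MonoidHom.toMulEquiv (replaceHom i (of i)⁻¹) (replaceHom i (of i)⁻¹)
    (replaceHom_comp (by simp [replaceHom_self])) (replaceHom_comp (by simp [replaceHom_self]))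

theorem inversion_self (i : α) : inversion i (of i) = (of i)⁻¹ := replaceHom_self ..

theorem inversion_of_ne {i k : α} (h : k ≠ i) : inversion i (of k) = of k := replaceHom_of_ne h _

/-- The action of the permutations of the free generators on the free group. -/
def permute (α : Type*) : Equiv.Perm α →* MulAut (FreeGroup α) where
  toFun := freeGroupCongr
  map_one' := freeGroupCongr_refl
  map_mul' σ τ := (freeGroupCongr_trans τ σ).symm

omit [DecidableEq α] in
theorem permute_of (σ : Equiv.Perm α) (k : α) : permute α σ (of k) = of (σ k) := by
  simp [permute]

/-- Nielsen's generators of the automorphism group of a free group of finite rank. -/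
def nielsenGenerators (α : Type*) [DecidableEq α] : Set (MulAut (FreeGroup α)) :=
  (Set.range fun p : α × α => permute α (Equiv.swap p.1 p.2)) ∪ Set.range inversion ∪
    Set.range transvection

theorem nielsenGenerators_finite [Finite α] : (nielsenGenerators α).Finite :=
  ((Set.finite_range _).union (Set.finite_range _)).union (Set.finite_range _)

theorem inversion_mem_closure (i : α) : inversion i ∈ Subgroup.closure (nielsenGenerators α) :=
  Subgroup.subset_closure (.inl (.inr ⟨i, rfl⟩))

theorem transvection_mem_closure (p : DistinctPair α) :
    transvection p ∈ Subgroup.closure (nielsenGenerators α) :=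
  Subgroup.subset_closure (.inr ⟨p, rfl⟩)

theorem permute_mem_closure [Finite α] (σ : Equiv.Perm α) :
    permute α σ ∈ Subgroup.closure (nielsenGenerators α) := by
  suffices h : ⊤ ≤ (Subgroup.closure (nielsenGenerators α)).comap (permute α) from h trivial
  rw [← Equiv.Perm.closure_isSwap, Subgroup.closure_le]
  rintro _ ⟨x, y, -, rfl⟩
  exact Subgroup.subset_closure (.inl (.inl ⟨(x, y), rfl⟩))

theorem exists_map_eq_mk_mul {z w : α × Bool} (h : z.1 ≠ w.1) :
    ∃ e ∈ Subgroup.closure (nielsenGenerators α),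
      e (mk [z]) = mk [w] * mk [z] ∧ ∀ k ≠ z.1, e (of k) = of k := by
  let p : DistinctPair α := ⟨z.1, w.1, h⟩
  let t := signed (transvection p) !w.2
  have ht : t ∈ Subgroup.closure (nielsenGenerators α) := signed_mem (transvection_mem_closure p) _
  have hz : t (of z.1)⁻¹ = mk [w] * (of z.1)⁻¹ := by
    rw [map_inv, signed_transvection_fst p, mul_inv_rev, signed_inv, Bool.not_not, mk_singleton]
  have hne : ∀ k ≠ z.1, t (of k) = of k := fun k => signed_transvection_of_ne p _
  obtain ⟨i, _ | _⟩ := z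
  · exact ⟨t, ht, hz, hne⟩
  · refine ⟨inversion i * t * inversion i, mul_mem (mul_mem (inversion_mem_closure i) ht)
      (inversion_mem_closure i), ?_, fun k hk => ?_⟩
    · have hw : inversion i (mk [w]) = mk [w] := by
        rw [mk_singleton, map_signed, inversion_of_ne h.symm]
      change inversion i (t (inversion i (of i))) = mk [w] * of i
      rw [inversion_self, hz, map_mul, hw, map_inv, inversion_self, inv_inv]
    · simp only [MulAut.mul_apply, inversion_of_ne hk, hne k hk]

theorem mem_closure_of_map_of_eq_signed (s : Finset α) {ψ : MulAut (FreeGroup α)}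
    (hψ : ∀ k, ∃ σ, ψ (of k) = signed (of k) σ) (hs : ∀ k ∉ s, ψ (of k) = of k) :
    ψ ∈ Subgroup.closure (nielsenGenerators α) := by
  induction s using Finset.induction_on generalizing ψ with
  | empty =>
    rw [show ψ = 1 from mulAut_ext fun k => hs k (Finset.notMem_empty k)]
    exact one_mem _
  | insert j s _ ih =>
    obtain ⟨σ, hσ⟩ := hψ j
    cases σ
    · have hmul k : (ψ * inversion j) (of k) = if k = j then of j else ψ (of k) := by
        split_ifs with hk
        · simp [hk, inversion_self, hσ, signed]
        · simp [inversion_of_ne hk]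
      refine (Subgroup.mul_mem_cancel_right _ (inversion_mem_closure j)).1 (ih ?_ ?_)
      · intro k
        rw [hmul]
        split_ifs with hk
        · exact ⟨true, hk ▸ rfl⟩
        · exact hψ k
      · intro k hk
        rw [hmul]
        split_ifs with hkj
        · rw [hkj]
        · exact hs k (by simp [hkj, hk])
    · refine ih hψ fun k hk => ?_
      by_cases hkj : k = j
      · rw [hkj]
        exact hσ
      · exact hs k (by simp [hkj, hk])

theorem mem_closure_of_map_of_eq_mk [Finite α] {ψ : MulAut (FreeGroup α)}
    (hψ : ∀ k, ∃ v, ψ (of k) = mk [v]) : ψ ∈ Subgroup.closure (nielsenGenerators α) := by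
  have := Fintype.ofFinite α
  choose v hv using hψ
  have hinj : Function.Injective fun k => (v k).1 := by
    intro k l hkl
    obtain ⟨σ, hσ⟩ : ∃ σ, ψ (of k) = ψ (signed (of l) σ) := by
      refine ⟨(v k).2 == (v l).2, ?_⟩
      rw [map_signed, hv, hv, mk_singleton, mk_singleton, show (v k).1 = (v l).1 from hkl]
      cases (v k).2 <;> cases (v l).2 <;> simp [signed]
    have := congrArg toWord (ψ.injective hσ)
    rw [← mk_singleton (l, σ), toWord_of, toWord_mk, (IsReduced.singleton).reduce_eq] at this
    exact congrArg Prod.fst (List.singleton_inj.1 this)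
  let τ : Equiv.Perm α := Equiv.ofBijective _ (Finite.injective_iff_bijective.1 hinj)
  rw [← mul_inv_cancel_left (permute α τ) ψ]
  refine mul_mem (permute_mem_closure τ) (mem_closure_of_map_of_eq_signed Finset.univ
    (fun k => ⟨(v k).2, (permute α τ).injective ?_⟩) (by simp))
  rw [← MulAut.mul_apply, mul_inv_cancel_left, hv, mk_singleton, map_signed, permute_of]
  rfl

theorem nielsenMeasure_map_mk (ψ : MulAut (FreeGroup α)) (v : α × Bool) :
    nielsenMeasure code (ψ (mk [v])) = nielsenMeasure code (ψ (of v.1)) := by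
  rw [mk_singleton]
  cases v.2 <;> simp [signed, nielsenMeasure_inv]

theorem exists_isNielsenMinimal [Finite α] (code : α × Bool ↪ Fin K) (φ : MulAut (FreeGroup α)) :
    ∃ e ∈ Subgroup.closure (nielsenGenerators α),
      IsNielsenMinimal code (φ * e : MulAut (FreeGroup α)).toMonoidHom := by
  have := Fintype.ofFinite α
  let total (e : MulAut (FreeGroup α)) : ℕ ×ₗ ℕ := ∑ k, nielsenMeasure code (φ (e (of k)))
  obtain ⟨e, he, hmin⟩ := (InvImage.wf total wellFounded_lt).has_min
    (Subgroup.closure (nielsenGenerators α) : Set (MulAut (FreeGroup α))) ⟨1, one_mem _⟩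
  refine ⟨e, he, fun v hv => ?_, fun w z hwz => ?_⟩
  · have h := congrArg toWord ((map_eq_one_iff _ (φ * e).injective).1 hv)
    simp [toWord_mk] at h
  by_contra! hlt
  obtain ⟨t, ht, hz, hne⟩ := exists_map_eq_mk_mul hwz.symm
  have hlt' : nielsenMeasure code ((φ * e * t) (of z.1)) <
      nielsenMeasure code ((φ * e) (of z.1)) := by
    rw [← nielsenMeasure_map_mk, ← nielsenMeasure_map_mk, MulAut.mul_apply, hz, map_mul]
    exact hlt
  refine hmin (e * t) (mul_mem he ht) (Finset.sum_lt_sum (fun k _ => ?_)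
    ⟨z.1, Finset.mem_univ _, hlt'⟩)
  by_cases hk : k = z.1
  · exact hk ▸ hlt'.le
  · rw [MulAut.mul_apply, hne k hk]

theorem IsNielsenMinimal.mem_closure [Finite α] {ψ : MulAut (FreeGroup α)}
    (hψ : IsNielsenMinimal code ψ.toMonoidHom) : ψ ∈ Subgroup.closure (nielsenGenerators α) := by
  refine inv_mem_iff.1 (mem_closure_of_map_of_eq_mk fun k => ?_)
  have hle : (ψ⁻¹ (of k)).norm ≤ 1 := by
    simpa using hψ.norm_le_norm_map (ψ⁻¹ (of k))
  have hne : (ψ⁻¹ (of k)).norm ≠ 0 := by simp [FreeGroup.norm_eq_zero]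
  obtain ⟨v, hv⟩ := List.length_eq_one_iff.1 (le_antisymm hle (Nat.one_le_iff_ne_zero.2 hne))
  exact ⟨v, by rw [← hv, mk_toWord]⟩

theorem closure_nielsenGenerators [Finite α] : Subgroup.closure (nielsenGenerators α) = ⊤ := by
  have := Fintype.ofFinite α
  refine eq_top_iff.2 fun φ _ => ?_
  obtain ⟨e, he, hmin⟩ := exists_isNielsenMinimal (Fintype.equivFin (α × Bool)).toEmbedding φ
  exact (Subgroup.mul_mem_cancel_right _ he).1 hmin.mem_closure

end Nielsen

section AutFreeGroup

open FreeGroup hiding map_mul map_inv map_one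

/-! ### Supports of automorphisms -/

section Support

variable {α : Type*}

/-- The automorphism fixes the generators outside `S` and preserves the subgroup generated by those
in `S`. -/
structure SupportedOn (S : Finset α) (φ : MulAut (FreeGroup α)) : Prop where
  map_of_notMem : ∀ k ∉ S, φ (of k) = of k
  map_of_mem : ∀ k ∈ S, φ (of k) ∈ Subgroup.closure (of '' (S : Set α))

theorem of_mem_closure {S : Finset α} {k : α} (hk : k ∈ S) :
    of k ∈ Subgroup.closure (of '' (S : Set α)) :=
  Subgroup.subset_closure ⟨k, hk, rfl⟩

theorem SupportedOn.map_eq {S T : Finset α} {φ : MulAut (FreeGroup α)} (hφ : SupportedOn S φ)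
    (hST : Disjoint S T) {x : FreeGroup α} (hx : x ∈ Subgroup.closure (of '' (T : Set α))) :
    φ x = x := by
  have h : Set.EqOn φ.toMonoidHom (MonoidHom.id _) (of '' (T : Set α)) := by
    rintro _ ⟨k, hk, rfl⟩
    exact hφ.map_of_notMem k (Finset.disjoint_right.1 hST hk)
  exact MonoidHom.eqOn_closure h hx

theorem SupportedOn.commute {S T : Finset α} {φ ψ : MulAut (FreeGroup α)} (hφ : SupportedOn S φ)
    (hψ : SupportedOn T ψ) (hST : Disjoint S T) : Commute φ ψ := by
  refine mulAut_ext fun k => ?_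
  rw [MulAut.mul_apply, MulAut.mul_apply]
  by_cases hS : k ∈ S
  · rw [hψ.map_of_notMem k (Finset.disjoint_left.1 hST hS),
      hψ.map_eq hST.symm (hφ.map_of_mem k hS)]
  · rw [hφ.map_of_notMem k hS]
    by_cases hT : k ∈ T
    · exact hφ.map_eq hST (hψ.map_of_mem k hT)
    · rw [hψ.map_of_notMem k hT, hφ.map_of_notMem k hS]

variable [DecidableEq α]

/-- The two entries of the pair. -/
def DistinctPair.support (p : DistinctPair α) : Finset α := {p.fst, p.snd}

theorem DistinctPair.support_swap (p : DistinctPair α) : p.swap.support = p.support :=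
  Finset.pair_comm ..

theorem supportedOn_transvection (p : DistinctPair α) : SupportedOn p.support (transvection p) where
  map_of_notMem k hk := by
    simp only [DistinctPair.support, Finset.mem_insert, not_or] at hk
    exact signed_transvection_of_ne p true hk.1
  map_of_mem k hk := by
    have hfst : p.fst ∈ p.support := Finset.mem_insert_self ..
    by_cases h : k = p.fst
    · rw [h, show transvection p (of p.fst) = _ from signed_transvection_fst p true]
      exact mul_mem (of_mem_closure hfst) (of_mem_closure (by simp [DistinctPair.support]))
    · rw [show transvection p (of k) = _ from signed_transvection_of_ne p true h]
      exact of_mem_closure hk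

theorem supportedOn_inversion (i : α) : SupportedOn {i} (inversion i) where
  map_of_notMem k hk := inversion_of_ne (by simpa using hk)
  map_of_mem k hk := by
    rw [Finset.mem_singleton.1 hk, inversion_self]
    exact inv_mem (of_mem_closure (Finset.mem_singleton_self i))

theorem supportedOn_permute_swap (i j : α) :
    SupportedOn {i, j} (permute α (Equiv.swap i j)) where
  map_of_notMem k hk := by
    simp only [Finset.mem_insert, Finset.mem_singleton, not_or] at hk
    rw [permute_of, Equiv.swap_apply_of_ne_of_ne hk.1 hk.2]
  map_of_mem k hk := by
    rw [permute_of]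
    simp only [Finset.mem_insert, Finset.mem_singleton] at hk
    rcases hk with rfl | rfl
    · exact of_mem_closure (by simp)
    · exact of_mem_closure (by simp)

theorem exists_supportedOn_of_mem_nielsenGenerators {φ : MulAut (FreeGroup α)}
    (hφ : φ ∈ nielsenGenerators α) : ∃ S : Finset α, S.card ≤ 2 ∧ SupportedOn S φ := by
  rcases hφ with (⟨⟨i, j⟩, rfl⟩ | ⟨i, rfl⟩) | ⟨p, rfl⟩
  · exact ⟨_, Finset.card_le_two, supportedOn_permute_swap i j⟩
  · exact ⟨_, by simp, supportedOn_inversion i⟩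
  · exact ⟨_, Finset.card_le_two, supportedOn_transvection p⟩

theorem exists_disjoint_support [Finite α] (hα : 5 ≤ Nat.card α) {S : Finset α} (hS : S.card ≤ 3) :
    ∃ p : DistinctPair α, Disjoint p.support S := by
  have := Fintype.ofFinite α
  rw [Nat.card_eq_fintype_card] at hα
  obtain ⟨u, hu, v, hv, huv⟩ : ∃ u ∈ Sᶜ, ∃ v ∈ Sᶜ, u ≠ v := by
    rw [← Finset.one_lt_card, Finset.card_compl]
    lia
  refine ⟨⟨u, v, huv⟩, ?_⟩
  simpa [DistinctPair.support] using ⟨Finset.mem_compl.1 hu, Finset.mem_compl.1 hv⟩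

end Support

/-! ### Slopes in the plane -/

/-- The vectors `v` with `1 ≤ |v.1 / v.2|`, where the slope `1` is included and the slope `-1` is
not. -/
def steep : Set (ℤ × ℤ) :=
  {v | if 0 ≤ v.1 * v.2 then v.2 ^ 2 ≤ v.1 ^ 2 else v.2 ^ 2 < v.1 ^ 2}

/-- The square of an elementary matrix or of its inverse. -/
def shear (σ : Bool) (v : ℤ × ℤ) : ℤ × ℤ :=
  (if σ then v.1 + 2 * v.2 else v.1 - 2 * v.2, v.2)

/-- The sign of the shear that sends `v` into `steep` without leaving a quadrant inside `steep`. -/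
def steepSign (v : ℤ × ℤ) : Bool := !decide (v.1 * v.2 < 0 ∧ v.2 ^ 2 < v.1 ^ 2)

/-- The sign of the transposed shear that sends `v` out of `steep` without leaving a quadrant
outside `steep`. -/
def flatSign (v : ℤ × ℤ) : Bool := !decide (v.1 * v.2 < 0 ∧ v.1 ^ 2 ≤ v.2 ^ 2)

theorem shear_steepSign (v : ℤ × ℤ) : shear (steepSign v) v ∈ steep ∧
    (0 ≤ (shear (steepSign v) v).1 * (shear (steepSign v) v).2 ↔ steepSign v = true) := by
  obtain ⟨p, q⟩ := v
  by_cases h : p * q < 0 ∧ q ^ 2 < p ^ 2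
  · have hneg : (p - 2 * q) * q < 0 := by nlinarith [sq_nonneg q]
    have hlt : q ^ 2 < (p - 2 * q) ^ 2 := by nlinarith [sq_nonneg q]
    simp [shear, steepSign, steep, h, hneg.not_ge, hlt]
  · have hnonneg : 0 ≤ (p + q) * q := by
      by_contra! hlt
      exact h ⟨by nlinarith [sq_nonneg q], by nlinarith [sq_nonneg (p + q)]⟩
    have h₁ : 0 ≤ (p + 2 * q) * q := by nlinarith [sq_nonneg q]
    have h₂ : q ^ 2 ≤ (p + 2 * q) ^ 2 := by nlinarith [sq_nonneg (p + q)]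
    simp [shear, steepSign, steep, h, h₁, h₂]

theorem shear_flatSign {v : ℤ × ℤ} (hv : v ≠ 0) : (shear (flatSign v) v.swap).swap ∉ steep ∧
    (0 ≤ (shear (flatSign v) v.swap).swap.1 * (shear (flatSign v) v.swap).swap.2 ↔
      flatSign v = true) := by
  obtain ⟨p, q⟩ := v
  by_cases h : p * q < 0 ∧ p ^ 2 ≤ q ^ 2
  · have hneg : p * (q - 2 * p) < 0 := by nlinarith [sq_nonneg p]
    have hle : p ^ 2 ≤ (q - 2 * p) ^ 2 := by nlinarith [sq_nonneg p]
    simp [shear, flatSign, steep, h, hneg.not_ge, hle]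
  · have hnonneg : 0 ≤ p * (p + q) := by
      by_contra! hlt
      exact h ⟨by nlinarith [sq_nonneg p], by nlinarith [sq_nonneg (p + q)]⟩
    have hne : p + q ≠ 0 := fun h₀ => by
      obtain rfl : q = -p := by lia
      obtain rfl : p = 0 := by
        by_contra hp
        exact h ⟨by nlinarith [sq_pos_of_ne_zero hp], by simp⟩
      exact hv rfl
    have h₁ : 0 ≤ p * (q + 2 * p) := by nlinarith [sq_nonneg p]
    have h₂ : p ^ 2 < (q + 2 * p) ^ 2 := by nlinarith [sq_pos_of_ne_zero hne]
    simp [shear, flatSign, steep, h, h₁, h₂]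

/-! ### Rays from slopes -/

/-- The action of the automorphisms of a group on its abelianization. -/
def abelianizationAut (H : Type*) [Group H] : MulAut H →* MulAut (Abelianization H) where
  toFun := MulEquiv.abelianizationCongr
  map_one' := MulEquiv.toMonoidHom_injective (Abelianization.hom_ext _ _ rfl)
  map_mul' _ _ := MulEquiv.toMonoidHom_injective (Abelianization.hom_ext _ _ rfl)

variable {α G : Type*} [Group G]

/-- The value of the character `χ` on the `k`-th basis vector transformed by `g`. -/
def weight (ρ : G →* MulAut (Abelianization (FreeGroup α)))
    (χ : Abelianization (FreeGroup α) →* Multiplicative ℤ) (g : G) (k : α) : ℤ :=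
  (χ (ρ g (Abelianization.of (of k)))).toAdd

/-- A character that does not vanish on both basis vectors of index in `p` transformed by `g`; the
choice only depends on the set of these characters. -/
noncomputable def chosenCharacter (ρ : G →* MulAut (Abelianization (FreeGroup α)))
    (p : DistinctPair α) (g : G) : Abelianization (FreeGroup α) →* Multiplicative ℤ :=
  Classical.epsilon fun χ => weight ρ χ g p.fst ≠ 0 ∨ weight ρ χ g p.snd ≠ 0

/-- The values of the chosen character on the two basis vectors transformed by `g`. -/
noncomputable def coordinates (ρ : G →* MulAut (Abelianization (FreeGroup α)))
    (p : DistinctPair α) (g : G) : ℤ × ℤ :=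
  (weight ρ (chosenCharacter ρ p g) g p.fst, weight ρ (chosenCharacter ρ p g) g p.snd)

section Coordinates

variable {π : MulAut (FreeGroup α) →* G} {ρ : G →* MulAut (Abelianization (FreeGroup α))}
  {p : DistinctPair α}

theorem coordinates_ne_zero (ρ : G →* MulAut (Abelianization (FreeGroup α)))
    (p : DistinctPair α) (g : G) : coordinates ρ p g ≠ 0 := by
  have h : ∃ χ, weight ρ χ g p.fst ≠ 0 ∨ weight ρ χ g p.snd ≠ 0 := by
    let χ₁ : Abelianization (FreeGroup α) →* Multiplicative ℤ :=
      Abelianization.lift (FreeGroup.lift fun _ => Multiplicative.ofAdd 1)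
    exact ⟨χ₁.comp (ρ g)⁻¹.toMonoidHom, .inl (by simp [weight, χ₁])⟩
  rw [Ne, Prod.ext_iff, not_and_or]
  exact Classical.epsilon_spec h

theorem coordinates_swap (ρ : G →* MulAut (Abelianization (FreeGroup α))) (p : DistinctPair α)
    (g : G) : coordinates ρ p.swap g = (coordinates ρ p g).swap := by
  have h : chosenCharacter ρ p.swap g = chosenCharacter ρ p g := by
    simp only [chosenCharacter, DistinctPair.swap, or_comm]
  rw [coordinates, h]
  rfl

theorem chosenCharacter_congr {g h : G} (H : ∀ χ, (weight ρ χ g p.fst ≠ 0 ∨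
    weight ρ χ g p.snd ≠ 0) ↔ (weight ρ χ h p.fst ≠ 0 ∨ weight ρ χ h p.snd ≠ 0)) :
    chosenCharacter ρ p g = chosenCharacter ρ p h := by
  simp only [chosenCharacter, H]

theorem weight_mul_map (hρ : ρ.comp π = abelianizationAut (FreeGroup α))
    (χ : Abelianization (FreeGroup α) →* Multiplicative ℤ) (g : G) (φ : MulAut (FreeGroup α))
    (k : α) : weight ρ χ (g * π φ) k = (χ (ρ g (Abelianization.of (φ (of k))))).toAdd := by
  have h : ρ (π φ) = abelianizationAut _ φ := DFunLike.congr_fun hρ φ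
  rw [weight, map_mul, MulAut.mul_apply, h]
  rfl

variable [DecidableEq α]

theorem coordinates_mul_map (hρ : ρ.comp π = abelianizationAut (FreeGroup α)) {S : Finset α}
    {φ : MulAut (FreeGroup α)} (hφ : SupportedOn S φ) (hp : Disjoint p.support S) (g : G) :
    coordinates ρ p (g * π φ) = coordinates ρ p g := by
  have hweight {k : α} (hk : k ∈ p.support) (χ) : weight ρ χ (g * π φ) k = weight ρ χ g k := by
    rw [weight_mul_map hρ, hφ.map_of_notMem k (Finset.disjoint_left.1 hp hk), weight]
  have hfst := hweight (Finset.mem_insert_self p.fst {p.snd})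
  have hsnd := hweight (k := p.snd) (by simp [DistinctPair.support])
  have hχ : chosenCharacter ρ p (g * π φ) = chosenCharacter ρ p g :=
    chosenCharacter_congr fun χ => by rw [hfst, hsnd]
  simp only [coordinates, hχ, hfst, hsnd]

/-- The image of the square of the transvection of `p`. -/
def squareTransvection (π : MulAut (FreeGroup α) →* G) (p : DistinctPair α) : G :=
  π (transvection p ^ 2)

theorem signed_squareTransvection (π : MulAut (FreeGroup α) →* G) (p : DistinctPair α)
    (σ : Bool) :
    signed (squareTransvection π p) σ = π (signed (transvection p) σ ^ 2) := by
  cases σ <;> simp [signed, squareTransvection]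

theorem coordinates_mul_squareTransvection (hρ : ρ.comp π = abelianizationAut (FreeGroup α))
    (p : DistinctPair α) (g : G) (σ : Bool) :
    coordinates ρ p (g * signed (squareTransvection π p) σ) = shear σ (coordinates ρ p g) := by
  have hfst χ : weight ρ χ (g * signed (squareTransvection π p) σ) p.fst =
      if σ then weight ρ χ g p.fst + 2 * weight ρ χ g p.snd
      else weight ρ χ g p.fst - 2 * weight ρ χ g p.snd := by
    rw [signed_squareTransvection, weight_mul_map hρ, pow_two, MulAut.mul_apply,
      signed_transvection_fst, map_mul, signed_transvection_fst, map_signed,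
      signed_transvection_of_ne p σ p.ne.symm]
    cases σ <;> simp [signed, weight] <;> ring
  have hsnd χ : weight ρ χ (g * signed (squareTransvection π p) σ) p.snd =
      weight ρ χ g p.snd := by
    rw [signed_squareTransvection, weight_mul_map hρ, pow_two, MulAut.mul_apply,
      signed_transvection_of_ne p σ p.ne.symm, signed_transvection_of_ne p σ p.ne.symm, weight]
  have hχ : chosenCharacter ρ p (g * signed (squareTransvection π p) σ) =
      chosenCharacter ρ p g := by
    refine chosenCharacter_congr fun χ => ?_
    rw [hfst, hsnd]
    split_ifs <;> lia
  simp only [coordinates, hχ, hfst, hsnd, shear]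

/-- The rays along which the slopes of the coordinates stay in `steep`, starting from points
with slopes outside `steep`. -/
noncomputable def slopeRays (π : MulAut (FreeGroup α) →* G)
    (ρ : G →* MulAut (Abelianization (FreeGroup α))) : Rays (DistinctPair α) G where
  a := squareTransvection π
  b p := squareTransvection π p.swap
  l p g := steepSign (coordinates ρ p g)
  r p g := flatSign (coordinates ρ p g)

theorem coordinates_left (hρ : ρ.comp π = abelianizationAut (FreeGroup α)) (p : DistinctPair α)
    (g : G) : coordinates ρ p ((slopeRays π ρ).left p g) =
      shear (steepSign (coordinates ρ p g)) (coordinates ρ p g) :=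
  coordinates_mul_squareTransvection hρ ..

theorem coordinates_right (hρ : ρ.comp π = abelianizationAut (FreeGroup α)) (p : DistinctPair α)
    (g : G) : coordinates ρ p ((slopeRays π ρ).right p g) =
      (shear (flatSign (coordinates ρ p g)) (coordinates ρ p g).swap).swap := by
  rw [← coordinates_swap, ← coordinates_mul_squareTransvection hρ, coordinates_swap, Prod.swap_swap]
  rfl

theorem slopeRays_separated (hρ : ρ.comp π = abelianizationAut (FreeGroup α)) :
    (slopeRays π ρ).Separated where
  left_injective p g h hgh := by
    have hg := (shear_steepSign (coordinates ρ p g)).2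
    have hh := (shear_steepSign (coordinates ρ p h)).2
    rw [← coordinates_left hρ] at hg hh
    rw [hgh] at hg
    have hl : (slopeRays π ρ).l p g = (slopeRays π ρ).l p h := Bool.eq_iff_iff.2 (hg.symm.trans hh)
    rw [Rays.left, Rays.left, hl] at hgh
    exact mul_right_cancel hgh
  right_injective p g h hgh := by
    have hg := (shear_flatSign (coordinates_ne_zero ρ p g)).2
    have hh := (shear_flatSign (coordinates_ne_zero ρ p h)).2
    rw [← coordinates_right hρ] at hg hh
    rw [hgh] at hg
    have hr : (slopeRays π ρ).r p g = (slopeRays π ρ).r p h := Bool.eq_iff_iff.2 (hg.symm.trans hh)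
    rw [Rays.right, Rays.right, hr] at hgh
    exact mul_right_cancel hgh
  left_ne_right p g h hgh := by
    have hg := (shear_steepSign (coordinates ρ p g)).1
    have hh := (shear_flatSign (coordinates_ne_zero ρ p h)).1
    rw [← coordinates_left hρ, hgh] at hg
    exact hh (coordinates_right hρ p h ▸ hg)

theorem map_mem_fixer (hρ : ρ.comp π = abelianizationAut (FreeGroup α)) {S : Finset α}
    {φ : MulAut (FreeGroup α)} (hφ : SupportedOn S φ) (hp : Disjoint p.support S) :
    π φ ∈ (slopeRays π ρ).fixer p := by
  have hcomm {q : DistinctPair α} (hq : q.support = p.support) :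
      Commute (π φ) (squareTransvection π q) :=
    ((hφ.commute (supportedOn_transvection q) (hq ▸ hp.symm)).pow_right 2).map π
  refine ⟨hcomm rfl, hcomm p.support_swap, fun g => ?_⟩
  simp only [slopeRays, coordinates_mul_map hρ hφ hp, and_self]

theorem adj_of_disjoint_support (hρ : ρ.comp π = abelianizationAut (FreeGroup α))
    {p q : DistinctPair α} (h : Disjoint p.support q.support) : (slopeRays π ρ).Adj p q := by
  have hmem {p q q' : DistinctPair α} (h : Disjoint p.support q.support)
      (hq' : q'.support = q.support) : squareTransvection π q' ∈ (slopeRays π ρ).fixer p := by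
    rw [squareTransvection, map_pow]
    exact pow_mem (map_mem_fixer hρ (supportedOn_transvection q') (hq' ▸ h)) 2
  exact ⟨hmem h rfl, hmem h q.support_swap, hmem h.symm rfl, hmem h.symm p.support_swap⟩

theorem reflTransGen_adj [Finite α] (hα : 5 ≤ Nat.card α)
    (hρ : ρ.comp π = abelianizationAut (FreeGroup α)) (p q : DistinctPair α) :
    Relation.ReflTransGen (slopeRays π ρ).Adj p q := by
  by_cases h : Disjoint p.support q.support
  · exact .single (adj_of_disjoint_support hρ h)
  have hcard : (p.support ∪ q.support).card ≤ 3 := by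
    have hp : p.support.card ≤ 2 := Finset.card_le_two
    have hq : q.support.card ≤ 2 := Finset.card_le_two
    have := Finset.card_union_add_card_inter p.support q.support
    have := Finset.card_pos.2 (Finset.not_disjoint_iff_nonempty_inter.1 h)
    lia
  obtain ⟨r, hr⟩ := exists_disjoint_support hα hcard
  rw [Finset.disjoint_union_right] at hr
  exact .tail (.single (adj_of_disjoint_support hρ hr.1.symm)) (adj_of_disjoint_support hρ hr.2)

end Coordinates

theorem closure_image_nielsenGenerators [Finite α] [DecidableEq α] {π : MulAut (FreeGroup α) →* G}
    (hπ : Function.Surjective π) : Subgroup.closure (π '' nielsenGenerators α) = ⊤ := by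
  rw [← MonoidHom.map_closure, closure_nielsenGenerators, ← MonoidHom.range_eq_map,
    MonoidHom.range_eq_top.2 hπ]

end AutFreeGroup

theorem autFn_outFn_selfSimulable_general {α G : Type*} [Finite α] (hα : 5 ≤ Nat.card α) [Group G]
    {π : MulAut (FreeGroup α) →* G} (hπ : Function.Surjective π)
    (hker : π.ker ≤ (abelianizationAut (FreeGroup α)).ker) : Group.FG G ∧ SelfSimulable G := by
  classical
  let ρ := π.liftOfSurjective hπ ⟨abelianizationAut (FreeGroup α), hker⟩
  have hρ : ρ.comp π = abelianizationAut (FreeGroup α) :=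
    MonoidHom.liftOfRightInverse_comp ..
  have hfin : (π '' nielsenGenerators α).Finite := nielsenGenerators_finite.image π
  have htop := closure_image_nielsenGenerators hπ
  refine ⟨Group.fg_iff.2 ⟨_, htop, hfin⟩, ?_⟩
  obtain ⟨p, -⟩ := exists_disjoint_support hα (S := ∅) (by simp)
  obtain ⟨q, hpq⟩ := exists_disjoint_support hα (S := p.support)
    (Finset.card_le_two.trans (by simp))
  refine selfSimulable_of_rays (slopeRays π ρ) (slopeRays_separated hρ) hfin htop ?_
    (adj_of_disjoint_support hρ hpq) (reflTransGen_adj hα hρ · _)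
  rintro _ ⟨φ, hφ, rfl⟩
  obtain ⟨S, hS, hφS⟩ := exists_supportedOn_of_mem_nielsenGenerators hφ
  obtain ⟨r, hr⟩ := exists_disjoint_support hα (hS.trans (by simp))
  exact ⟨r, map_mem_fixer hρ hφS hr⟩

theorem conj_range_le_ker_abelianizationAut (H : Type*) [Group H] :
    (MulAut.conj : H →* MulAut H).range ≤ (abelianizationAut H).ker := by
  rintro _ ⟨g, rfl⟩
  refine MulEquiv.toMonoidHom_injective (Abelianization.hom_ext _ _ (MonoidHom.ext fun x => ?_))
  simp [abelianizationAut]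

/-- For `n ≥ 5`, `Aut(F_n)` and `Out(F_n)` are finitely generated and
self-simulable, where `Out(F_n)` is the quotient of `Aut(F_n)` by the normal subgroup of
inner automorphisms. -/
theorem autFn_outFn_selfSimulable (n : ℕ) (hn : 5 ≤ n) :
    (Group.FG (MulAut (FreeGroup (Fin n))) ∧ SelfSimulable (MulAut (FreeGroup (Fin n)))) ∧
    (Group.FG
        (MulAut (FreeGroup (Fin n)) ⧸
          (MulAut.conj : FreeGroup (Fin n) →* MulAut (FreeGroup (Fin n))).range) ∧
      SelfSimulable
        (MulAut (FreeGroup (Fin n)) ⧸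
          (MulAut.conj : FreeGroup (Fin n) →* MulAut (FreeGroup (Fin n))).range)) :=
  have hcard : 5 ≤ Nat.card (Fin n) := by simpa
  ⟨autFn_outFn_selfSimulable_general hcard (π := .id _) Function.surjective_id (by simp),
    autFn_outFn_selfSimulable_general hcard (QuotientGroup.mk'_surjective _)
      ((QuotientGroup.ker_mk' _).trans_le (conj_range_le_ker_abelianizationAut _))⟩

end SelfSim
end

section
/- Let Γ be a finitely generated self-simulable group with decidable word problem. Then there exists a nonempty Γ-subshift of finite type X which is strongly aperiodic, i.e. the shift action of Γ on X is free: if g·x = x for some x ∈ X then g = 1. -/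
open scoped Pointwise

namespace SelfSim

/-!
For each `g ≠ 1`, left multiplication by `g` has no fixed point, so `G` has a two-colouring in which
no `h`, `g h`, `g² h` share a colour. The families of such colourings, one for each `g`, form a
nonempty compact set on which `G` acts by right translation, since the constraints are
invariant under it. An element `g ≠ 1` fixing a family would make the `g`-th colouring agree at `1`,
`g` and `g²`, so the action is free.

A decidable word problem lets us name the elements of `G` by natural numbers so that equality is
decidable and multiplication is computable. Reading colourings along the names, the set
representation of the action consists of the sequences avoiding a recursively enumerable set of
finite patterns, and by compactness such a set is effectively closed. Self-simulability then
provides a subshift of finite type factoring onto the action. It is nonempty, and its points have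
trivial stabilisers because the factor map is equivariant.
-/

section RecursiveEnumerability

variable {α β : Type*} [Primcodable α] [Primcodable β]

theorem computablePred_comp {p : β → Prop} {f : α → β} (hp : ComputablePred p)
    (hf : Computable f) : ComputablePred fun a => p (f a) :=
  ComputablePred.computable_of_manyOneReducible (.mk p hf) hp

theorem computablePred_and {p q : α → Prop} (hp : ComputablePred p) (hq : ComputablePred q) :
    ComputablePred fun a => p a ∧ q a := by
  classical
  exact Computable.computablePred <|
    (Primrec.and.to_comp.comp hp.decide hq.decide).of_eq fun a => (Bool.decide_and _ _).symm

theorem RE.comp {p : β → Prop} {f : α → β} (hp : RE p) (hf : Computable f) :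
    RE fun a => p (f a) :=
  Partrec.comp hp hf

theorem RE.of_iff {p q : α → Prop} (hp : RE p) (hpq : ∀ a, p a ↔ q a) : RE q :=
  REPred.of_eq hp hpq

theorem RE.and {p q : α → Prop} (hp : RE p) (hq : RE q) : RE fun a => p a ∧ q a := by
  have hseq : Partrec fun a => (Part.assert (p a) fun _ => Part.some ()).bind fun _ =>
      Part.assert (q a) fun _ => Part.some () :=
    Partrec.bind hp (Partrec.comp hq Computable.fst)
  exact RE.of_iff hseq.dom_re fun a => by simp [Part.assert]

theorem RE.or {p q : α → Prop} (hp : RE p) (hq : RE q) : RE fun a => p a ∨ q a := by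
  obtain ⟨k, hk, hdom⟩ := Partrec.merge' hp hq
  exact RE.of_iff hk.dom_re fun a => by simpa [Part.assert] using (hdom a).2

theorem RE.exists_primrecRel {p : α → Prop} (hp : RE p) :
    ∃ R : α → ℕ → Prop, PrimrecRel R ∧ ∀ a, p a ↔ ∃ k, R a k := by
  obtain ⟨code, hcode⟩ := Nat.Partrec.Code.exists_code.1 hp
  refine ⟨fun a k => (code.evaln k (Encodable.encode a)).isSome = true, ?_, fun a => ?_⟩
  · exact Primrec.eq.comp (Primrec.option_isSome.comp (Nat.Partrec.Code.primrec_evaln.comp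
      ((Primrec.snd.pair (Primrec.const code)).pair (Primrec.encode.comp Primrec.fst))))
      (Primrec.const true)
  · have hdom : p a ↔ (code.eval (Encodable.encode a)).Dom := by simp [hcode, Part.assert]
    simp only [hdom, Part.dom_iff_mem, Nat.Partrec.Code.evaln_complete, Option.isSome_iff_exists,
      Option.mem_def]
    exact exists_comm

theorem re_exists_of_computablePred {R : α × β → Prop} (hR : ComputablePred R) :
    RE fun a => ∃ b, R (a, b) := by
  classical
  have hsearch : Partrec fun a => Nat.rfindOpt fun n => (Encodable.decode (α := β) n).bind
      fun b => bif decide (R (a, b)) then some () else none := by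
    refine Partrec.rfindOpt <| Computable.option_bind (Computable.decode.comp Computable.snd) ?_
    refine Computable.cond ?_ (Computable.const _) (Computable.const _)
    exact hR.decide.comp ((Computable.fst.comp Computable.fst).pair Computable.snd)
  refine RE.of_iff hsearch.dom_re fun a => Nat.rfindOpt_dom.trans ?_
  constructor
  · rintro ⟨n, u, hn⟩
    obtain ⟨b, -, hb⟩ := Option.bind_eq_some_iff.1 hn
    by_contra hnone
    simp [not_exists.1 hnone b] at hb
  · rintro ⟨b, hb⟩
    exact ⟨Encodable.encode b, (), by simp [hb]⟩

theorem RE.exists {R : α × β → Prop} (hR : RE R) : RE fun a => ∃ b, R (a, b) := by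
  obtain ⟨S, hS, hRS⟩ := hR.exists_primrecRel
  have hshuffle : PrimrecPred fun p : α × β × ℕ => S (p.1, p.2.1) p.2.2 :=
    hS.comp (Primrec.fst.pair (Primrec.fst.comp Primrec.snd)) (Primrec.snd.comp Primrec.snd)
  refine (re_exists_of_computablePred hshuffle.computablePred).of_iff fun a => ?_
  simp only [Prod.exists, hRS]

theorem RE.forall_mem_list {p : α → Prop} (hp : RE p) : RE fun L : List α => ∀ a ∈ L, p a := by
  obtain ⟨R, hR, hpR⟩ := hp.exists_primrecRel
  have hswap : PrimrecRel fun k a => R a k := hR.comp₂ Primrec₂.right Primrec₂.left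
  have hbounded : PrimrecRel fun a K => ∃ k ∈ List.range K, R a k :=
    hswap.exists_mem_list.comp₂ (Primrec.list_range.comp₂ Primrec₂.right) Primrec₂.left
  have hlist : PrimrecPred fun d : List α × ℕ => ∀ a ∈ d.1, ∃ k ∈ List.range d.2, R a k :=
    hbounded.forall_mem_list
  refine (re_exists_of_computablePred hlist.computablePred).of_iff fun L => ?_
  simp only [hpR]
  refine ⟨fun ⟨K, hK⟩ a ha => (hK a ha).imp fun k hk => hk.2, fun hL => ?_⟩
  choose! k hk using hL
  refine ⟨(L.map k).sum + 1, fun a ha => ⟨k a, List.mem_range.2 ?_, hk a ha⟩⟩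
  exact Nat.lt_succ_of_le (List.le_sum_of_mem (List.mem_map_of_mem ha))

theorem RE.image {s : Set α} (hs : RE (· ∈ s)) {f : α → β} (hf : Computable f) :
    RE (· ∈ f '' s) := by
  have hgraph : ComputablePred fun p : β × α => f p.2 = p.1 :=
    computablePred_comp Primrec.eq.computablePred
      ((hf.comp Computable.snd).pair Computable.fst)
  exact RE.exists ((hs.comp Computable.snd).and hgraph.to_re)

end RecursiveEnumerability

section Words

variable {B : Type*}

/-- The words of length `n` over the alphabet listed by `letters`. -/
def wordsOver (letters : List B) : ℕ → List (List B)
  | 0 => [[]]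
  | n + 1 => (wordsOver letters n).flatMap fun w => letters.map (· :: w)

theorem mem_wordsOver {letters : List B} (hletters : ∀ b, b ∈ letters) {n : ℕ} {w : List B} :
    w ∈ wordsOver letters n ↔ w.length = n := by
  induction n generalizing w with
  | zero => simp [wordsOver]
  | succ n ih => cases w <;> simp [wordsOver, ih, hletters]

theorem primrec_wordsOver [Primcodable B] (letters : List B) : Primrec (wordsOver letters) := by
  refine (Primrec.nat_rec₁ [[]] (f := fun _ W => W.flatMap fun w => letters.map (· :: w)) ?_).of_eq
    fun n => ?_
  · exact Primrec.list_flatMap Primrec.snd (Primrec.list_map (Primrec.const _)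
      (Primrec.list_cons.comp Primrec.snd (Primrec.snd.comp Primrec.fst)))
  · induction n with
    | zero => rfl
    | succ n ih => simp only [wordsOver, ← ih]

theorem extendsWord_iff {x : ℕ → B} {w : List B} :
    ExtendsWord x w ↔ ∀ (n : ℕ) (hn : n < w.length), x n = w[n] :=
  Fin.forall_iff

theorem extendsWord_append_iff {x : ℕ → B} {v w : List B} :
    ExtendsWord x (v ++ w) ↔ ExtendsWord x v ∧ ExtendsWord (fun n => x (v.length + n)) w := by
  simp only [extendsWord_iff, List.length_append]
  constructor
  · refine fun h => ⟨fun n hn => ?_, fun n hn => ?_⟩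
    · simpa [hn] using h n (by omega)
    · simpa using h (v.length + n) (by omega)
  · rintro ⟨hv, hw⟩ n hn
    rcases lt_or_ge n v.length with hlt | hge
    · simpa [hlt] using hv n hlt
    · simpa [List.getElem_append_right hge, Nat.add_sub_cancel' hge] using
        hw (n - v.length) (by omega)

theorem extendsWord_ofFn_s6 (x : ℕ → B) (n : ℕ) : ExtendsWord x (List.ofFn fun i : Fin n => x i) := by
  simp [extendsWord_iff]

theorem exists_extendsWord [Nonempty B] (w : List B) : ∃ x : ℕ → B, ExtendsWord x w :=
  ⟨fun n => w.getD n (Classical.arbitrary B),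
    extendsWord_iff.2 fun _ hn => List.getD_eq_getElem _ _ hn⟩

theorem isClosed_setOf_extendsWord [TopologicalSpace B] [T1Space B] (w : List B) :
    IsClosed {x : ℕ → B | ExtendsWord x w} := by
  simp only [ExtendsWord, Set.ofPred_forall]
  exact isClosed_iInter fun i => isClosed_singleton.preimage (continuous_apply (i : ℕ))

end Words

section Patterns

variable {A : Type*} {m : ℕ}

/-- A coordinate of a sequence in `(A^m)^ℕ`: a position and the index of an entry of the letter
there. -/
abbrev Coord (m : ℕ) : Type := ℕ × Fin m

/-- A finite partial configuration in `(A^m)^ℕ`: a list of coordinates with prescribed values. -/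
abbrev Pattern (m : ℕ) (A : Type*) : Type _ := List (Coord m × A)

/-- The pattern `c` occurs in the sequence `y`, at its absolute position. -/
def OccursIn (c : Pattern m A) (y : ℕ → Fin m → A) : Prop :=
  ∀ p ∈ c, y p.1.1 p.1.2 = p.2

/-- The pattern `c` occurs in the finite word `w`, at its absolute position; in particular `c` only
involves positions of `w`. -/
def OccursInWord (c : Pattern m A) (w : List (Fin m → A)) : Prop :=
  ∀ p ∈ c, w[p.1.1]?.map (· p.1.2) = some p.2

/-- The closed set defined by the family `𝒞` of forbidden patterns. -/
def avoiding (𝒞 : Set (Pattern m A)) : Set (ℕ → Fin m → A) :=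
  {y | ∀ c ∈ 𝒞, ¬ OccursIn c y}

theorem avoiding_union (𝒞 𝒟 : Set (Pattern m A)) :
    avoiding (𝒞 ∪ 𝒟) = avoiding 𝒞 ∩ avoiding 𝒟 := by
  ext y
  simp only [avoiding, Set.mem_union, or_imp, forall_and, Set.mem_inter_iff, Set.mem_ofPred_eq]

variable {c : Pattern m A} {y : ℕ → Fin m → A} {w : List (Fin m → A)}

theorem occursIn_nil : OccursIn [] y :=
  List.forall_mem_nil _

theorem occursIn_cons {p : Coord m × A} :
    OccursIn (p :: c) y ↔ y p.1.1 p.1.2 = p.2 ∧ OccursIn c y :=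
  List.forall_mem_cons

theorem OccursInWord.occursIn (hc : OccursInWord c w) (hy : ExtendsWord y w) : OccursIn c y := by
  intro p hp
  obtain ⟨letter, hletter, hval⟩ := Option.map_eq_some_iff.1 (hc p hp)
  obtain ⟨hn, rfl⟩ := List.getElem?_eq_some_iff.1 hletter
  rw [extendsWord_iff.1 hy _ hn, hval]

theorem OccursIn.occursInWord (hc : OccursIn c y) (hy : ExtendsWord y w)
    (hlen : ∀ p ∈ c, p.1.1 < w.length) : OccursInWord c w := by
  intro p hp
  rw [List.getElem?_eq_getElem (hlen p hp), ← extendsWord_iff.1 hy _ (hlen p hp), Option.map_some,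
    hc p hp]

theorem primrecRel_occursInWord [Primcodable A] :
    PrimrecRel (OccursInWord : Pattern m A → List (Fin m → A) → Prop) := by
  have hentry : PrimrecRel fun (p : Coord m × A) (w : List (Fin m → A)) =>
      w[p.1.1]?.map (· p.1.2) = some p.2 := by
    refine Primrec.eq.comp ?_ (Primrec.option_some.comp (Primrec.snd.comp Primrec.fst))
    refine Primrec.option_map (Primrec.list_getElem?.comp Primrec.snd
      (Primrec.fst.comp (Primrec.fst.comp Primrec.fst))) ?_
    exact Primrec.fin_app.comp Primrec.snd
      (Primrec.snd.comp (Primrec.fst.comp (Primrec.fst.comp Primrec.fst)))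
  exact hentry.forall_mem_list

theorem isOpen_setOf_occursIn [TopologicalSpace A] [DiscreteTopology A] (c : Pattern m A) :
    IsOpen {y : ℕ → Fin m → A | OccursIn c y} := by
  simp only [OccursIn, Set.ofPred_forall]
  exact (List.finite_toSet c).isOpen_biInter fun p _ =>
    (isOpen_discrete {p.2}).preimage (f := fun y : ℕ → Fin m → A => y p.1.1 p.1.2)
      (continuous_apply_apply p.1.1 p.1.2)

theorem isClosed_avoiding [TopologicalSpace A] [DiscreteTopology A] (𝒞 : Set (Pattern m A)) :
    IsClosed (avoiding 𝒞) := by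
  simp only [avoiding, Set.ofPred_forall]
  exact isClosed_biInter fun c _ => (isOpen_setOf_occursIn c).isClosed_compl

theorem exists_position_bound (L : List (Pattern m A)) :
    ∃ N, ∀ c ∈ L, ∀ p ∈ c, p.1.1 < N := by
  obtain ⟨N, hN⟩ := ((List.finite_toSet L.flatten).image fun p => p.1.1).bddAbove
  refine ⟨N + 1, fun c hc p hp => Nat.lt_succ_of_le (hN ?_)⟩
  exact ⟨p, List.mem_flatten.2 ⟨c, hc, hp⟩, rfl⟩

theorem exists_list_of_cylinder_disjoint_avoiding [Finite A] {𝒞 : Set (Pattern m A)}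
    (hw : ∀ y, ExtendsWord y w → y ∉ avoiding 𝒞) :
    ∃ L : List (Pattern m A), (∀ c ∈ L, c ∈ 𝒞) ∧ ∀ y, ExtendsWord y w → ∃ c ∈ L, OccursIn c y := by
  let _ : TopologicalSpace A := ⊥
  have _ : DiscreteTopology A := ⟨rfl⟩
  obtain ⟨t, ht𝒞, htfin, hcover⟩ :=
    (isClosed_setOf_extendsWord w).isCompact.elim_finite_subcover_image
      (b := 𝒞) (c := fun c => {y | OccursIn c y}) (fun c _ => isOpen_setOf_occursIn c)
      fun y hy => by simpa [avoiding] using hw y hy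
  refine ⟨htfin.toFinset.toList, fun c hc => ht𝒞 (by simpa using hc), fun y hy => ?_⟩
  simpa using hcover hy

/-- By compactness, quantifying over all sequences extending `w` reduces to quantifying over the
finitely many words of a fixed length, which makes the condition recursively enumerable. -/
theorem cylinder_disjoint_avoiding_iff [Finite A] [Nonempty A] {𝒞 : Set (Pattern m A)} :
    (∀ y, ExtendsWord y w → y ∉ avoiding 𝒞) ↔
      ∃ (N : ℕ) (L : List (Pattern m A)), (∀ c ∈ L, c ∈ 𝒞) ∧
        ∀ v : List (Fin m → A), v.length = N → ∃ c ∈ L, OccursInWord c (w ++ v) := by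
  constructor
  · intro hw
    obtain ⟨L, hL, hcover⟩ := exists_list_of_cylinder_disjoint_avoiding hw
    obtain ⟨N, hN⟩ := exists_position_bound L
    refine ⟨N, L, hL, fun v hv => ?_⟩
    obtain ⟨y, hy⟩ := exists_extendsWord (w ++ v)
    obtain ⟨c, hc, hcy⟩ := hcover y (extendsWord_append_iff.1 hy).1
    refine ⟨c, hc, hcy.occursInWord hy fun p hp => ?_⟩
    exact (hN c hc p hp).trans_le (by simp [hv])
  · rintro ⟨N, L, hL, hcover⟩ y hyw hy
    obtain ⟨c, hc, hcw⟩ := hcover _ (List.length_ofFn (f := fun i : Fin N => y (w.length + i)))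
    have hext := extendsWord_append_iff.2 ⟨hyw, extendsWord_ofFn_s6 (fun n => y (w.length + n)) N⟩
    exact hy c (hL c hc) (hcw.occursIn hext)

theorem primrecPred_forall_wordsOver [Primcodable A] (letters : List (Fin m → A)) :
    PrimrecPred fun d : List (Fin m → A) × ℕ × List (Pattern m A) =>
      ∀ v ∈ wordsOver letters d.2.1, ∃ c ∈ d.2.2, OccursInWord c (d.1 ++ v) := by
  have hocc : PrimrecRel fun (c : Pattern m A) (d : List (Fin m → A) × List (Fin m → A)) =>
      OccursInWord c (d.1 ++ d.2) :=
    primrecRel_occursInWord.comp₂ Primrec₂.left (Primrec.list_append.comp₂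
      (Primrec.fst.comp₂ Primrec₂.right) (Primrec.snd.comp₂ Primrec₂.right))
  have hsome : PrimrecRel fun (v : List (Fin m → A)) (d : List (Fin m → A) × List (Pattern m A)) =>
      ∃ c ∈ d.2, OccursInWord c (d.1 ++ v) :=
    hocc.exists_mem_list.comp (Primrec.snd.comp Primrec.snd)
      ((Primrec.fst.comp Primrec.snd).pair Primrec.fst)
  exact hsome.forall_mem_list.comp
    ((primrec_wordsOver letters).comp (Primrec.fst.comp Primrec.snd))
    (Primrec.fst.pair (Primrec.snd.comp Primrec.snd))

theorem effectivelyClosedSet_avoiding [Finite A] [Nonempty A] [Primcodable A] [TopologicalSpace A]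
    [DiscreteTopology A] {𝒞 : Set (Pattern m A)} (h𝒞 : RE (· ∈ 𝒞)) :
    EffectivelyClosedSet (avoiding 𝒞) := by
  refine ⟨isClosed_avoiding 𝒞, ?_⟩
  obtain ⟨letters, -, hletters⟩ := Finite.exists_univ_list (Fin m → A)
  have hlist : RE fun d : List (Fin m → A) × ℕ × List (Pattern m A) => ∀ c ∈ d.2.2, c ∈ 𝒞 :=
    h𝒞.forall_mem_list.comp (Computable.snd.comp Computable.snd)
  refine (hlist.and (primrecPred_forall_wordsOver letters).computablePred.to_re).exists.of_iff
    fun w => ?_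
  simp only [Prod.exists, mem_wordsOver hletters, cylinder_disjoint_avoiding_iff]

end Patterns

section Numberings

variable {G : Type*}

/-- A computable numbering of a magma, in the sense of Mal'cev and Rabin: every element is named by
a natural number, equality of named elements is decidable, and names can be multiplied
computably. -/
structure IsComputableNumbering [Mul G] (ν : ℕ → G) : Prop where
  surjective : Function.Surjective ν
  computablePred_eq : ComputablePred fun p : ℕ × ℕ => ν p.1 = ν p.2
  exists_computable_mul :
    ∃ mul : ℕ → ℕ → ℕ, Computable₂ mul ∧ ∀ a b, ν (mul a b) = ν a * ν b

theorem exists_word_prod_eq [Monoid G] {ι : Type*} {s : ι → G}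
    (hs : Submonoid.closure (Set.range s) = ⊤) (g : G) : ∃ w : List ι, (w.map s).prod = g := by
  obtain ⟨l, hl, rfl⟩ := Submonoid.exists_list_of_mem_closure (hs ▸ Submonoid.mem_top g)
  obtain ⟨w, rfl⟩ : l ∈ Set.range (List.map s) := by rwa [Set.range_list_map]
  exact ⟨w, rfl⟩

variable [Group G] {m : ℕ} {s : Fin m → G}

theorem exists_primrec_inverse_word (hs : Submonoid.closure (Set.range s) = ⊤) :
    ∃ inv : List (Fin m) → List (Fin m), Primrec inv ∧
      ∀ w, ((inv w).map s).prod = (w.map s).prod⁻¹ := by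
  choose t ht using fun i => exists_word_prod_eq hs (s i)⁻¹
  refine ⟨fun w => w.reverse.flatMap t, ?_, fun w => ?_⟩
  · exact Primrec.list_flatMap Primrec.list_reverse
      ((Primrec.dom_finite t).comp₂ Primrec₂.right)
  · induction w with
    | nil => simp
    | cons i w ih => simp [List.flatMap_append, ih, ht]

theorem computablePred_word_prod_eq (hs : Submonoid.closure (Set.range s) = ⊤)
    (hwp : ComputablePred fun w : List (Fin m) => (w.map s).prod = 1) :
    ComputablePred fun p : List (Fin m) × List (Fin m) =>
      (p.1.map s).prod = (p.2.map s).prod := by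
  obtain ⟨inv, hinv, hinv_prod⟩ := exists_primrec_inverse_word hs
  have hquot : Primrec fun p : List (Fin m) × List (Fin m) => p.1 ++ inv p.2 :=
    Primrec.list_append.comp Primrec.fst (hinv.comp Primrec.snd)
  refine (computablePred_comp hwp hquot.to_comp).of_eq fun p => ?_
  rw [List.map_append, List.prod_append, hinv_prod, mul_inv_eq_one]

theorem DecidableWordProblem.exists_isComputableNumbering (hwp : DecidableWordProblem G) :
    ∃ ν : ℕ → G, IsComputableNumbering ν := by
  obtain ⟨m, s, hs, hdec⟩ := hwp
  let word : ℕ → List (Fin m) := fun n => (Encodable.decode n).getD []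
  have hword : Primrec word := Primrec.option_getD.comp Primrec.decode (Primrec.const [])
  have hword_encode : ∀ w, word (Encodable.encode w) = w := fun w => by
    simp only [word, Encodable.encodek, Option.getD_some]
  refine ⟨fun n => ((word n).map s).prod, fun g => ?_, ?_,
    fun a b => Encodable.encode (word a ++ word b), ?_, fun a b => ?_⟩
  · obtain ⟨w, hw⟩ := exists_word_prod_eq hs g
    exact ⟨Encodable.encode w, by rw [hword_encode, hw]⟩
  · exact computablePred_comp (computablePred_word_prod_eq hs hdec)
      ((hword.comp Primrec.fst).pair (hword.comp Primrec.snd)).to_comp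
  · exact (Primrec.encode.comp (Primrec.list_append.comp (hword.comp Primrec.fst)
      (hword.comp Primrec.snd))).to_comp
  · rw [hword_encode, List.map_append, List.prod_append]

end Numberings

/-- Colour by membership in a maximal set disjoint from its image under `f`: being disjoint from
its image, it contains no orbit segment `a`, `f a`, `f (f a)`, and by maximality it meets each. -/
theorem exists_colouring_of_injective {α : Type*} {f : α → α} (hf : Function.Injective f)
    (hfix : ∀ a, f a ≠ a) :
    ∃ c : α → Bool, ∀ a, ¬ (c a = c (f a) ∧ c (f a) = c (f (f a))) := by
  classical
  obtain ⟨I, hI⟩ := zorn_subset {I : Set α | ∀ a ∈ I, f a ∉ I} fun C hC hchain => by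
    refine ⟨⋃₀ C, ?_, fun J hJ => Set.subset_sUnion_of_mem hJ⟩
    rintro a ⟨J, hJ, haJ⟩ ⟨K, hK, haK⟩
    rcases hchain.total hJ hK with hle | hle
    · exact hC hK a (hle haJ) haK
    · exact hC hJ a haJ (hle haK)
  have hindep : ∀ a ∈ I, f a ∉ I := hI.prop
  have hmeets : ∀ a, a ∈ I ∨ f a ∈ I ∨ f (f a) ∈ I := by
    intro a
    by_contra! hmiss
    obtain ⟨ha, hfa, hffa⟩ := hmiss
    suffices hins : ∀ b ∈ insert (f a) I, f b ∉ insert (f a) I from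
      hfa (hI.le_of_ge hins (Set.subset_insert _ _) (Set.mem_insert _ _))
    rintro b (rfl | hb) (heq | hfb)
    · exact hfix _ heq
    · exact hffa hfb
    · exact ha (hf heq ▸ hb)
    · exact hindep b hb hfb
  refine ⟨fun a => decide (a ∈ I), fun a => ?_⟩
  simp only [decide_eq_decide]
  have := hindep a
  have := hmeets a
  tauto

section FreeColourings

variable {G : Type*} [Group G]

/-- The families of two-colourings of `G`, one for each `g : G`, such that for `g ≠ 1` the points
`h`, `g * h` and `g * (g * h)` never all receive the same colour. -/
def freeColourings (G : Type*) [Group G] : Set (G × G → Bool) :=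
  {c | ∀ g, g ≠ 1 → ∀ h, ¬ (c (g, h) = c (g, g * h) ∧ c (g, g * h) = c (g, g * (g * h)))}

/-- The action of `G` on families of colourings of `G` by right translation of each colouring. -/
def rightTranslate {A : Type*} (g : G) (c : G × G → A) : G × G → A := fun p => c (p.1, p.2 * g)

theorem freeColourings_nonempty : (freeColourings G).Nonempty := by
  have hcolour : ∀ g : G, ∃ c : G → Bool,
      g ≠ 1 → ∀ h, ¬ (c h = c (g * h) ∧ c (g * h) = c (g * (g * h))) := by
    intro g
    by_cases hg : g = 1
    · exact ⟨fun _ => true, fun hne => absurd hg hne⟩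
    · obtain ⟨c, hc⟩ := exists_colouring_of_injective (mul_right_injective g) fun h => by simpa
      exact ⟨c, fun _ => hc⟩
  choose c hc using hcolour
  exact ⟨fun p => c p.1 p.2, hc⟩

theorem isClosed_freeColourings : IsClosed (freeColourings G) := by
  have hclopen (p q : G × G) : IsClopen {c : G × G → Bool | c p = c q} := by
    have hpair : Continuous fun c : G × G → Bool => (c p, c q) :=
      (continuous_apply p).prodMk (continuous_apply q)
    exact (isClopen_discrete {b : Bool × Bool | b.1 = b.2}).preimage hpair
  simp only [freeColourings, Set.ofPred_forall]
  exact isClosed_iInter fun g => isClosed_iInter fun _ => isClosed_iInter fun h =>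
    ((hclopen _ _).inter (hclopen _ _)).compl.isClosed

theorem isActionOn_rightTranslate : IsActionOn rightTranslate (freeColourings G) := by
  refine ⟨fun g c hc u hu h => ?_, fun c _ => ?_, fun g h c _ => ?_⟩
  · simpa only [rightTranslate, mul_assoc] using hc u hu (h * g)
  · funext p
    simp only [rightTranslate, mul_one]
  · funext p
    simp only [rightTranslate, mul_assoc]

theorem eq_one_of_rightTranslate_eq {g : G} {c : G × G → Bool} (hc : c ∈ freeColourings G)
    (hfix : rightTranslate g c = c) : g = 1 := by
  by_contra hg
  have hconst (h : G) : c (g, h * g) = c (g, h) := congrFun hfix (g, h)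
  refine hc g hg 1 ⟨?_, ?_⟩
  · simpa only [mul_one, one_mul] using (hconst 1).symm
  · simpa only [mul_one] using (hconst g).symm

end FreeColourings

section Transport

variable {G β γ : Type*} [Nonempty β]

/-- The action `act` on `β` transported to `γ` along an embedding `κ`; only its values on the range
of `κ` are meaningful. -/
noncomputable def transportAct (κ : β → γ) (act : G → β → β) (g : G) (x : γ) : γ :=
  κ (act g (Function.invFun κ x))

variable {κ : β → γ} {act : G → β → β}

theorem transportAct_apply (hκ : Function.Injective κ) (g : G) (b : β) :
    transportAct κ act g (κ b) = κ (act g b) := by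
  rw [transportAct, Function.leftInverse_invFun hκ b]

theorem IsActionOn.image [Group G] {X : Set β} (hact : IsActionOn act X)
    (hκ : Function.Injective κ) : IsActionOn (transportAct κ act) (κ '' X) := by
  obtain ⟨hmaps, hone, hmul⟩ := hact
  refine ⟨?_, ?_, ?_⟩
  · rintro g _ ⟨b, hb, rfl⟩
    exact ⟨act g b, hmaps g hb, (transportAct_apply hκ g b).symm⟩
  · rintro _ ⟨b, hb, rfl⟩
    rw [transportAct_apply hκ, hone b hb]
  · rintro g h _ ⟨b, hb, rfl⟩
    simp only [transportAct_apply hκ, hmul g h b hb]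

end Transport

section Constraints

variable {A ι : Type*} {m : ℕ}

/-- The forbidden patterns expressing that the entry of a sequence at the coordinate `p` only
depends on `q p`. -/
def conflictPatterns (A : Type*) (q : Coord m → ι) : Set (Pattern m A) :=
  (fun d : (Coord m × Coord m) × A × A => [(d.1.1, d.2.1), (d.1.2, d.2.2)]) ''
    {d | q d.1.1 = q d.1.2 ∧ d.2.1 ≠ d.2.2}

/-- The forbidden patterns expressing that no triple of coordinates in `T` is monochromatic. -/
def monochromaticPatterns (A : Type*) (T : Set (Coord m × Coord m × Coord m)) :
    Set (Pattern m A) :=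
  (fun d : (Coord m × Coord m × Coord m) × A => [(d.1.1, d.2), (d.1.2.1, d.2), (d.1.2.2, d.2)]) ''
    {d | d.1 ∈ T}

variable {q : Coord m → ι} {T : Set (Coord m × Coord m × Coord m)} {y : ℕ → Fin m → A}

theorem mem_avoiding_conflictPatterns [Nonempty A] :
    y ∈ avoiding (conflictPatterns A q) ↔ ∃ c : ι → A, ∀ p : Coord m, y p.1 p.2 = c (q p) := by
  have hfactors : y ∈ avoiding (conflictPatterns A q) ↔
      Function.FactorsThrough (fun p : Coord m => y p.1 p.2) q := by
    simp only [avoiding, conflictPatterns, Set.mem_ofPred_eq, Set.forall_mem_image,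
      occursIn_cons, occursIn_nil, and_true, Function.FactorsThrough]
    constructor
    · intro h p₁ p₂ hq
      by_contra hne
      exact h (x := ((p₁, p₂), y p₁.1 p₁.2, y p₂.1 p₂.2)) ⟨hq, hne⟩ ⟨rfl, rfl⟩
    · rintro h ⟨⟨p₁, p₂⟩, a₁, a₂⟩ ⟨hq, hne⟩ ⟨h₁, h₂⟩
      exact hne (h₁.symm.trans ((h hq).trans h₂))
  rw [hfactors, Function.factorsThrough_iff]
  simp only [funext_iff, Function.comp_apply]

theorem mem_avoiding_monochromaticPatterns :
    y ∈ avoiding (monochromaticPatterns A T) ↔ ∀ p₁ p₂ p₃, (p₁, p₂, p₃) ∈ T →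
      ¬ (y p₁.1 p₁.2 = y p₂.1 p₂.2 ∧ y p₂.1 p₂.2 = y p₃.1 p₃.2) := by
  simp only [avoiding, monochromaticPatterns, Set.mem_ofPred_eq, Set.forall_mem_image,
    occursIn_cons, occursIn_nil, and_true]
  constructor
  · rintro h p₁ p₂ p₃ hT ⟨h₁₂, h₂₃⟩
    exact h (x := ((p₁, p₂, p₃), y p₂.1 p₂.2)) hT ⟨h₁₂, rfl, h₂₃.symm⟩
  · rintro h ⟨⟨p₁, p₂, p₃⟩, a⟩ hT ⟨h₁, h₂, h₃⟩
    exact h p₁ p₂ p₃ hT ⟨h₁.trans h₂.symm, h₂.trans h₃.symm⟩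

theorem re_conflictPatterns [Primcodable A]
    (hq : ComputablePred fun p : Coord m × Coord m => q p.1 = q p.2) :
    RE (· ∈ conflictPatterns A q) := by
  have hconflict : RE fun d : (Coord m × Coord m) × A × A =>
      q d.1.1 = q d.1.2 ∧ d.2.1 ≠ d.2.2 :=
    RE.and (RE.comp hq.to_re Computable.fst) (Primrec.eq.not.comp (Primrec.fst.comp Primrec.snd)
      (Primrec.snd.comp Primrec.snd)).computablePred.to_re
  refine RE.image hconflict (Primrec.to_comp ?_)
  exact Primrec.list_cons.comp
    ((Primrec.fst.comp Primrec.fst).pair (Primrec.fst.comp Primrec.snd))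
    (Primrec.list_cons.comp
      ((Primrec.snd.comp Primrec.fst).pair (Primrec.snd.comp Primrec.snd)) (Primrec.const []))

theorem re_monochromaticPatterns [Primcodable A] (hT : RE (· ∈ T)) :
    RE (· ∈ monochromaticPatterns A T) := by
  have hmono : RE fun d : (Coord m × Coord m × Coord m) × A => d.1 ∈ T :=
    hT.comp Computable.fst
  refine RE.image hmono (Primrec.to_comp ?_)
  exact Primrec.list_cons.comp ((Primrec.fst.comp Primrec.fst).pair Primrec.snd)
    (Primrec.list_cons.comp
      ((Primrec.fst.comp (Primrec.snd.comp Primrec.fst)).pair Primrec.snd)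
      (Primrec.list_cons.comp
        ((Primrec.snd.comp (Primrec.snd.comp Primrec.fst)).pair Primrec.snd) (Primrec.const [])))

end Constraints

section EffectiveAction

variable {G : Type*} {ν : ℕ → G}

/-- The family of colourings `c` read off as a sequence along the numbering `ν`. -/
def encodeColouring {A : Type*} (ν : ℕ → G) (c : G × G → A) : ℕ → A :=
  fun n => c (ν n.unpair.1, ν n.unpair.2)

theorem encodeColouring_injective {A : Type*} (hν : Function.Surjective ν) :
    Function.Injective (encodeColouring (A := A) ν) := by
  intro c d hcd
  funext ⟨g, h⟩
  obtain ⟨a, rfl⟩ := hν g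
  obtain ⟨b, rfl⟩ := hν h
  simpa only [encodeColouring, Nat.unpair_pair] using congrFun hcd (Nat.pair a b)

variable [Group G] {m : ℕ} {s : Fin m → G}

theorem isClosed_encodeColouring_image (ν : ℕ → G) :
    IsClosed (encodeColouring ν '' freeColourings G) := by
  have hcont : Continuous (encodeColouring (A := Bool) ν) :=
    continuous_pi fun n => continuous_apply (ν n.unpair.1, ν n.unpair.2)
  exact (isClosed_freeColourings.isCompact.image hcont).isClosed

/-- The point of `G × G` whose colour is recorded, in the set representation of right translation
with respect to `s`, at the given coordinate. -/
def colouredPoint (ν : ℕ → G) (s : Fin m → G) (p : Coord m) : G × G :=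
  (ν p.1.unpair.1, ν p.1.unpair.2 * s p.2)

/-- The coordinates of the triples `(g, h)`, `(g, g * h)`, `(g, g * (g * h))` with `g ≠ 1`, where
`mul` computes products of names for `ν` and `i` is the index of the generator `1`. -/
def progressions (ν : ℕ → G) (mul : ℕ → ℕ → ℕ) (i : Fin m) : Set (Coord m × Coord m × Coord m) :=
  (fun d : ℕ × ℕ => ((Nat.pair d.1 d.2, i), (Nat.pair d.1 (mul d.1 d.2), i),
    (Nat.pair d.1 (mul d.1 (mul d.1 d.2)), i))) '' {d | ν d.1 ≠ 1}

theorem mem_setRep_encodeColouring_iff (hν : Function.Surjective ν) {C : Set (G × G → Bool)}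
    {y : ℕ → Fin m → Bool} :
    y ∈ SetRep s (transportAct (encodeColouring ν) rightTranslate) (encodeColouring ν '' C) ↔
      ∃ c ∈ C, ∀ p : Coord m, y p.1 p.2 = c (colouredPoint ν s p) := by
  simp only [SetRep, Set.mem_ofPred_eq, Set.exists_mem_image,
    transportAct_apply (encodeColouring_injective hν), funext_iff, Prod.forall]
  exact exists_congr fun c => and_congr_right fun _ => forall_comm

theorem mem_freeColourings_iff (hν : Function.Surjective ν) {mul : ℕ → ℕ → ℕ}
    (hmul : ∀ a b, ν (mul a b) = ν a * ν b) {i : Fin m} (hi : s i = 1) {c : G × G → Bool} :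
    c ∈ freeColourings G ↔ ∀ p₁ p₂ p₃, (p₁, p₂, p₃) ∈ progressions ν mul i →
      ¬ (c (colouredPoint ν s p₁) = c (colouredPoint ν s p₂) ∧
        c (colouredPoint ν s p₂) = c (colouredPoint ν s p₃)) := by
  simp only [freeColourings, progressions, colouredPoint, Set.mem_ofPred_eq, hν.forall,
    Set.mem_image, Prod.exists]
  constructor
  · rintro hc _ _ _ ⟨a, b, ha, heq⟩
    obtain ⟨rfl, rfl, rfl⟩ := by simpa only [Prod.mk.injEq] using heq
    simpa only [Nat.unpair_pair, hi, mul_one, hmul] using hc a ha b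
  · intro hc a ha b
    simpa only [Nat.unpair_pair, hi, mul_one, hmul] using hc _ _ _ ⟨a, b, ha, rfl⟩

theorem setRep_freeColourings (hν : Function.Surjective ν) {mul : ℕ → ℕ → ℕ}
    (hmul : ∀ a b, ν (mul a b) = ν a * ν b) {i : Fin m} (hi : s i = 1) :
    SetRep s (transportAct (encodeColouring ν) rightTranslate)
        (encodeColouring ν '' freeColourings G) =
      avoiding (conflictPatterns Bool (colouredPoint ν s) ∪
        monochromaticPatterns Bool (progressions ν mul i)) := by
  ext y
  rw [mem_setRep_encodeColouring_iff hν, avoiding_union, Set.mem_inter_iff,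
    mem_avoiding_conflictPatterns, mem_avoiding_monochromaticPatterns, ← exists_and_right]
  refine exists_congr fun c => and_comm.trans (and_congr_right fun hy => ?_)
  simp only [mem_freeColourings_iff hν hmul hi, hy]

theorem IsComputableNumbering.computablePred_colouredPoint_eq (hν : IsComputableNumbering ν)
    (s : Fin m → G) :
    ComputablePred fun p : Coord m × Coord m => colouredPoint ν s p.1 = colouredPoint ν s p.2 := by
  obtain ⟨mul, hmul_comp, hmul⟩ := hν.exists_computable_mul
  choose name hname using fun i => hν.surjective (s i)
  have hunpair : Computable fun p : Coord m => p.1.unpair :=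
    Computable.unpair.comp Computable.fst
  have hfirst : Computable fun p : Coord m => p.1.unpair.1 := Computable.fst.comp hunpair
  have hsecond : Computable fun p : Coord m => mul p.1.unpair.2 (name p.2) :=
    hmul_comp.comp (Computable.snd.comp hunpair)
      ((Primrec.dom_finite name).to_comp.comp Computable.snd)
  refine (computablePred_and
    (computablePred_comp hν.computablePred_eq
      ((hfirst.comp Computable.fst).pair (hfirst.comp Computable.snd)))
    (computablePred_comp hν.computablePred_eq
      ((hsecond.comp Computable.fst).pair (hsecond.comp Computable.snd)))).of_eq fun p => ?_
  simp only [colouredPoint, Prod.mk.injEq, hmul, hname]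

theorem IsComputableNumbering.re_progressions (hν : IsComputableNumbering ν) {mul : ℕ → ℕ → ℕ}
    (hmul : Computable₂ mul) (i : Fin m) : RE (· ∈ progressions ν mul i) := by
  obtain ⟨e, he⟩ := hν.surjective 1
  have hne : RE fun d : ℕ × ℕ => ν d.1 ≠ 1 := by
    rw [← he]
    exact (computablePred_comp hν.computablePred_eq
      (Computable.fst.pair (Computable.const e))).not.to_re
  have hmul_fst {f : ℕ × ℕ → ℕ} (hf : Computable f) : Computable fun d => mul d.1 (f d) :=
    hmul.comp Computable.fst hf
  have hcoord {f : ℕ × ℕ → ℕ} (hf : Computable f) :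
      Computable fun d => ((Nat.pair d.1 (f d), i) : Coord m) :=
    (Primrec₂.natPair.to_comp.comp Computable.fst hf).pair (Computable.const i)
  exact RE.image hne <| (hcoord Computable.snd).pair <|
    (hcoord (hmul_fst Computable.snd)).pair (hcoord (hmul_fst (hmul_fst Computable.snd)))

theorem exists_finite_generators_with_one (hfg : Group.FG G) :
    ∃ (m : ℕ) (s : Fin m → G), (∃ i, s i = 1) ∧ Submonoid.closure (Set.range s) = ⊤ := by
  obtain ⟨S, hS⟩ := Monoid.fg_def.1 (Group.fg_iff_monoid_fg.1 hfg)
  refine ⟨S.card + 1, Fin.cons 1 fun i => S.equivFin.symm i, ⟨0, rfl⟩, ?_⟩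
  have hrange : Set.range (fun i => (S.equivFin.symm i : G)) = S :=
    (S.equivFin.symm.surjective.range_comp Subtype.val).trans Subtype.range_coe
  rw [Fin.range_cons, hrange, Submonoid.closure_insert_one, hS]

theorem IsComputableNumbering.isEffClosedAction (hν : IsComputableNumbering ν)
    (hfg : Group.FG G) :
    IsEffClosedAction (transportAct (encodeColouring ν) rightTranslate)
      (encodeColouring ν '' freeColourings G) := by
  obtain ⟨m, s, ⟨i, hi⟩, hs⟩ := exists_finite_generators_with_one hfg
  obtain ⟨mul, hmul_comp, hmul⟩ := hν.exists_computable_mul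
  refine ⟨m, s, isClosed_encodeColouring_image ν,
    isActionOn_rightTranslate.image (encodeColouring_injective hν.surjective), ⟨i, hi⟩, hs, ?_⟩
  rw [setRep_freeColourings hν.surjective hmul hi]
  exact effectivelyClosedSet_avoiding <|
    (re_conflictPatterns (hν.computablePred_colouredPoint_eq s)).or
      (re_monochromaticPatterns (hν.re_progressions hmul_comp i))

end EffectiveAction

theorem SelfSimulable.exists_free_SFT {G : Type*} [Group G] (hss : SelfSimulable G)
    {X : Set (ℕ → Bool)} {act : G → (ℕ → Bool) → ℕ → Bool} (hact : IsEffClosedAction act X)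
    (hne : X.Nonempty) (hfree : ∀ g, ∀ x ∈ X, act g x = x → g = 1) :
    ∃ (k : ℕ) (Z : Set (G → Fin k)), IsSFT Z ∧ Z.Nonempty ∧
      ∀ (g : G) (z : G → Fin k), z ∈ Z → shift g z = z → g = 1 := by
  obtain ⟨k, Z, φ, hZ, -, hmaps, hsurj, hequiv⟩ := hss X act hact
  obtain ⟨x, hx⟩ := hne
  obtain ⟨z, hz, -⟩ := hsurj hx
  refine ⟨k, Z, hZ, ⟨z, hz⟩, fun g z hz hfix => hfree g (φ z) (hmaps hz) ?_⟩
  rw [← hequiv g z hz, hfix]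

/-- Every finitely generated self-simulable group with decidable word problem
admits a nonempty strongly aperiodic subshift of finite type. -/
theorem exists_strongly_aperiodic_SFT
    (G : Type*) [Group G] (hfg : Group.FG G)
    (hwp : DecidableWordProblem G) (hss : SelfSimulable G) :
    ∃ (k : ℕ) (X : Set (G → Fin k)),
      IsSFT X ∧ X.Nonempty ∧
        ∀ (g : G) (x : G → Fin k), x ∈ X → shift g x = x → g = 1 := by
  obtain ⟨ν, hν⟩ := hwp.exists_isComputableNumbering
  have hinj : Function.Injective (encodeColouring (A := Bool) ν) :=
    encodeColouring_injective hν.surjective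
  refine hss.exists_free_SFT (hν.isEffClosedAction hfg) (freeColourings_nonempty.image _) ?_
  rintro g _ ⟨c, hc, rfl⟩ hfix
  rw [transportAct_apply hinj] at hfix
  exact eq_one_of_rightTranslate_eq hc (hinj hfix)

end SelfSim
end
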